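/- arXiv:2208.02109 — 3 statements merged into one kernel-verified Lean document; each statement's English description precedes it below -/
import Mathlib

section
/- Let n ≥ 6 be an even integer with n ≡ 0 or 6 (mod 8). Then the number of 𝔊_n-orbits O ⊆ T^n satisfying ι(O) = O is exactly 2^{n/2 + 1}. -/
/-- `M ∈ T^n`: all entries strictly below the diagonal vanish. -/
def UpperTri (n : ℕ) (M : Matrix (Fin n) (Fin n) (ZMod 2)) : Prop :=
  ∀ i j : Fin n, (j : ℕ) < (i : ℕ) → M i j = 0

/-- The involution `ι : T^n → T^n`, `ι(M)_{ij} = M_{(n+1−j)(n+1−i)} + 1` for `i ≤ j`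
(one-based indexing; entries below the diagonal remain `0`). -/
def iotaT (n : ℕ) (M : Matrix (Fin n) (Fin n) (ZMod 2)) : Matrix (Fin n) (Fin n) (ZMod 2) :=
  Matrix.of fun i j => if (i : ℕ) ≤ (j : ℕ) then M (Fin.rev j) (Fin.rev i) + 1 else 0

/-- The height pairing `⟨M, R_k⟩ = ∑_{1 ≤ r ≤ k ≤ s ≤ n} M_{rs}`. -/
def heightPair (n : ℕ) (M : Matrix (Fin n) (Fin n) (ZMod 2)) (k : Fin n) : ZMod 2 :=
  ∑ r : Fin n, ∑ s : Fin n, if r ≤ k ∧ k ≤ s then M r s else 0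

/-- Safe entry lookup (zero outside range), with zero-based natural-number indices. -/
def ent (n : ℕ) (M : Matrix (Fin n) (Fin n) (ZMod 2)) (r s : ℕ) : ZMod 2 :=
  if h : r < n ∧ s < n then M ⟨r, h.1⟩ ⟨s, h.2⟩ else 0

/-- The generator `g_{ij}` of `𝔊_n` (here `i ≤ j` are zero-based, corresponding to the
one-based indices `i+1 ≤ j+1`): it adds the trace `M_{ij} + M_{i+1,j+1}` of the `2×2`
submatrix with rows `i, i+1` and columns `j, j+1` to each entry of that submatrix lying
in the upper triangle. -/
def gmove (n i j : ℕ) (M : Matrix (Fin n) (Fin n) (ZMod 2)) :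
    Matrix (Fin n) (Fin n) (ZMod 2) :=
  Matrix.of fun r s =>
    if ((r : ℕ) = i ∨ (r : ℕ) = i + 1) ∧ ((s : ℕ) = j ∨ (s : ℕ) = j + 1)
        ∧ (r : ℕ) ≤ (s : ℕ)
    then M r s + (ent n M i j + ent n M (i + 1) (j + 1))
    else M r s

/-- One application of a generator `g_{ij}`, `1 ≤ i ≤ j ≤ n−1` (one-based);
in zero-based indices `i ≤ j` and `j + 2 ≤ n`. -/
def Gstep (n : ℕ) (M M' : Matrix (Fin n) (Fin n) (ZMod 2)) : Prop :=
  ∃ i j : ℕ, i ≤ j ∧ j + 2 ≤ n ∧ M' = gmove n i j M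

/-- `N` belongs to the `𝔊_n`-orbit of `M`: the reflexive-transitive closure of the
generating moves (each generator is an involution, so this is the orbit equivalence). -/
def InOrbit (n : ℕ) (M N : Matrix (Fin n) (Fin n) (ZMod 2)) : Prop :=
  Relation.ReflTransGen (Gstep n) M N

abbrev U6 := Fin 6 → ZMod 2

def QU (c : U6) : ZMod 2 :=
  c 0 + c 1 + c 2 + c 3 + c 4 + c 5 + (c 0 * c 1 + c 0 * c 2 + c 1 * c 2 + c 1 * c 3 + c 2 * c 3
    + c 2 * c 4 + c 3 * c 4 + c 3 * c 5 + c 4 * c 5)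

/-- neighbour sum -/
def nbU (c : U6) : U6 :=
  ![c 1 + c 2, c 0 + c 2 + c 3, c 0 + c 1 + c 3 + c 4, c 1 + c 2 + c 4 + c 5, c 2 + c 3 + c 5,
    c 3 + c 4]

def BU (c d : U6) : ZMod 2 :=
  c 0 * nbU d 0 + c 1 * nbU d 1 + c 2 * nbU d 2 + c 3 * nbU d 3 + c 4 * nbU d 4 + c 5 * nbU d 5

theorem forall_U6 {P : U6 → Prop} (h : ∀ a b c d e f : ZMod 2, P ![a, b, c, d, e, f]) (c : U6) :
    P c := by
  have := h (c 0) (c 1) (c 2) (c 3) (c 4) (c 5)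
  convert this using 1
  ext i; fin_cases i <;> rfl

theorem exists_U6 {P : U6 → Prop} (h : ∃ a b c d e f : ZMod 2, P ![a, b, c, d, e, f]) :
    ∃ c, P c := by
  obtain ⟨a, b, c, d, e, f, h⟩ := h
  exact ⟨_, h⟩

def reachU : ℕ → U6 → Bool
  | 0, c => decide (∃ i : Fin 6, c = Pi.single i 1)
  | k + 1, c => reachU k c || decide (∃ i : Fin 6, nbU c i = 1 ∧ reachU k (c + Pi.single i 1) = true)

set_option maxRecDepth 100000 in
theorem U_a (u : U6) : u ≠ 0 → ∀ γ β : ZMod 2, ∃ p : U6, p ≠ 0 ∧ p ≠ u ∧ BU p u = γ ∧ QU p = β := by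
  revert u
  apply forall_U6
  intro a b c d e f h γ β
  apply exists_U6
  revert a b c d e f γ β
  decide

def canU (β : ZMod 2) : U6 := if β = 1 then ![1,0,0,0,0,0] else ![1,0,0,1,0,0]

set_option maxRecDepth 100000 in
theorem U_b (u : U6) : u ≠ 0 →  ∃ p : U6, QU p = QU u ∧ BU p u = 1 ∧ BU p (canU (QU u)) = 1 := by
  revert u
  apply forall_U6
  intro a b c d e f h
  apply exists_U6
  revert a b c d e f
  decide

set_option maxRecDepth 100000 in
theorem U_c (u : U6) : QU u = 1 → reachU 5 u = true := by
  revert u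
  apply forall_U6
  decide


section Abstract

variable {V I : Type*} [AddCommGroup V] [Module (ZMod 2) V]

/-- the data of a quadratic space with generating vectors of norm one containing the strip. -/
structure TData (V I : Type*) [AddCommGroup V] [Module (ZMod 2) V] where
  Q : V → ZMod 2
  B : V →ₗ[ZMod 2] V →ₗ[ZMod 2] ZMod 2
  hQ : ∀ x y, Q (x + y) = Q x + Q y + B x y
  b : I → V
  hb : ∀ i, Q (b i) = 1
  f : Fin 6 → I
  gram : ∀ i j, B (b (f i)) (b (f j)) = nbU (Pi.single j 1) i
  conn : ∀ i, Relation.ReflTransGen (fun i j => B (b i) (b j) = 1) (f 0) i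

namespace TData

theorem z2 (a : ZMod 2) : a = 0 ∨ a = 1 := by revert a; decide

theorem z2add (a : ZMod 2) : a + a = 0 := by revert a; decide

theorem vadd (x : V) : x + x = 0 := by
  have : (2 : ZMod 2) • x = x + x := two_smul _ x
  rw [← this, show (2 : ZMod 2) = 0 from rfl, zero_smul]

variable (D : TData V I)

theorem Q_zero : D.Q 0 = 0 := by
  have := D.hQ 0 0
  simp only [add_zero, map_zero, z2add] at this
  exact this

theorem B_self (x : V) : D.B x x = 0 := by
  have := D.hQ x x
  rw [vadd, D.Q_zero, z2add, zero_add] at this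
  exact this.symm

theorem B_symm (x y : V) : D.B x y = D.B y x := by
  have h1 := D.hQ x y
  have h2 := D.hQ y x
  rw [add_comm y x, h1, add_comm (D.Q y)] at h2
  exact add_left_cancel h2

/-- one step -/
def Step (x y : V) : Prop := ∃ i, y = x + D.B x (D.b i) • D.b i

def R : V → V → Prop := Relation.ReflTransGen D.Step

def InG (v : V) : Prop := ∀ x, D.R x (x + D.B x v • v)

theorem InG_b (i : I) : D.InG (D.b i) := fun _ => Relation.ReflTransGen.single ⟨i, rfl⟩

theorem InG_add {v w : V} (hv : D.InG v) (hw : D.InG w) (h : D.B v w = 1) : D.InG (v + w) := by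
  intro x
  have h1 := hw x
  have h2 := hv (x + D.B x w • w)
  have h3 := hw (x + D.B x w • w + D.B (x + D.B x w • w) v • v)
  have h4 : D.R _ _ := (h1.trans h2).trans h3
  have hwv : D.B w v = 1 := by rw [D.B_symm]; exact h
  convert h4 using 1
  simp only [map_add, map_smul, LinearMap.add_apply, LinearMap.smul_apply, h, hwv, D.B_self,
    smul_eq_mul, mul_one, mul_zero, add_zero]
  rcases z2 (D.B x v) with h5 | h5 <;> rcases z2 (D.B x w) with h6 | h6 <;>
    simp [h5, h6, vadd, add_assoc, add_comm v w]

/-- embedding of the six dimensional space -/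
def phi : U6 →ₗ[ZMod 2] V where
  toFun c := c 0 • D.b (D.f 0) + c 1 • D.b (D.f 1) + c 2 • D.b (D.f 2) + c 3 • D.b (D.f 3)
    + c 4 • D.b (D.f 4) + c 5 • D.b (D.f 5)
  map_add' c d := by simp only [Pi.add_apply, add_smul]; abel
  map_smul' c d := by simp only [Pi.smul_apply, smul_add, smul_smul, smul_eq_mul, RingHom.id_apply]

def lam (x : V) : U6 := fun i => D.B x (D.b (D.f i))

def invU (l : U6) : U6 :=
  ![l 2 + l 3 + l 4, l 3 + l 4 + l 5, l 0 + l 3 + l 4 + l 5, l 0 + l 1 + l 2 + l 5,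
    l 0 + l 1 + l 2, l 1 + l 2 + l 3]

theorem invU_nbU (c : U6) : invU (nbU c) = c := by
  revert c; apply forall_U6; decide

theorem nbU_invU (c : U6) : nbU (invU c) = c := by
  revert c; apply forall_U6; decide

theorem BU_symm (c d : U6) : BU c d = BU d c := by
  simp [BU, nbU]; ring

def pr (x : V) : U6 := invU (D.lam x)

theorem lam_phi (c : U6) : D.lam (D.phi c) = nbU c := by
  ext i
  simp only [lam, phi, LinearMap.coe_mk, AddHom.coe_mk, map_add, map_smul, LinearMap.add_apply,
    LinearMap.smul_apply, D.gram]
  fin_cases i <;> simp [nbU] 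

theorem lam_add (x y : V) : D.lam (x + y) = D.lam x + D.lam y := by
  ext i; simp [lam]

theorem invU_add (x y : U6) : invU (x + y) = invU x + invU y := by
  ext i; fin_cases i <;> simp [invU] <;> ring

theorem pr_add (x y : V) : D.pr (x + y) = D.pr x + D.pr y := by
  simp [pr, lam_add, invU_add]

theorem pr_phi (c : U6) : D.pr (D.phi c) = c := by
  rw [pr, lam_phi, invU_nbU]

theorem B_phi (x : V) (c : U6) : D.B x (D.phi c) = BU (D.pr x) c := by
  rw [BU_symm, BU, pr, nbU_invU]
  simp [phi, lam]

theorem Q_smul (a : ZMod 2) (x : V) : D.Q (a • x) = a * D.Q x := by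
  rcases z2 a with h | h <;> simp [h, D.Q_zero]

theorem Q_phi (c : U6) : D.Q (D.phi c) = QU c := by
  simp only [phi, LinearMap.coe_mk, AddHom.coe_mk, D.hQ, D.Q_smul, D.hb, map_add, map_smul,
    LinearMap.add_apply, LinearMap.smul_apply, D.gram]
  simp [nbU, QU]
  ring

theorem B_phi_perp {w : V} (hw : D.pr w = 0) (c : U6) : D.B w (D.phi c) = 0 := by
  rw [B_phi, hw]; simp [BU]

theorem Q_dec {w : V} (hw : D.pr w = 0) (c : U6) : D.Q (D.phi c + w) = QU c + D.Q w := by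
  rw [D.hQ, Q_phi, D.B_symm, D.B_phi_perp hw, add_zero]

theorem pr_dec {w : V} (hw : D.pr w = 0) (c : U6) : D.pr (D.phi c + w) = c := by
  rw [pr_add, hw, pr_phi, add_zero]

theorem InG_reach (k : ℕ) : ∀ c, reachU k c = true → D.InG (D.phi c) := by
  have hs : ∀ i : Fin 6, D.phi (Pi.single i 1) = D.b (D.f i) := by
    intro i
    fin_cases i <;> simp [phi]
  induction k with
  | zero =>
    intro c hc
    simp only [reachU, decide_eq_true_eq] at hc
    obtain ⟨i, rfl⟩ := hc
    rw [hs]; exact D.InG_b _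
  | succ k ih =>
    intro c hc
    simp only [reachU, decide_eq_true_eq, Bool.or_eq_true] at hc
    rcases hc with hc | ⟨i, hi, hc⟩
    · exact ih c hc
    · have h1 := ih _ hc
      rw [map_add, hs] at h1
      have h2 := D.InG_add h1 (D.InG_b (D.f i)) (by
        rw [map_add, LinearMap.add_apply, D.B_self, add_zero, ← hi, ← D.lam_phi]; rfl)
      rwa [add_assoc, vadd, add_zero] at h2

theorem InG_phi (c : U6) (hc : QU c = 1) : D.InG (D.phi c) := D.InG_reach 5 c (U_c c hc)

theorem QU_add (c d : U6) : QU (c + d) = QU c + QU d + BU c d := by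
  simp [QU, BU, nbU]; ring

theorem BU_self (c : U6) : BU c c = 0 := by
  have := QU_add c c
  rw [vadd, z2add] at this
  simpa [QU] using this.symm

theorem BU_add (c d e : U6) : BU c (d + e) = BU c d + BU c e := by
  simp [BU, nbU]; ring

theorem canU_Q (β : ZMod 2) : QU (canU β) = β := by revert β; decide

theorem canU_ne (β : ZMod 2) : canU β ≠ 0 := by revert β; decide

/-- An induction principle: invariance under elementary moves gives transitivity. -/
theorem U_trans {P : U6 → Prop} (h : ∀ p p', QU p = QU p' → BU p p' = 1 → P p → P p')
    (p p' : U6) (hp : p ≠ 0) (hp' : p' ≠ 0) (hq : QU p = QU p') (H : P p) : P p' := by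
  obtain ⟨r, hr1, hr2, hr3⟩ := U_b p hp
  obtain ⟨s, hs1, hs2, hs3⟩ := U_b p' hp'
  have h1 := h p r hr1.symm (by rw [BU_symm]; exact hr2) H
  have h2 := h r (canU (QU p)) (by rw [canU_Q, hr1]) hr3 h1
  rw [hq] at h2
  have h3 := h _ s (by rw [canU_Q, hs1]) (by rw [BU_symm]; exact hs3) h2
  exact h s p' hs1 hs2 h3

theorem InG_move {r : V} (hr : D.pr r = 0) (p p' : U6) (hp : p ≠ 0) (hp' : p' ≠ 0)
    (hq : QU p = QU p') (H : D.InG (D.phi p + r)) : D.InG (D.phi p' + r) := by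
  refine U_trans (P := fun p => D.InG (D.phi p + r)) ?_ p p' hp hp' hq H
  intro p p' hq hB H
  have h1 := D.InG_phi (p + p') (by rw [QU_add, hq, z2add, hB, zero_add])
  have h2 := D.InG_add H h1 (by
    rw [B_phi, pr_dec _ hr, BU_add, BU_self, hB, zero_add])
  convert h2 using 1
  rw [map_add]
  have : D.phi p' + r = (D.phi p + D.phi p) + D.phi p' + r := by rw [vadd, zero_add]
  rw [this]; abel

theorem R_move {r : V} (hr : D.pr r = 0) (p p' : U6) (hp : p ≠ 0) (hp' : p' ≠ 0)
    (hq : QU p = QU p') : D.R (D.phi p + r) (D.phi p' + r) := by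
  refine U_trans (P := fun p' => D.R (D.phi p + r) (D.phi p' + r)) ?_ p p' hp hp' hq
    Relation.ReflTransGen.refl
  intro s p' hq hB H
  have h1 := D.InG_phi (s + p') (by rw [QU_add, hq, z2add, hB, zero_add]) (D.phi s + r)
  refine Relation.ReflTransGen.trans H ?_
  change D.R _ _
  convert h1 using 1
  rw [B_phi, pr_dec _ hr, BU_add, BU_self, hB, zero_add, one_smul, map_add]
  have : D.phi p' + r = (D.phi s + D.phi s) + D.phi p' + r := by rw [vadd, zero_add]
  rw [this]; abel

/-- The component orthogonal to the six dimensional space. -/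
def perp (x : V) : V := x + D.phi (D.pr x)

theorem pr_perp (x : V) : D.pr (D.perp x) = 0 := by
  rw [perp, pr_add, pr_phi, vadd]

theorem perp_add (x y : V) : D.perp (x + y) = D.perp x + D.perp y := by
  simp only [perp, pr_add, map_add]; abel

theorem dec (x : V) : D.phi (D.pr x) + D.perp x = x := by
  rw [perp, add_left_comm, vadd, add_zero]

def Good (r : V) : Prop := D.pr r = 0 ∧ ∀ p, p ≠ 0 → QU p + D.Q r = 1 → D.InG (D.phi p + r)

theorem exists_ne (β : ZMod 2) : ∃ p : U6, p ≠ 0 ∧ QU p = β := ⟨canU β, canU_ne β, canU_Q β⟩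

theorem Good_of {r : V} (hr : D.pr r = 0) {p : U6} (hp : p ≠ 0) (hq : QU p + D.Q r = 1)
    (H : D.InG (D.phi p + r)) : D.Good r := by
  refine ⟨hr, fun p' hp' hq' => D.InG_move hr p p' hp hp' ?_ H⟩
  rw [← hq'] at hq
  exact add_right_cancel hq

theorem Good_zero : D.Good 0 := by
  refine ⟨by simpa using D.pr_phi 0, fun p _ hq => ?_⟩
  rw [Q_zero, add_zero] at hq
  rw [add_zero]; exact D.InG_phi p hq

theorem Good_add {r s : V} (hr : D.Good r) (hs : D.Good s) : D.Good (r + s) := by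
  obtain ⟨p, hp, hpq⟩ := exists_ne (1 + D.Q r)
  obtain ⟨q, hq, hqp, hqB, hqq⟩ := U_a p hp (1 + D.B r s) (1 + D.Q s)
  have e : ∀ a : ZMod 2, 1 + a + a = 1 := by decide
  have h1 := hr.2 p hp (by rw [hpq, e])
  have h2 := hs.2 q hq (by rw [hqq, e])
  have hB : D.B (D.phi p + r) (D.phi q + s) = 1 := by
    rw [map_add, B_phi, pr_dec _ hr.1, map_add, LinearMap.add_apply, D.B_symm _ s,
      D.B_phi_perp hs.1, zero_add, BU_symm, hqB, e]
  have h3 := D.InG_add h1 h2 hB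
  have h4 : D.phi p + r + (D.phi q + s) = D.phi (p + q) + (r + s) := by rw [map_add]; abel
  rw [h4] at h3
  refine D.Good_of (by rw [pr_add, hr.1, hs.1, add_zero]) (p := p + q) ?_ ?_ h3
  · intro h
    apply hqp
    have : q = p + p + q := by rw [vadd, zero_add]
    rw [this, add_assoc, h, add_zero]
  · rw [QU_add, D.hQ, hpq, hqq, BU_symm, hqB]
    generalize D.Q r = a
    generalize D.Q s = b
    generalize D.B r s = c
    revert a b c; decide

theorem pr_eq_zero_of_lam {x : V} (h : ∀ i, D.B x (D.b (D.f i)) = 0) : D.pr x = 0 := by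
  have : D.lam x = 0 := by ext i; exact h i
  rw [pr, this]; decide

theorem Good_b (i : I) : D.Good (D.perp (D.b i)) := by
  have key : ∀ i, D.pr (D.b i) ≠ 0 → D.Good (D.perp (D.b i)) := by
    intro i h
    refine D.Good_of (D.pr_perp _) h ?_ ?_
    · rw [← D.Q_dec (D.pr_perp _), dec, D.hb]
    · rw [dec]; exact D.InG_b i
  induction D.conn i with
  | refl =>
    apply key
    have : D.b (D.f 0) = D.phi (Pi.single 0 1) := by simp [phi]
    rw [this, pr_phi]; decide
  | @tail i j _ hij ih =>
    by_cases h : D.pr (D.b j) = 0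
    · have hj : D.perp (D.b j) = D.b j := by rw [perp, h, map_zero, add_zero]
      obtain ⟨p, hp, hpq⟩ := exists_ne (1 + D.Q (D.perp (D.b i)))
      have e : ∀ a : ZMod 2, 1 + a + a = 1 := by decide
      have h1 := ih.2 p hp (by rw [hpq, e])
      have hB : D.B (D.perp (D.b i)) (D.b j) = 1 := by
        rw [perp, map_add, LinearMap.add_apply, hij, D.B_symm, D.B_phi_perp h, add_zero]
      have h2 := D.InG_add h1 (D.InG_b j) (by
        rw [map_add, LinearMap.add_apply, D.B_symm, D.B_phi_perp h, zero_add, hB])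
      rw [add_assoc] at h2
      have h3 : D.Good (D.perp (D.b i) + D.b j) := by
        refine D.Good_of (by rw [pr_add, ih.1, h, add_zero]) hp ?_ h2
        rw [D.hQ, hB, D.hb, hpq]
        generalize D.Q (D.perp (D.b i)) = a
        revert a; decide
      have h4 := D.Good_add ih h3
      rwa [← add_assoc, vadd, zero_add, ← hj] at h4
    · exact key j h

theorem Good_span {v : V} (hv : v ∈ Submodule.span (ZMod 2) (Set.range D.b)) :
    D.Good (D.perp v) := by
  have h0 : D.perp 0 = 0 := by
    have : D.pr 0 = 0 := by simpa using D.pr_phi 0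
    rw [perp, this, map_zero, add_zero]
  induction hv using Submodule.span_induction with
  | mem x hx => obtain ⟨i, rfl⟩ := hx; exact D.Good_b i
  | zero => rw [h0]; exact D.Good_zero
  | add x y _ _ hx hy => rw [perp_add]; exact D.Good_add hx hy
  | smul a x _ hx =>
    rcases z2 a with h | h
    · rw [h, zero_smul, h0]; exact D.Good_zero
    · rw [h, one_smul]; exact hx

theorem R_of_ne {x y : V} (hxy : x + y ∈ Submodule.span (ZMod 2) (Set.range D.b))
    (hq : D.Q x = D.Q y) (hx : D.pr x ≠ 0) (hy : D.pr y ≠ 0) : D.R x y := by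
  have hg := D.Good_span hxy
  obtain ⟨p, hp, hpu, hpB, hpq⟩ := U_a (D.pr x) hx (1 + D.B (D.perp (x + y)) (D.perp x))
    (1 + D.Q (D.perp (x + y)))
  have e : ∀ a : ZMod 2, 1 + a + a = 1 := by decide
  have h1 := hg.2 p hp (by rw [hpq, e]) x
  have hB : D.B x (D.phi p + D.perp (x + y)) = 1 := by
    have hr : D.B (D.perp (x + y)) (D.perp x) = D.B x (D.perp (x + y)) := by
      rw [D.B_symm x]
      conv_rhs => rw [← D.dec x]
      rw [map_add, D.dec, D.B_phi_perp (D.pr_perp _), zero_add]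
    rw [map_add, B_phi, BU_symm, hpB, hr, e]
  rw [hB, one_smul] at h1
  have hx' : x + (D.phi p + D.perp (x + y)) = D.phi (D.pr x + p) + D.perp y := by
    rw [perp_add, map_add]
    have : D.phi (D.pr x) + D.perp x + (D.phi p + (D.perp x + D.perp y))
      = (D.perp x + D.perp x) + (D.phi (D.pr x) + D.phi p + D.perp y) := by abel
    nth_rewrite 1 [← D.dec x]
    rw [this, vadd, zero_add]
  rw [hx'] at h1
  have hQ1 : D.Q (D.phi (D.pr x + p) + D.perp y) = D.Q x := by
    rw [← hx', D.hQ, hB, D.Q_dec hg.1, hpq, e, add_assoc, z2add, add_zero]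
  refine h1.trans ?_
  have h2 := D.R_move (D.pr_perp y) (D.pr x + p) (D.pr y) ?_ hy ?_
  · rwa [dec] at h2
  · intro h
    apply hpu
    have : p = D.pr x + D.pr x + p := by rw [vadd, zero_add]
    rw [this, add_assoc, h, add_zero]
  · rw [hq, D.Q_dec (D.pr_perp y)] at hQ1
    conv_rhs at hQ1 => rw [← D.dec y, D.Q_dec (D.pr_perp y)]
    exact add_right_cancel hQ1

theorem Q_step {x y : V} (h : D.Step x y) : D.Q y = D.Q x := by
  obtain ⟨i, rfl⟩ := h
  rw [D.hQ, D.Q_smul, D.hb, map_smul, smul_eq_mul]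
  generalize D.B x (D.b i) = a
  generalize D.Q x = b
  revert a b; decide

theorem Q_R {x y : V} (h : D.R x y) : D.Q y = D.Q x := by
  induction h with
  | refl => rfl
  | tail _ h ih => rw [D.Q_step h, ih]

theorem span_R {x y : V} (h : D.R x y) : x + y ∈ Submodule.span (ZMod 2) (Set.range D.b) := by
  induction h with
  | refl => rw [vadd]; exact Submodule.zero_mem _
  | @tail y z _ h ih =>
    obtain ⟨i, rfl⟩ := h
    rw [← add_assoc]
    exact Submodule.add_mem _ ih (Submodule.smul_mem _ _ (Submodule.subset_span ⟨i, rfl⟩))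

theorem R_symm {x y : V} (h : D.R x y) : D.R y x := by
  induction h with
  | refl => exact Relation.ReflTransGen.refl
  | @tail y z _ h ih =>
    refine Relation.ReflTransGen.head ?_ ih
    obtain ⟨i, rfl⟩ := h
    refine ⟨i, ?_⟩
    rw [map_add, LinearMap.add_apply, map_smul, LinearMap.smul_apply, D.B_self, smul_zero,
      add_zero, add_assoc, vadd, add_zero]

def NF (x : V) : Prop := ∃ i, D.B x (D.b i) = 1

theorem NF_R {x y : V} (h : D.R x y) (hx : D.NF x) : D.NF y := by
  induction h with
  | refl => exact hx
  | @tail y z _ h ih =>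
    obtain ⟨i, rfl⟩ := h
    rcases z2 (D.B y (D.b i)) with h0 | h0
    · rw [h0, zero_smul, add_zero]; exact ih
    · exact ⟨i, by rw [h0, one_smul, map_add, LinearMap.add_apply, h0, D.B_self, add_zero]⟩

theorem exists_R_ne {x : V} (hx : D.NF x) : ∃ y, D.R x y ∧ D.pr y ≠ 0 := by
  by_cases h : D.pr x = 0
  · obtain ⟨i, hi⟩ := hx
    have hg := D.Good_b i
    obtain ⟨p, hp, hpq⟩ := exists_ne (1 + D.Q (D.perp (D.b i)))
    have e : ∀ a : ZMod 2, 1 + a + a = 1 := by decide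
    have h1 := hg.2 p hp (by rw [hpq, e]) x
    have hB : D.B x (D.phi p + D.perp (D.b i)) = 1 := by
      rw [perp, map_add, map_add, D.B_phi_perp h, D.B_phi_perp h, hi, add_zero, zero_add]
    refine ⟨_, h1, ?_⟩
    rw [hB, one_smul, pr_add, h, zero_add, pr_dec _ hg.1]
    exact hp
  · exact ⟨x, Relation.ReflTransGen.refl, h⟩

/-- Orbits of non-fixed vectors are classified by `Q`. -/
theorem R_iff {x y : V} (hx : D.NF x) (hy : D.NF y)
    (hxy : x + y ∈ Submodule.span (ZMod 2) (Set.range D.b)) (hq : D.Q x = D.Q y) : D.R x y := by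
  obtain ⟨x', hx1, hx2⟩ := D.exists_R_ne hx
  obtain ⟨y', hy1, hy2⟩ := D.exists_R_ne hy
  refine hx1.trans (Relation.ReflTransGen.trans (D.R_of_ne ?_ ?_ hx2 hy2) (D.R_symm hy1))
  · have h1 := D.span_R hx1
    have h2 := D.span_R hy1
    have h3 := Submodule.add_mem _ (Submodule.add_mem _ h1 hxy) h2
    have h4 : x + x' + (x + y) + (y + y') = (x + x) + (y + y) + (x' + y') := by abel
    rwa [h4, vadd, vadd, zero_add, zero_add] at h3
  · rw [D.Q_R hx1, D.Q_R hy1, hq]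

theorem phi_mem (c : U6) : D.phi c ∈ Submodule.span (ZMod 2) (Set.range D.b) := by
  have h : ∀ i, D.b i ∈ Submodule.span (ZMod 2) (Set.range D.b) :=
    fun i => Submodule.subset_span ⟨i, rfl⟩
  simp only [phi, LinearMap.coe_mk, AddHom.coe_mk]
  repeat' apply Submodule.add_mem
  all_goals exact Submodule.smul_mem _ _ (h _)

theorem exists_NF (x : V) (q : ZMod 2) : ∃ y, D.NF y ∧ D.Q y = q ∧
    x + y ∈ Submodule.span (ZMod 2) (Set.range D.b) := by
  obtain ⟨p, hp, hpq⟩ := exists_ne (q + D.Q (D.perp x))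
  refine ⟨D.phi p + D.perp x, ?_, ?_, ?_⟩
  · by_contra h
    apply hp
    rw [← D.pr_dec (D.pr_perp x) p]
    apply D.pr_eq_zero_of_lam
    intro i
    rcases z2 (D.B (D.phi p + D.perp x) (D.b (D.f i))) with h0 | h0
    · exact h0
    · exact absurd ⟨_, h0⟩ h
  · rw [D.Q_dec (D.pr_perp x), hpq, add_assoc, z2add, add_zero]
  · have : x + (D.phi p + D.perp x) = (x + x) + (D.phi p + D.phi (D.pr x)) := by
      rw [perp]; abel
    rw [this, vadd, zero_add]
    exact Submodule.add_mem _ (D.phi_mem _) (D.phi_mem _)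

end TData

end Abstract

section Concrete

/-- corner sums -/
def XX (n k l : ℕ) : Matrix (Fin n) (Fin n) (ZMod 2) →ₗ[ZMod 2] ZMod 2 where
  toFun M := ∑ r : Fin n, ∑ s : Fin n, if (r : ℕ) < k ∧ l ≤ (s : ℕ) then M r s else 0
  map_add' M N := by
    simp only [← Finset.sum_add_distrib]
    refine Finset.sum_congr rfl fun r _ => Finset.sum_congr rfl fun s _ => ?_
    split_ifs <;> simp
  map_smul' c M := by
    simp only [Finset.mul_sum, RingHom.id_apply, smul_eq_mul]
    refine Finset.sum_congr rfl fun r _ => Finset.sum_congr rfl fun s _ => ?_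
    split_ifs <;> simp

theorem XX_apply (n k l : ℕ) (M : Matrix (Fin n) (Fin n) (ZMod 2)) :
    XX n k l M = ∑ r : Fin n, ∑ s : Fin n, if (r : ℕ) < k ∧ l ≤ (s : ℕ) then M r s else 0 := rfl

theorem XX_zero (n l : ℕ) (M : Matrix (Fin n) (Fin n) (ZMod 2)) : XX n 0 l M = 0 := by
  simp [XX_apply]

theorem XX_top (n k l : ℕ) (h : n ≤ l) (M : Matrix (Fin n) (Fin n) (ZMod 2)) :
    XX n k l M = 0 := by
  rw [XX_apply]
  refine Finset.sum_eq_zero fun r _ => Finset.sum_eq_zero fun s _ => ?_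
  rw [if_neg]; have := s.2; omega

theorem XX_ent (n r s : ℕ) (hr : r < n) (hs : s < n) (M : Matrix (Fin n) (Fin n) (ZMod 2)) :
    ent n M r s = XX n (r + 1) s M + XX n r s M + XX n (r + 1) (s + 1) M + XX n r (s + 1) M := by
  simp only [XX_apply, ← Finset.sum_add_distrib]
  rw [Finset.sum_eq_single (⟨r, hr⟩ : Fin n), Finset.sum_eq_single (⟨s, hs⟩ : Fin n)]
  · simp [ent, hr, hs]
  · intro b _ hb
    have : (b : ℕ) ≠ s := fun h => hb (Fin.ext h)
    have h1 : (s ≤ (b : ℕ)) ↔ (s + 1 ≤ (b : ℕ)) := by omega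
    simp only [h1]
    split_ifs <;> simp [TData.z2add]
  · simp
  · intro a _ ha
    have : (a : ℕ) ≠ r := fun h => ha (Fin.ext h)
    have h1 : ((a : ℕ) < r + 1) ↔ ((a : ℕ) < r) := by omega
    refine Finset.sum_eq_zero fun b _ => ?_
    simp only [h1]
    rw [TData.z2add, zero_add, TData.z2add]
  · simp

/-- The block matrix. -/
def EE (n i j : ℕ) : Matrix (Fin n) (Fin n) (ZMod 2) :=
  Matrix.of fun r s =>
    if ((r : ℕ) = i ∨ (r : ℕ) = i + 1) ∧ ((s : ℕ) = j ∨ (s : ℕ) = j + 1)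
        ∧ (r : ℕ) ≤ (s : ℕ) then 1 else 0

theorem gmove_eq (n i j : ℕ) (M : Matrix (Fin n) (Fin n) (ZMod 2)) :
    gmove n i j M = M + (ent n M i j + ent n M (i + 1) (j + 1)) • EE n i j := by
  ext r s
  simp only [gmove, EE, Matrix.of_apply, Matrix.add_apply, Matrix.smul_apply]
  split_ifs <;> simp

theorem XX_single (n k l : ℕ) (a b : Fin n) :
    XX n k l (Matrix.single a b 1) = if (a : ℕ) < k ∧ l ≤ (b : ℕ) then 1 else 0 := by
  rw [XX_apply, Finset.sum_eq_single a, Finset.sum_eq_single b]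
  · simp
  · intro c _ hc
    simp [Matrix.single, hc.symm]
  · simp
  · intro c _ hc
    simp [Matrix.single, hc.symm]
  · simp

theorem XX_EE (n i j k l : ℕ) (hij : i ≤ j) (hj : j + 2 ≤ n) (hkl : k ≤ l + 1) :
    XX n k l (EE n i j) = if k = i + 1 ∧ l = j + 1 then 1 else 0 := by
  have hE : EE n i j = Matrix.single ⟨i, by omega⟩ ⟨j, by omega⟩ 1
      + Matrix.single ⟨i, by omega⟩ ⟨j + 1, by omega⟩ 1
      + (if i < j then (1 : ZMod 2) else 0) • Matrix.single ⟨i + 1, by omega⟩ ⟨j, by omega⟩ 1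
      + Matrix.single ⟨i + 1, by omega⟩ ⟨j + 1, by omega⟩ 1 := by
    ext r s
    simp only [EE, Matrix.of_apply, Matrix.add_apply, Matrix.smul_apply, Matrix.single, Fin.ext_iff,
      smul_eq_mul]
    split_ifs <;> first | (exfalso; omega) | rfl
  rw [hE]
  simp only [map_add, map_smul, XX_single, smul_eq_mul]
  split_ifs <;> first | omega | rfl

/-- The quadratic form. -/
def QQ (n : ℕ) (M : Matrix (Fin n) (Fin n) (ZMod 2)) : ZMod 2 :=
  ∑ i ∈ Finset.range n, ∑ j ∈ Finset.range n,
    if i ≤ j then XX n (i + 1) (j + 1) M *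
      (1 + XX n (i + 1) j M + XX n (i + 2) (j + 1) M + XX n (i + 2) (j + 2) M) else 0

def BB (n : ℕ) : Matrix (Fin n) (Fin n) (ZMod 2) →ₗ[ZMod 2]
    Matrix (Fin n) (Fin n) (ZMod 2) →ₗ[ZMod 2] ZMod 2 :=
  LinearMap.mk₂ (ZMod 2) (fun M N =>
    ∑ i ∈ Finset.range n, ∑ j ∈ Finset.range n,
      if i ≤ j then
        XX n (i + 1) (j + 1) M * (XX n (i + 1) j N + XX n (i + 2) (j + 1) N + XX n (i + 2) (j + 2) N)
        + XX n (i + 1) (j + 1) N *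
          (XX n (i + 1) j M + XX n (i + 2) (j + 1) M + XX n (i + 2) (j + 2) M) else 0)
  (by
    intro M N P
    simp only [← Finset.sum_add_distrib]
    refine Finset.sum_congr rfl fun r _ => Finset.sum_congr rfl fun s _ => ?_
    simp only [map_add]
    split_ifs
    · ring
    · simp)
  (by
    intro c M N
    simp only [smul_eq_mul, Finset.mul_sum]
    refine Finset.sum_congr rfl fun r _ => Finset.sum_congr rfl fun s _ => ?_
    simp only [map_smul, smul_eq_mul]
    split_ifs
    · ring
    · simp)
  (by
    intro M N P
    simp only [← Finset.sum_add_distrib]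
    refine Finset.sum_congr rfl fun r _ => Finset.sum_congr rfl fun s _ => ?_
    simp only [map_add]
    split_ifs
    · ring
    · simp)
  (by
    intro c M N
    simp only [smul_eq_mul, Finset.mul_sum]
    refine Finset.sum_congr rfl fun r _ => Finset.sum_congr rfl fun s _ => ?_
    simp only [map_smul, smul_eq_mul]
    split_ifs
    · ring
    · simp)

theorem QQ_add (n : ℕ) (M N : Matrix (Fin n) (Fin n) (ZMod 2)) :
    QQ n (M + N) = QQ n M + QQ n N + BB n M N := by
  simp only [QQ, BB, LinearMap.mk₂_apply, ← Finset.sum_add_distrib]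
  refine Finset.sum_congr rfl fun r _ => Finset.sum_congr rfl fun s _ => ?_
  simp only [map_add]
  split_ifs
  · ring
  · simp

theorem sum_delta (n a b : ℕ) (F : ℕ → ℕ → ZMod 2) (P : ℕ → ℕ → Prop) [∀ i j, Decidable (P i j)]
    (ha : a < n) (hb : b < n) (hP : ∀ i j, P i j ↔ i = a ∧ j = b) :
    (∑ i ∈ Finset.range n, ∑ j ∈ Finset.range n, if P i j then F i j else 0) = F a b := by
  rw [Finset.sum_eq_single a, Finset.sum_eq_single b]
  · rw [if_pos ((hP _ _).2 ⟨rfl, rfl⟩)]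
  · intro j _ hj
    rw [if_neg (fun h => hj ((hP _ _).1 h).2)]
  · intro h; exact absurd (Finset.mem_range.2 hb) h
  · intro i _ hi
    exact Finset.sum_eq_zero fun j _ => if_neg (fun h => hi ((hP _ _).1 h).1)
  · intro h; exact absurd (Finset.mem_range.2 ha) h

theorem sum_delta_zero (n : ℕ) (F : ℕ → ℕ → ZMod 2) (P : ℕ → ℕ → Prop)
    [∀ i j, Decidable (P i j)] (hP : ∀ i j, P i j → F i j = 0) :
    (∑ i ∈ Finset.range n, ∑ j ∈ Finset.range n, if P i j then F i j else 0) = 0 := by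
  refine Finset.sum_eq_zero fun i _ => Finset.sum_eq_zero fun j _ => ?_
  split_ifs with h
  · exact hP _ _ h
  · rfl

theorem QQ_EE (n i j : ℕ) (hij : i ≤ j) (hj : j + 2 ≤ n) : QQ n (EE n i j) = 1 := by
  refine Eq.trans ?_ (sum_delta n i j (fun _ _ => 1) (fun a b => a = i ∧ b = j) (by omega)
    (by omega) (fun _ _ => Iff.rfl))
  rw [QQ]
  refine Finset.sum_congr rfl fun r _ => Finset.sum_congr rfl fun s _ => ?_
  by_cases h : r ≤ s
  · rw [if_pos h, XX_EE n i j _ _ hij hj (by omega), XX_EE n i j _ _ hij hj (by omega),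
      XX_EE n i j _ _ hij hj (by omega), XX_EE n i j _ _ hij hj (by omega)]
    by_cases h1 : r = i ∧ s = j
    · rw [if_pos (by omega), if_neg (by omega), if_neg (by omega), if_neg (by omega), if_pos h1]
      simp
    · rw [if_neg (by omega), if_neg h1, zero_mul]
  · rw [if_neg h, if_neg (by omega)]

theorem BB_EE (n i j : ℕ) (hij : i ≤ j) (hj : j + 2 ≤ n) (M : Matrix (Fin n) (Fin n) (ZMod 2)) :
    BB n M (EE n i j) = ent n M i j + ent n M (i + 1) (j + 1) := by
  have h1 : BB n M (EE n i j) =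
      (∑ r ∈ Finset.range n, ∑ s ∈ Finset.range n,
        if r = i ∧ s = j + 1 then XX n (r + 1) (s + 1) M else 0)
      + (∑ r ∈ Finset.range n, ∑ s ∈ Finset.range n,
        if r + 1 = i ∧ s = j then XX n (r + 1) (s + 1) M else 0)
      + (∑ r ∈ Finset.range n, ∑ s ∈ Finset.range n,
        if r + 1 = i ∧ s + 1 = j then XX n (r + 1) (s + 1) M else 0)
      + (∑ r ∈ Finset.range n, ∑ s ∈ Finset.range n,
        if r = i ∧ s = j then (XX n (r + 1) s M + XX n (r + 2) (s + 1) M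
          + XX n (r + 2) (s + 2) M) else 0) := by
    simp only [BB, LinearMap.mk₂_apply, ← Finset.sum_add_distrib]
    refine Finset.sum_congr rfl fun r _ => Finset.sum_congr rfl fun s _ => ?_
    by_cases h : r ≤ s
    · rw [if_pos h, XX_EE n i j _ _ hij hj (by omega), XX_EE n i j _ _ hij hj (by omega),
        XX_EE n i j _ _ hij hj (by omega), XX_EE n i j _ _ hij hj (by omega)]
      simp only [Nat.add_right_cancel_iff, mul_add, mul_ite, mul_one, mul_zero, ite_mul, one_mul,
        zero_mul, show r + 2 = i + 1 ↔ r + 1 = i by omega, show s + 2 = j + 1 ↔ s + 1 = j by omega]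
      congr 1
      split_ifs <;> simp
    · rw [if_neg h, if_neg (by omega), if_neg (by omega), if_neg (by omega), if_neg (by omega)]
      simp
  have h2 : (∑ r ∈ Finset.range n, ∑ s ∈ Finset.range n,
        if r + 1 = i ∧ s = j then XX n (r + 1) (s + 1) M else 0) = XX n i (j + 1) M := by
    rcases i with _ | i
    · rw [XX_zero]
      exact sum_delta_zero _ _ _ (fun a b h => by omega)
    · exact sum_delta n i j (fun r s => XX n (r + 1) (s + 1) M) _ (by omega) (by omega)
        (fun _ _ => by omega)
  have h3 : (∑ r ∈ Finset.range n, ∑ s ∈ Finset.range n,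
        if r + 1 = i ∧ s + 1 = j then XX n (r + 1) (s + 1) M else 0) = XX n i j M := by
    rcases i with _ | i
    · rw [XX_zero]
      exact sum_delta_zero _ _ _ (fun a b h => by omega)
    · obtain ⟨j, rfl⟩ : ∃ j', j = j' + 1 := ⟨j - 1, by omega⟩
      exact sum_delta n i j (fun r s => XX n (r + 1) (s + 1) M) _ (by omega) (by omega)
        (fun _ _ => by omega)
  rw [h1, h2, h3, sum_delta n i (j + 1) (fun r s => XX n (r + 1) (s + 1) M) _ (by omega) (by omega)
        (fun _ _ => by omega),
      sum_delta n i j (fun r s => XX n (r + 1) s M + XX n (r + 2) (s + 1) M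
          + XX n (r + 2) (s + 2) M) _ (by omega) (by omega) (fun _ _ => by omega),
      XX_ent n i j (by omega) (by omega), XX_ent n (i + 1) (j + 1) (by omega) (by omega)]
  have e := TData.z2add (XX n (i + 1) (j + 1) M)
  simp only [add_assoc, Nat.reduceAdd]
  linear_combination (-1 : ZMod 2) * e

/-- index set of generators -/
abbrev Idx (n : ℕ) := {p : ℕ × ℕ // p.1 ≤ p.2 ∧ p.2 + 2 ≤ n}

theorem ent_EE (n i j k l : ℕ) (hij : i ≤ j) (hj : j + 2 ≤ n) :
    ent n (EE n i j) k l = if ((k : ℕ) = i ∨ (k : ℕ) = i + 1) ∧ ((l : ℕ) = j ∨ (l : ℕ) = j + 1)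
        ∧ (k : ℕ) ≤ (l : ℕ) then 1 else 0 := by
  by_cases h : k < n ∧ l < n
  · rw [ent, dif_pos h]; rfl
  · rw [ent, dif_neg h, if_neg (by omega)]

def DD (n : ℕ) (hn : 6 ≤ n) : TData (Matrix (Fin n) (Fin n) (ZMod 2)) (Idx n) where
  Q := QQ n
  B := BB n
  hQ := QQ_add n
  b p := EE n p.1.1 p.1.2
  hb p := QQ_EE n _ _ p.2.1 p.2.2
  f := ![⟨(0, 0), by dsimp; omega⟩, ⟨(1, 1), by dsimp; omega⟩, ⟨(0, 1), by dsimp; omega⟩,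
    ⟨(1, 2), by dsimp; omega⟩, ⟨(0, 2), by dsimp; omega⟩, ⟨(1, 3), by dsimp; omega⟩]
  gram i j := by
    fin_cases i <;> fin_cases j <;> simp only [Fin.zero_eta, Fin.mk_one, Fin.reduceFinMk, Matrix.cons_val] <;>
    (rw [BB_EE _ _ _ (by omega) (by omega), ent_EE _ _ _ _ _ (by omega) (by omega),
      ent_EE _ _ _ _ _ (by omega) (by omega)]; decide)
  conn := by
    rintro ⟨⟨i, j⟩, h1, h2⟩
    dsimp only at h1 h2
    obtain ⟨d, rfl⟩ := Nat.exists_eq_add_of_le h1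
    induction d with
    | zero =>
      induction i with
      | zero => exact Relation.ReflTransGen.refl
      | succ i ih =>
        refine (ih (by omega) (by omega)).tail ?_
        dsimp only
        rw [BB_EE _ _ _ (by omega) (by omega), ent_EE _ _ _ _ _ (by omega) (by omega),
          ent_EE _ _ _ _ _ (by omega) (by omega), if_pos (by omega), if_neg (by omega), add_zero]
    | succ d ih =>
      refine (ih (by omega) (by omega)).tail ?_
      dsimp only
      rw [BB_EE _ _ _ (by omega) (by omega), ent_EE _ _ _ _ _ (by omega) (by omega),
          ent_EE _ _ _ _ _ (by omega) (by omega), if_pos (by omega), if_neg (by omega), add_zero]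

theorem R_eq (n : ℕ) (hn : 6 ≤ n) (M N : Matrix (Fin n) (Fin n) (ZMod 2)) :
    InOrbit n M N ↔ (DD n hn).R M N := by
  have : Gstep n = (DD n hn).Step := by
    ext M N
    constructor
    · rintro ⟨i, j, hij, hj, rfl⟩
      refine ⟨⟨(i, j), hij, hj⟩, ?_⟩
      change gmove n i j M = M + BB n M (EE n i j) • EE n i j
      rw [gmove_eq, BB_EE n i j hij hj]
    · rintro ⟨⟨⟨i, j⟩, hij, hj⟩, rfl⟩
      refine ⟨i, j, hij, hj, ?_⟩
      change M + BB n M (EE n i j) • EE n i j = gmove n i j M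
      rw [gmove_eq, BB_EE n i j hij hj]
  rw [InOrbit, TData.R, this]

theorem UpperTri_add {n : ℕ} {M N : Matrix (Fin n) (Fin n) (ZMod 2)} (hM : UpperTri n M)
    (hN : UpperTri n N) : UpperTri n (M + N) := by
  intro i j h
  rw [Matrix.add_apply, hM i j h, hN i j h, add_zero]

theorem UpperTri_EE (n i j : ℕ) : UpperTri n (EE n i j) := by
  intro r s h
  simp only [EE, Matrix.of_apply]
  rw [if_neg (by omega)]

theorem span_upper {n : ℕ} {hn : 6 ≤ n} {v : Matrix (Fin n) (Fin n) (ZMod 2)}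
    (hv : v ∈ Submodule.span (ZMod 2) (Set.range (DD n hn).b)) :
    UpperTri n v ∧ ∀ k, XX n (k + 1) k v = 0 := by
  induction hv using Submodule.span_induction with
  | mem x hx =>
    obtain ⟨⟨⟨i, j⟩, hij, hj⟩, rfl⟩ := hx
    change UpperTri n (EE n i j) ∧ ∀ k, XX n (k + 1) k (EE n i j) = 0
    refine ⟨UpperTri_EE n i j, fun k => ?_⟩
    dsimp only at hij hj
    rw [XX_EE n i j _ _ hij hj (by omega), if_neg (by omega)]
  | zero => exact ⟨fun _ _ _ => rfl, fun k => by rw [map_zero]⟩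
  | add x y _ _ hx hy =>
    exact ⟨UpperTri_add hx.1 hy.1, fun k => by rw [map_add, hx.2, hy.2, add_zero]⟩
  | smul a x _ hx =>
    refine ⟨fun i j h => ?_, fun k => by rw [map_smul, hx.2, smul_zero]⟩
    rw [Matrix.smul_apply, hx.1 i j h, smul_zero]

theorem mem_span {n : ℕ} {hn : 6 ≤ n} {Z : Matrix (Fin n) (Fin n) (ZMod 2)}
    (hZ : UpperTri n Z) (h0 : ∀ k < n, XX n (k + 1) k Z = 0) :
    Z ∈ Submodule.span (ZMod 2) (Set.range (DD n hn).b) := by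
  set W : Matrix (Fin n) (Fin n) (ZMod 2) := ∑ i ∈ Finset.range n, ∑ j ∈ Finset.range n,
    if i ≤ j ∧ j + 2 ≤ n then XX n (i + 1) (j + 1) Z • EE n i j else 0 with hW
  have hWs : W ∈ Submodule.span (ZMod 2) (Set.range (DD n hn).b) := by
    refine Submodule.sum_mem _ fun i _ => Submodule.sum_mem _ fun j _ => ?_
    split_ifs with h
    · exact Submodule.smul_mem _ _ (Submodule.subset_span ⟨⟨(i, j), h⟩, rfl⟩)
    · exact Submodule.zero_mem _
  have hWX : ∀ k l, k ≤ l + 1 → l ≤ n → XX n k l W = XX n k l Z := by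
    intro k l hkl hl
    have e : XX n k l W = ∑ i ∈ Finset.range n, ∑ j ∈ Finset.range n,
        if (i ≤ j ∧ j + 2 ≤ n) ∧ (k = i + 1 ∧ l = j + 1) then XX n (i + 1) (j + 1) Z else 0 := by
      rw [hW]
      simp only [map_sum]
      refine Finset.sum_congr rfl fun i _ => Finset.sum_congr rfl fun j _ => ?_
      by_cases h : i ≤ j ∧ j + 2 ≤ n
      · rw [if_pos h, map_smul, XX_EE n i j _ _ h.1 h.2 hkl]
        simp [h]
      · rw [if_neg h, if_neg (fun h' => h h'.1), map_zero]
    rcases Nat.eq_zero_or_pos k with hk | hk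
    · subst hk; rw [XX_zero, XX_zero]
    rcases Nat.lt_or_ge l n with hl' | hl'
    · rcases Nat.lt_or_ge l k with h | h
      · obtain rfl : k = l + 1 := by omega
        rw [h0 l hl', (span_upper hWs).2]
      · obtain ⟨k, rfl⟩ : ∃ k', k = k' + 1 := ⟨k - 1, by omega⟩
        obtain ⟨l, rfl⟩ : ∃ k', l = k' + 1 := ⟨l - 1, by omega⟩
        rw [e]
        exact sum_delta n k l (fun i j => XX n (i + 1) (j + 1) Z) _ (by omega) (by omega)
          (fun i j => by omega)
    · rw [XX_top _ _ _ hl', XX_top _ _ _ hl']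
  have : Z = W := by
    ext i j
    by_cases h : (j : ℕ) < i
    · rw [hZ i j h, (span_upper hWs).1 i j h]
    · have h1 := XX_ent n i j i.2 j.2 Z
      have h2 := XX_ent n i j i.2 j.2 W
      have := j.2
      rw [hWX _ _ (by omega) (by omega), hWX _ _ (by omega) (by omega),
        hWX _ _ (by omega) (by omega), hWX _ _ (by omega) (by omega), ← h1] at h2
      simpa [ent] using h2.symm
  rw [this]; exact hWs

theorem iota_upper (n : ℕ) (M : Matrix (Fin n) (Fin n) (ZMod 2)) : UpperTri n (iotaT n M) := by
  intro i j h
  simp only [iotaT, Matrix.of_apply]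
  rw [if_neg (by omega)]

theorem iota_iota {n : ℕ} {M : Matrix (Fin n) (Fin n) (ZMod 2)} (h : UpperTri n M) :
    iotaT n (iotaT n M) = M := by
  ext i j
  simp only [iotaT, Matrix.of_apply, Fin.rev_rev, Fin.val_rev]
  by_cases h1 : (i : ℕ) ≤ j
  · rw [if_pos h1, if_pos (by omega), add_assoc, TData.z2add, add_zero]
  · rw [if_neg h1, h i j (by omega)]

theorem iota_ent (n : ℕ) (M : Matrix (Fin n) (Fin n) (ZMod 2)) (a b : ℕ) (hab : a ≤ b)
    (hb : b < n) : ent n (iotaT n M) a b = ent n M (n - 1 - b) (n - 1 - a) + 1 := by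
  rw [ent, dif_pos (by omega), ent, dif_pos (by omega)]
  simp only [iotaT, Matrix.of_apply, if_pos hab]
  congr 2 <;> (simp only [Fin.ext_iff, Fin.val_rev]; omega)

theorem iota_tr (n : ℕ) (M : Matrix (Fin n) (Fin n) (ZMod 2)) (i j : ℕ) (hij : i ≤ j)
    (hj : j + 2 ≤ n) :
    BB n (iotaT n M) (EE n (n - 2 - j) (n - 2 - i)) = BB n M (EE n i j) := by
  rw [BB_EE _ _ _ (by omega) (by omega), BB_EE _ _ _ hij hj, iota_ent _ _ _ _ (by omega) (by omega),
    iota_ent _ _ _ _ (by omega) (by omega)]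
  rw [show n - 1 - (n - 2 - i) = i + 1 by omega, show n - 1 - (n - 2 - j) = j + 1 by omega,
    show n - 1 - (n - 2 - i + 1) = i by omega, show n - 1 - (n - 2 - j + 1) = j by omega]
  have := TData.z2add 1
  linear_combination this

theorem iota_add_EE (n : ℕ) (M : Matrix (Fin n) (Fin n) (ZMod 2)) (i j : ℕ) (hij : i ≤ j)
    (hj : j + 2 ≤ n) :
    iotaT n (M + EE n i j) = iotaT n M + EE n (n - 2 - j) (n - 2 - i) := by
  ext r s
  have := r.2
  have := s.2
  simp only [iotaT, EE, Matrix.of_apply, Matrix.add_apply, Fin.val_rev]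
  by_cases h : (r : ℕ) ≤ s
  · rw [if_pos h, if_pos h, add_right_comm]
    congr 1
    split_ifs <;> first | rfl | (exfalso; omega)
  · rw [if_neg h, if_neg h, if_neg (by omega), add_zero]

theorem QQ_iota_span {n : ℕ} {hn : 6 ≤ n} {v : Matrix (Fin n) (Fin n) (ZMod 2)}
    (hv : v ∈ Submodule.span (ZMod 2) (Set.range (DD n hn).b)) :
    ∀ M, QQ n (iotaT n M) = QQ n M → QQ n (iotaT n (M + v)) = QQ n (M + v) := by
  induction hv using Submodule.span_induction with
  | mem x hx =>
    obtain ⟨⟨⟨i, j⟩, hij, hj⟩, rfl⟩ := hx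
    intro M hM
    change QQ n (iotaT n (M + EE n i j)) = QQ n (M + EE n i j)
    dsimp only at hij hj
    rw [iota_add_EE n M i j hij hj, QQ_add, QQ_add, iota_tr n M i j hij hj, hM, QQ_EE n i j hij hj,
      QQ_EE _ _ _ (by omega) (by omega)]
  | zero => intro M hM; rwa [add_zero]
  | add x y _ _ hx hy =>
    intro M hM
    rw [← add_assoc]
    exact hy _ (hx _ hM)
  | smul a x _ hx =>
    intro M hM
    rcases TData.z2 a with h | h
    · rwa [h, zero_smul, add_zero]
    · rw [h, one_smul]; exact hx M hM

theorem XX_iota (n k l : ℕ) (hk : k ≤ n) (hl : l ≤ n) (hkl : k ≤ l + 1)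
    (M : Matrix (Fin n) (Fin n) (ZMod 2)) :
    XX n k l (iotaT n M) = XX n (n - l) (n - k) M + (k : ZMod 2) * ((n - l : ℕ) : ZMod 2) := by
  have h1 : XX n k l (iotaT n M) = (∑ r : Fin n, ∑ s : Fin n,
      if (r : ℕ) < k ∧ l ≤ (s : ℕ) then M (Fin.rev s) (Fin.rev r) else 0)
      + (∑ r : Fin n, if (r : ℕ) < k then (1 : ZMod 2) else 0) *
        (∑ s : Fin n, if l ≤ (s : ℕ) then (1 : ZMod 2) else 0) := by
    rw [XX_apply, Finset.sum_mul_sum, ← Finset.sum_add_distrib]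
    refine Finset.sum_congr rfl fun r _ => ?_
    rw [← Finset.sum_add_distrib]
    refine Finset.sum_congr rfl fun s _ => ?_
    simp only [iotaT, Matrix.of_apply]
    by_cases h1 : (r : ℕ) < k <;> by_cases h2 : l ≤ (s : ℕ)
    · rw [if_pos ⟨h1, h2⟩, if_pos (by omega)]; simp [h1, h2]
    · simp [h2]
    · simp [h1]
    · simp [h1]
  have h2 : (∑ r : Fin n, if (r : ℕ) < k then (1 : ZMod 2) else 0) = k := by
    rw [Fin.sum_univ_eq_sum_range (fun r => if r < k then (1 : ZMod 2) else 0), Finset.sum_boole]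
    congr 1
    rw [show Finset.filter (fun x => x < k) (Finset.range n) = Finset.range k by
      ext x; simp; omega, Finset.card_range]
  have h3 : (∑ s : Fin n, if l ≤ (s : ℕ) then (1 : ZMod 2) else 0) = ((n - l : ℕ) : ZMod 2) := by
    rw [Fin.sum_univ_eq_sum_range (fun r => if l ≤ r then (1 : ZMod 2) else 0), Finset.sum_boole]
    congr 1
    rw [show Finset.filter (fun x => l ≤ x) (Finset.range n) = Finset.Ico l n by
      ext x; simp; omega, Nat.card_Ico]
  rw [h1, h2, h3, XX_apply]
  congr 1
  rw [← Equiv.sum_comp Fin.revPerm (fun r : Fin n => ∑ s : Fin n,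
    if (r : ℕ) < n - l ∧ n - k ≤ (s : ℕ) then M r s else 0), Finset.sum_comm]
  refine Finset.sum_congr rfl fun s _ => ?_
  rw [← Equiv.sum_comp Fin.revPerm (fun t : Fin n =>
    if ((Fin.revPerm s : Fin n) : ℕ) < n - l ∧ n - k ≤ (t : ℕ) then M (Fin.revPerm s) t else 0)]
  refine Finset.sum_congr rfl fun r _ => ?_
  simp only [Fin.revPerm_apply, Fin.val_rev]
  have := r.2
  have := s.2
  refine if_congr ?_ rfl rfl
  omega

theorem XX_diag (n k l : ℕ) (hkl : k ≤ l + 1) (hl : l < n) (η : ℕ → ZMod 2) :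
    XX n k l (Matrix.diagonal (fun i : Fin n => η i)) = if k = l + 1 then η l else 0 := by
  rw [XX_apply]
  have : ∀ r : Fin n, (∑ s : Fin n, if (r : ℕ) < k ∧ l ≤ (s : ℕ) then
      Matrix.diagonal (fun i : Fin n => η i) r s else 0) =
      if r = ⟨l, hl⟩ then (if k = l + 1 then η l else 0) else 0 := by
    intro r
    rw [Finset.sum_eq_single r]
    · rw [Matrix.diagonal_apply_eq]
      simp only [Fin.ext_iff]
      split_ifs with h1 h2 h3 <;> first | rfl | (exfalso; omega) | skip
      rw [h2]
    · intro s _ hs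
      rw [Matrix.diagonal_apply_ne _ hs.symm, ite_self]
    · simp
  simp only [this]
  simp

theorem sum_even (m : ℕ) (f : ℕ → ZMod 2) :
    ∑ i ∈ Finset.range (2 * m), f i = ∑ a ∈ Finset.range m, (f (2 * a) + f (2 * a + 1)) := by
  induction m with
  | zero => simp
  | succ m ih =>
    rw [show 2 * (m + 1) = 2 * m + 1 + 1 by ring, Finset.sum_range_succ, Finset.sum_range_succ, ih,
      Finset.sum_range_succ, add_assoc]

theorem sum_four (q : ℕ) : ∑ b ∈ Finset.range (4 * q), ((b : ZMod 2) + 1) = 0 := by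
  induction q with
  | zero => simp
  | succ q ih =>
    rw [show 4 * (q + 1) = 4 * q + 1 + 1 + 1 + 1 by ring]
    simp only [Finset.sum_range_succ, ih]
    push_cast
    rw [show (4 : ZMod 2) = 0 from rfl, zero_mul]
    decide

theorem sum_tri (m : ℕ) (hm : m % 4 = 0 ∨ m % 4 = 3) :
    ∑ b ∈ Finset.range m, ((b : ZMod 2) + 1) = 0 := by
  rcases hm with h | h
  · obtain ⟨q, rfl⟩ : ∃ q, m = 4 * q := ⟨m / 4, by omega⟩
    exact sum_four q
  · obtain ⟨q, rfl⟩ : ∃ q, m = 4 * q + 1 + 1 + 1 := ⟨m / 4, by omega⟩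
    simp only [Finset.sum_range_succ, sum_four]
    push_cast
    rw [show (4 : ZMod 2) = 0 from rfl, zero_mul]
    decide

theorem sum_pal (n : ℕ) (heven : n % 2 = 0) (η : ℕ → ZMod 2) (hη : ∀ k < n, η (n - 1 - k) = η k) :
    ∑ k ∈ Finset.range n, η k = 0 := by
  refine Finset.sum_involution (fun k _ => n - 1 - k) ?_ ?_ ?_ ?_
  · intro a ha
    rw [hη a (Finset.mem_range.1 ha), TData.z2add]
  · intro a ha _
    have := Finset.mem_range.1 ha
    omega
  · intro a ha
    have := Finset.mem_range.1 ha
    rw [Finset.mem_range]; omega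
  · intro a ha
    have := Finset.mem_range.1 ha
    omega

theorem QQ_diag (n : ℕ) (η : ℕ → ZMod 2) :
    QQ n (Matrix.diagonal (fun i : Fin n => η i)) = 0 := by
  refine Finset.sum_eq_zero fun i _ => Finset.sum_eq_zero fun j hj => ?_
  split_ifs with h
  · have hz : XX n (i + 1) (j + 1) (Matrix.diagonal (fun i : Fin n => η i)) = 0 := by
      rcases Nat.lt_or_ge (j + 1) n with h1 | h1
      · rw [XX_diag n _ _ (by omega) h1, if_neg (by omega)]
      · exact XX_top _ _ _ h1 _
    rw [hz, zero_mul]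
  · rfl

theorem cast_even (k : ℕ) : ((2 * k : ℕ) : ZMod 2) = 0 := by
  push_cast; rw [show (2 : ZMod 2) = 0 from rfl, zero_mul]

theorem cast_of_even {k : ℕ} (h : k % 2 = 0) : (k : ZMod 2) = 0 := by
  obtain ⟨q, rfl⟩ : ∃ q, k = 2 * q := ⟨k / 2, by omega⟩
  exact cast_even q

theorem cast_of_odd {k : ℕ} (h : k % 2 = 1) : (k : ZMod 2) = 1 := by
  obtain ⟨q, rfl⟩ : ∃ q, k = 2 * q + 1 := ⟨k / 2, by omega⟩
  rw [Nat.cast_add, cast_even, Nat.cast_one, zero_add]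

theorem QQ_iota_diag (n : ℕ) (heven : n % 2 = 0) (h8 : n % 8 = 0 ∨ n % 8 = 6)
    (η : ℕ → ZMod 2) (hη : ∀ k < n, η (n - 1 - k) = η k) :
    QQ n (iotaT n (Matrix.diagonal (fun i : Fin n => η i))) = 0 := by
  set D : Matrix (Fin n) (Fin n) (ZMod 2) := Matrix.diagonal (fun i : Fin n => η i) with hD
  have h1 : QQ n (iotaT n D) = ∑ i ∈ Finset.range n, ∑ j ∈ Finset.range n,
      if i ≤ j then (if i % 2 = 0 ∧ j % 2 = 0 then
        1 + (if i = j then η i + η (i + 1) else 0) else 0) else 0 := by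
    rw [QQ]
    refine Finset.sum_congr rfl fun i hi => Finset.sum_congr rfl fun j hj => ?_
    rw [Finset.mem_range] at hi hj
    split_ifs with hij h h2
    · -- i = j even
      subst h2
      rw [XX_iota n _ _ (by omega) (by omega) (by omega),
        XX_iota n _ _ (by omega) (by omega) (by omega),
        XX_iota n _ _ (by omega) (by omega) (by omega),
        XX_iota n _ _ (by omega) (by omega) (by omega), hD,
        XX_diag n _ _ (by omega) (by omega), XX_diag n _ _ (by omega) (by omega),
        XX_diag n _ _ (by omega) (by omega), XX_diag n _ _ (by omega) (by omega),
        if_neg (by omega), if_pos (by omega), if_pos (by omega), if_neg (by omega),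
        cast_of_odd (k := i + 1) (by omega), cast_of_odd (k := n - (i + 1)) (by omega),
        cast_of_even (k := i + 2) (by omega), cast_of_even (k := n - i) (by omega),
        show n - (i + 1) = n - 1 - i by omega, show n - (i + 2) = n - 1 - (i + 1) by omega,
        hη _ (by omega), hη _ (by omega)]
      ring
    · rw [XX_iota n _ _ (by omega) (by omega) (by omega),
        XX_iota n _ _ (by omega) (by omega) (by omega),
        XX_iota n _ _ (by omega) (by omega) (by omega),
        XX_iota n _ _ (by omega) (by omega) (by omega), hD,
        XX_diag n _ _ (by omega) (by omega), XX_diag n _ _ (by omega) (by omega),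
        XX_diag n _ _ (by omega) (by omega), XX_diag n _ _ (by omega) (by omega),
        if_neg (by omega), if_neg (by omega), if_neg (by omega), if_neg (by omega),
        cast_of_odd (k := i + 1) (by omega), cast_of_odd (k := n - (j + 1)) (by omega),
        cast_of_even (k := i + 2) (by omega), cast_of_even (k := n - j) (by omega)]
      ring
    · have hz : XX n (i + 1) (j + 1) (iotaT n D) = 0 := by
        rw [XX_iota n _ _ (by omega) (by omega) (by omega), hD, XX_diag n _ _ (by omega) (by omega),
          if_neg (by omega), zero_add]
        rcases Nat.mod_two_eq_zero_or_one i with h3 | h3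
        · rw [cast_of_even (k := n - (j + 1)) (by omega), mul_zero]
        · rw [cast_of_even (k := i + 1) (by omega), zero_mul]
      rw [hz, zero_mul]
    · rfl
  obtain ⟨m, rfl⟩ : ∃ m, n = 2 * m := ⟨n / 2, by omega⟩
  have h2 : QQ (2 * m) (iotaT (2 * m) D) = ∑ a ∈ Finset.range m, ∑ b ∈ Finset.range m,
      ((if a ≤ b then 1 else 0) + (if a = b then η (2 * a) + η (2 * a + 1) else 0)) := by
    rw [h1, sum_even]
    refine Finset.sum_congr rfl fun a _ => ?_
    rw [← Finset.sum_add_distrib, sum_even]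
    refine Finset.sum_congr rfl fun b _ => ?_
    have e1 : ¬ (2 * a + 1) % 2 = 0 := by omega
    have e2 : ¬ (2 * b + 1) % 2 = 0 := by omega
    have e3 : 2 * a ≤ 2 * b ↔ a ≤ b := by omega
    have e4 : 2 * a = 2 * b ↔ a = b := by omega
    simp only [e1, e2, e3, e4, Nat.mul_mod_right, false_and, and_false, and_self, if_true,
      if_false, ite_self, add_zero]
    split_ifs <;> first | (exfalso; omega) | simp
  rw [h2]
  simp only [Finset.sum_add_distrib]
  have h3 : (∑ a ∈ Finset.range m, ∑ b ∈ Finset.range m, if a ≤ b then (1 : ZMod 2) else 0) = 0 := by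
    rw [Finset.sum_comm]
    refine Eq.trans ?_ (sum_tri m (by omega))
    refine Finset.sum_congr rfl fun b hb => ?_
    rw [Finset.mem_range] at hb
    rw [Finset.sum_boole, show Finset.filter (fun x => x ≤ b) (Finset.range m)
      = Finset.range (b + 1) by ext x; simp; omega, Finset.card_range]
    push_cast; rfl
  have h4 : (∑ a ∈ Finset.range m, ∑ b ∈ Finset.range m,
      if a = b then η (2 * a) + η (2 * a + 1) else 0) = 0 := by
    refine Eq.trans ?_ (sum_pal (2 * m) heven η hη)
    rw [sum_even]
    refine Finset.sum_congr rfl fun a ha => ?_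
    rw [Finset.sum_ite_eq, if_pos ha]
  rw [h3, h4, add_zero]

/-- The class of non-fixed matrices with given heights and given value of the form. -/
def Cl (n : ℕ) (hn : 6 ≤ n) (η : ℕ → ZMod 2) (q : ZMod 2) :
    Set (Matrix (Fin n) (Fin n) (ZMod 2)) :=
  {N | UpperTri n N ∧ (∀ k < n, XX n (k + 1) k N = η k) ∧ QQ n N = q ∧ (DD n hn).NF N}

theorem UpperTri_R {n : ℕ} {hn : 6 ≤ n} {M N : Matrix (Fin n) (Fin n) (ZMod 2)}
    (hM : UpperTri n M) (hs : M + N ∈ Submodule.span (ZMod 2) (Set.range (DD n hn).b)) :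
    UpperTri n N := by
  have h := UpperTri_add hM (span_upper hs).1
  rwa [← add_assoc, TData.vadd, zero_add] at h

theorem height_R {n : ℕ} {hn : 6 ≤ n} {M N : Matrix (Fin n) (Fin n) (ZMod 2)}
    (hs : M + N ∈ Submodule.span (ZMod 2) (Set.range (DD n hn).b)) (k : ℕ) :
    XX n (k + 1) k N = XX n (k + 1) k M := by
  have h := (span_upper hs).2 k
  rw [map_add] at h
  generalize XX n (k + 1) k M = a at *
  generalize XX n (k + 1) k N = b at *
  revert a b; decide

theorem Cl_orbit {n : ℕ} {hn : 6 ≤ n} {η : ℕ → ZMod 2} {q : ZMod 2}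
    {M : Matrix (Fin n) (Fin n) (ZMod 2)} (hM : M ∈ Cl n hn η q) :
    {N | InOrbit n M N} = Cl n hn η q := by
  obtain ⟨h1, h2, h3, h4⟩ := hM
  ext N
  simp only [Set.mem_setOf_eq, R_eq n hn]
  constructor
  · intro h
    have hs := (DD n hn).span_R h
    refine ⟨UpperTri_R h1 hs, fun k hk => ?_, ?_, (DD n hn).NF_R h h4⟩
    · rw [height_R hs, h2 k hk]
    · rw [← h3]; exact (DD n hn).Q_R h
  · rintro ⟨g1, g2, g3, g4⟩
    refine (DD n hn).R_iff h4 g4 (mem_span (UpperTri_add h1 g1) fun k hk => ?_) (h3.trans g3.symm)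
    rw [map_add, h2 k hk, g2 k hk, TData.z2add]

theorem Cl_nonempty (n : ℕ) (hn : 6 ≤ n) (η : ℕ → ZMod 2) (q : ZMod 2) :
    (Cl n hn η q).Nonempty := by
  obtain ⟨y, h1, h2, h3⟩ := (DD n hn).exists_NF (Matrix.diagonal (fun i : Fin n => η i)) q
  refine ⟨y, UpperTri_R ?_ h3, fun k hk => ?_, h2, h1⟩
  · intro i j h
    exact Matrix.diagonal_apply_ne _ (fun e => by rw [e] at h; omega)
  · rw [height_R h3, XX_diag n _ _ (by omega) hk, if_pos rfl]

theorem height_iota {n : ℕ} (heven : n % 2 = 0) (M : Matrix (Fin n) (Fin n) (ZMod 2)) (k : ℕ)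
    (hk : k < n) : XX n (k + 1) k (iotaT n M) = XX n (n - 1 - k + 1) (n - 1 - k) M := by
  rw [XX_iota n _ _ (by omega) (by omega) (by omega), show n - 1 - k + 1 = n - k by omega,
    show n - 1 - k = n - (k + 1) by omega]
  rcases Nat.mod_two_eq_zero_or_one k with h3 | h3
  · rw [cast_of_even (k := n - k) (by omega), mul_zero, add_zero]
  · rw [cast_of_even (k := k + 1) (by omega), zero_mul, add_zero]

theorem NF_iota {n : ℕ} {hn : 6 ≤ n} {M : Matrix (Fin n) (Fin n) (ZMod 2)}
    (h : (DD n hn).NF M) : (DD n hn).NF (iotaT n M) := by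
  obtain ⟨⟨⟨i, j⟩, hij, hj⟩, h⟩ := h
  dsimp only at hij hj
  refine ⟨⟨(n - 2 - j, n - 2 - i), by dsimp only; omega, by dsimp only; omega⟩, ?_⟩
  change BB n (iotaT n M) (EE n (n - 2 - j) (n - 2 - i)) = 1
  rw [iota_tr n M i j hij hj]
  exact h

theorem iota_mem_Cl {n : ℕ} {hn : 6 ≤ n} (heven : n % 2 = 0) (h8 : n % 8 = 0 ∨ n % 8 = 6)
    {η : ℕ → ZMod 2} (hη : ∀ k < n, η (n - 1 - k) = η k) {q : ZMod 2}
    {M : Matrix (Fin n) (Fin n) (ZMod 2)} (hM : M ∈ Cl n hn η q) : iotaT n M ∈ Cl n hn η q := by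
  obtain ⟨h1, h2, h3, h4⟩ := hM
  refine ⟨iota_upper n M, fun k hk => ?_, ?_, NF_iota h4⟩
  · rw [height_iota heven M k hk, h2 _ (by omega), hη k hk]
  · rw [← h3]
    set D : Matrix (Fin n) (Fin n) (ZMod 2) := Matrix.diagonal (fun i : Fin n => η i) with hD
    have hDu : UpperTri n D := by
      intro i j h
      exact Matrix.diagonal_apply_ne _ (fun e => by rw [e] at h; omega)
    have hs : D + M ∈ Submodule.span (ZMod 2) (Set.range (DD n hn).b) := by
      refine mem_span (UpperTri_add hDu h1) fun k hk => ?_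
      rw [map_add, h2 k hk, hD, XX_diag n _ _ (by omega) hk, if_pos rfl, TData.z2add]
    have := QQ_iota_span hs D (by rw [hD, QQ_iota_diag n heven h8 η hη, QQ_diag])
    rwa [← add_assoc, TData.vadd, zero_add] at this

theorem Cl_iota {n : ℕ} {hn : 6 ≤ n} (heven : n % 2 = 0) (h8 : n % 8 = 0 ∨ n % 8 = 6)
    {η : ℕ → ZMod 2} (hη : ∀ k < n, η (n - 1 - k) = η k) (q : ZMod 2) :
    iotaT n '' Cl n hn η q = Cl n hn η q := by
  ext N
  constructor
  · rintro ⟨M, hM, rfl⟩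
    exact iota_mem_Cl heven h8 hη hM
  · intro hN
    exact ⟨iotaT n N, iota_mem_Cl heven h8 hη hN, iota_iota hN.1⟩

theorem Cl_of_orbit {n : ℕ} (hn : 6 ≤ n) (heven : n % 2 = 0)
    {M : Matrix (Fin n) (Fin n) (ZMod 2)} (hM : UpperTri n M)
    (hι : iotaT n '' {N | InOrbit n M N} = {N | InOrbit n M N}) :
    (∀ k < n, XX n (n - 1 - k + 1) (n - 1 - k) M = XX n (k + 1) k M) ∧
      M ∈ Cl n hn (fun k => XX n (k + 1) k M) (QQ n M) := by
  have h1 : iotaT n M ∈ {N | InOrbit n M N} := by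
    rw [← hι]; exact ⟨M, Relation.ReflTransGen.refl, rfl⟩
  have h2 : (DD n hn).R M (iotaT n M) := (R_eq n hn _ _).1 h1
  refine ⟨fun k hk => ?_, hM, fun _ _ => rfl, rfl, ?_⟩
  · rw [← height_iota heven M k hk, height_R ((DD n hn).span_R h2)]
  · by_contra hf
    have hfix : ∀ N, (DD n hn).R M N → N = M := by
      intro N h
      induction h with
      | refl => rfl
      | @tail y z _ h ih =>
        subst ih
        obtain ⟨i, rfl⟩ := h
        rcases TData.z2 ((DD n hn).B y ((DD n hn).b i)) with h0 | h0
        · rw [h0, zero_smul, add_zero]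
        · exact absurd ⟨i, h0⟩ hf
    have h3 := hfix _ h2
    have h4 := iota_ent n M 0 (n - 1) (by omega) (by omega)
    rw [h3, show n - 1 - (n - 1) = 0 by omega, show n - 1 - 0 = n - 1 by omega] at h4
    generalize ent n M 0 (n - 1) = a at h4
    revert a; decide

/-- palindromic extension -/
def pal (n : ℕ) (η : Fin (n / 2) → ZMod 2) (k : ℕ) : ZMod 2 :=
  if h : k < n / 2 then η ⟨k, h⟩ else if h : n - 1 - k < n / 2 then η ⟨n - 1 - k, h⟩ else 0

theorem pal_pal (n : ℕ) (heven : n % 2 = 0) (η : Fin (n / 2) → ZMod 2) (k : ℕ) (hk : k < n) :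
    pal n η (n - 1 - k) = pal n η k := by
  simp only [pal]
  by_cases h : k < n / 2
  · rw [dif_neg (by omega), dif_pos (by omega), dif_pos h]
    congr 2; omega
  · rw [dif_pos (by omega), dif_neg h, dif_pos (by omega)]

theorem pal_of (n : ℕ) (heven : n % 2 = 0) (η : ℕ → ZMod 2)
    (hη : ∀ k < n, η (n - 1 - k) = η k) (k : ℕ) (hk : k < n) :
    pal n (fun i : Fin (n / 2) => η i) k = η k := by
  simp only [pal]
  by_cases h : k < n / 2
  · rw [dif_pos h]
  · rw [dif_neg h, dif_pos (by omega), hη k hk]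

theorem Cl_congr {n : ℕ} {hn : 6 ≤ n} {η ζ : ℕ → ZMod 2} (h : ∀ k < n, η k = ζ k) (q : ZMod 2) :
    Cl n hn η q = Cl n hn ζ q := by
  ext N
  simp only [Cl, Set.mem_setOf_eq]
  have : (∀ k < n, XX n (k + 1) k N = η k) ↔ (∀ k < n, XX n (k + 1) k N = ζ k) :=
    forall₂_congr fun k hk => by rw [h k hk]
  rw [this]

end Concrete

theorem count_iota_invariant_orbits (n : ℕ) (hn : 6 ≤ n) (heven : n % 2 = 0)
    (h8 : n % 8 = 0 ∨ n % 8 = 6) :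
    Set.ncard {O : Set (Matrix (Fin n) (Fin n) (ZMod 2)) |
        (∃ M, UpperTri n M ∧ O = {N | InOrbit n M N}) ∧ iotaT n '' O = O}
      = 2 ^ (n / 2 + 1) := by
  have hset : {O : Set (Matrix (Fin n) (Fin n) (ZMod 2)) |
        (∃ M, UpperTri n M ∧ O = {N | InOrbit n M N}) ∧ iotaT n '' O = O}
      = (fun p : (Fin (n / 2) → ZMod 2) × ZMod 2 => Cl n hn (pal n p.1) p.2) '' Set.univ := by
    ext O
    simp only [Set.mem_setOf_eq, Set.image_univ, Set.mem_range, Prod.exists]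
    constructor
    · rintro ⟨⟨M, hM, rfl⟩, hι⟩
      obtain ⟨h1, h2⟩ := Cl_of_orbit hn heven hM hι
      refine ⟨fun i => XX n (i + 1) i M, QQ n M, ?_⟩
      rw [Cl_orbit h2]
      exact Cl_congr (pal_of n heven (fun k => XX n (k + 1) k M) h1) _
    · rintro ⟨η, q, rfl⟩
      obtain ⟨M, hM⟩ := Cl_nonempty n hn (pal n η) q
      exact ⟨⟨M, hM.1, (Cl_orbit hM).symm⟩, Cl_iota heven h8 (pal_pal n heven η) q⟩
  have hinj : Function.Injective
      (fun p : (Fin (n / 2) → ZMod 2) × ZMod 2 => Cl n hn (pal n p.1) p.2) := by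
    rintro ⟨η, q⟩ ⟨ζ, q'⟩ h
    dsimp only at h
    obtain ⟨M, hM⟩ := Cl_nonempty n hn (pal n η) q
    have hM' := hM
    rw [h] at hM'
    refine Prod.ext ?_ (hM.2.2.1.symm.trans hM'.2.2.1)
    ext i
    have hi := i.2
    have := (hM.2.1 i (by omega)).symm.trans (hM'.2.1 i (by omega))
    simpa [pal] using this
  rw [hset, Set.ncard_image_of_injective _ hinj, Set.ncard_univ, Nat.card_prod,
    Nat.card_eq_fintype_card, Nat.card_eq_fintype_card, Fintype.card_fun, ZMod.card,
    Fintype.card_fin, pow_succ]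
end

section
/- Let d ≥ 7 be an odd integer with d ≡ 1 or 7 (mod 8). Then the number of connected components C of S_d with the property that {u⁻¹ : u ∈ C} = C is exactly 2^{(d+1)/2}. -/
/-- `u` is upper triangular with all diagonal entries equal to `1`. -/
def IsUniUpper (d : ℕ) (u : Matrix (Fin d) (Fin d) ℝ) : Prop :=
  (∀ i j : Fin d, (j : ℕ) < (i : ℕ) → u i j = 0) ∧ (∀ i : Fin d, u i i = 1)

/-- `p_k(u)`: the determinant of the upper-right `k × k` block of `u`
(rows `1,…,k` and columns `d−k+1,…,d`, in one-based indexing). -/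
noncomputable def cornerMinor (d k : ℕ) (u : Matrix (Fin d) (Fin d) ℝ) : ℝ :=
  Matrix.det (Matrix.of fun i j : Fin k =>
    if h : (i : ℕ) < d ∧ d - k + (j : ℕ) < d then u ⟨i, h.1⟩ ⟨d - k + j, h.2⟩ else 0)

/-- `S_d = {u ∈ U_d : p_k(u) ≠ 0 for all 1 ≤ k ≤ d−1}`. -/
def Sset (d : ℕ) : Set (Matrix (Fin d) (Fin d) ℝ) :=
  {u | IsUniUpper d u ∧ ∀ k : ℕ, 1 ≤ k → k ≤ d - 1 → cornerMinor d k u ≠ 0}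



namespace FlipGame

/-- neighbour sums in the graph `E6` -/
def nb6 (c : Fin 6 → ZMod 2) : Fin 6 → ZMod 2 :=
  ![c 1 + c 2 + c 4, c 0, c 0 + c 3, c 2, c 0 + c 5, c 4]

/-- the quadratic form of `E6` -/
def q6 (c : Fin 6 → ZMod 2) : ZMod 2 :=
  c 0 + c 1 + c 2 + c 3 + c 4 + c 5 + c 0 * c 1 + c 0 * c 2 + c 2 * c 3 + c 0 * c 4 + c 4 * c 5

def dot6 (c w : Fin 6 → ZMod 2) : ZMod 2 :=
  c 0 * w 0 + c 1 * w 1 + c 2 * w 2 + c 3 * w 3 + c 4 * w 4 + c 5 * w 5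

def rk6 (c : Fin 6 → ZMod 2) : ℕ :=
  [0, 0, 2, 1, 2, 1, 0, 2, 4, 4, 2, 3, 3, 2, 1, 3, 2, 1, 16, 2, 8, 2, 4, 3, 6, 5, 6, 4, 7, 3, 5, 4,
    4, 12, 14, 13, 10, 11, 6, 12, 8, 10, 8, 9, 9, 10, 7, 11, 3, 2, 15, 3, 9, 3, 5, 4, 7, 6, 7, 5, 8,
    4, 6, 5].getD ((c 0).val + 2 * (c 1).val + 4 * (c 2).val + 8 * (c 3).val + 16 * (c 4).val
      + 32 * (c 5).val) 0

def root6 (q : ZMod 2) : Fin 6 → ZMod 2 :=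
  if q = 1 then ![1, 0, 0, 0, 0, 0] else ![0, 1, 1, 0, 0, 0]

lemma vec6 (c : Fin 6 → ZMod 2) : c = ![c 0, c 1, c 2, c 3, c 4, c 5] := by
  ext i; fin_cases i <;> rfl

def iszero6 (c : Fin 6 → ZMod 2) : Prop :=
  c 0 = 0 ∧ c 1 = 0 ∧ c 2 = 0 ∧ c 3 = 0 ∧ c 4 = 0 ∧ c 5 = 0

def iseq6 (c w : Fin 6 → ZMod 2) : Prop :=
  c 0 = w 0 ∧ c 1 = w 1 ∧ c 2 = w 2 ∧ c 3 = w 3 ∧ c 4 = w 4 ∧ c 5 = w 5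

instance (c : Fin 6 → ZMod 2) : Decidable (iszero6 c) := by unfold iszero6; infer_instance
instance (c w : Fin 6 → ZMod 2) : Decidable (iseq6 c w) := by unfold iseq6; infer_instance

lemma iszero6_iff (c) : iszero6 c ↔ c = 0 := by
  constructor
  · rintro ⟨h0, h1, h2, h3, h4, h5⟩
    ext i; fin_cases i <;> simp_all
  · rintro rfl; simp [iszero6]

lemma iseq6_iff (c w) : iseq6 c w ↔ c = w := by
  constructor
  · rintro ⟨h0, h1, h2, h3, h4, h5⟩
    ext i; fin_cases i <;> simp_all
  · rintro rfl; simp [iseq6]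

lemma descent6_aux : ∀ c0 c1 c2 c3 c4 c5 : ZMod 2, ¬ iszero6 ![c0, c1, c2, c3, c4, c5] →
    ¬ iseq6 ![c0, c1, c2, c3, c4, c5] (root6 (q6 ![c0, c1, c2, c3, c4, c5])) →
    ∃ a : Fin 6, nb6 ![c0, c1, c2, c3, c4, c5] a = 1 ∧
      rk6 (fun i => ![c0, c1, c2, c3, c4, c5] i + if i = a then 1 else 0)
        < rk6 ![c0, c1, c2, c3, c4, c5] ∧
      ¬ iszero6 (fun i => ![c0, c1, c2, c3, c4, c5] i + if i = a then 1 else 0) ∧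
      q6 (fun i => ![c0, c1, c2, c3, c4, c5] i + if i = a then 1 else 0) =
        q6 ![c0, c1, c2, c3, c4, c5] := by
  decide +kernel

lemma descent6 (c : Fin 6 → ZMod 2) (h : c ≠ 0) (h' : c ≠ root6 (q6 c)) :
    ∃ a : Fin 6, nb6 c a = 1 ∧
      rk6 (fun i => c i + if i = a then 1 else 0) < rk6 c ∧
      (fun i => c i + if i = a then 1 else 0) ≠ 0 ∧
      q6 (fun i => c i + if i = a then 1 else 0) = q6 c := by
  have := descent6_aux (c 0) (c 1) (c 2) (c 3) (c 4) (c 5)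
  rw [← vec6 c, iszero6_iff, iseq6_iff] at this
  obtain ⟨a, h1, h2, h3, h4⟩ := this h h'
  rw [iszero6_iff] at h3
  exact ⟨a, h1, h2, h3, h4⟩

lemma inv6_aux : ∀ c0 c1 c2 c3 c4 c5 : ZMod 2,
    iseq6 (nb6 ![c1, c0 + c3 + c5, c3, c2 + c1, c5, c4 + c1]) ![c0, c1, c2, c3, c4, c5] := by
  decide +kernel

lemma inv6 (w : Fin 6 → ZMod 2) : ∃ c, nb6 c = w := by
  refine ⟨_, ((iseq6_iff _ _).1 (inv6_aux (w 0) (w 1) (w 2) (w 3) (w 4) (w 5))).trans (vec6 w).symm⟩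

set_option synthInstance.maxHeartbeats 400000 in
set_option synthInstance.maxSize 100000 in
set_option maxRecDepth 10000 in
lemma ex6_aux : ∀ e0 e1 e2 e3 e4 e5 : ZMod 2, ∀ p q : ZMod 2,
    (iszero6 ![e0, e1, e2, e3, e4, e5] → p = 0) →
    ∃ z0 z1 z2 z3 z4 z5 : ZMod 2, dot6 ![z0, z1, z2, z3, z4, z5] (nb6 ![e0, e1, e2, e3, e4, e5]) = p ∧
      q6 ![z0, z1, z2, z3, z4, z5] = q ∧ ¬ iszero6 ![z0, z1, z2, z3, z4, z5] ∧
      ¬ iseq6 ![z0, z1, z2, z3, z4, z5] ![e0, e1, e2, e3, e4, e5] := by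
  decide +kernel

lemma ex6 (e : Fin 6 → ZMod 2) (p q : ZMod 2) (h : e = 0 → p = 0) :
    ∃ z : Fin 6 → ZMod 2, dot6 z (nb6 e) = p ∧ q6 z = q ∧ z ≠ 0 ∧ z ≠ e := by
  have := ex6_aux (e 0) (e 1) (e 2) (e 3) (e 4) (e 5) p q
  rw [← vec6 e, iszero6_iff] at this
  obtain ⟨z0, z1, z2, z3, z4, z5, h1, h2, h3, h4⟩ := this h
  exact ⟨_, h1, h2, by rwa [iszero6_iff] at h3, by rwa [iseq6_iff] at h4⟩

end FlipGame



namespace FlipGame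

/-- A quadratic form with a family of distinguished vectors. -/
structure FlipData (E : Type*) [AddCommGroup E] [Module (ZMod 2) E] (ι : Type*) where
  B : E →ₗ[ZMod 2] E →ₗ[ZMod 2] ZMod 2
  Q : E → ZMod 2
  e : ι → E
  Mt : Set ι
  symm : ∀ x y, B x y = B y x
  Q_add : ∀ x y, Q (x + y) = Q x + Q y + B x y
  Q_e : ∀ i ∈ Mt, Q (e i) = 1

variable {E : Type*} [AddCommGroup E] [Module (ZMod 2) E] {ι : Type*} (F : FlipData E ι)

lemma z2_cases (a : ZMod 2) : a = 0 ∨ a = 1 := by revert a; decide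
lemma z2_add_self (a : ZMod 2) : a + a = 0 := by revert a; decide
lemma z2_ne_one {a : ZMod 2} (h : ¬ a = 1) : a = 0 := by revert a; decide
lemma add_self2 (x : E) : x + x = 0 := by
  have : (2 : ZMod 2) • x = 0 := by
    have : (2 : ZMod 2) = 0 := by decide
    rw [this, zero_smul]
  rwa [two_smul] at this
lemma sub_eq_add2 (x y : E) : x - y = x + y := by
  rw [sub_eq_iff_eq_add, add_assoc, add_self2, add_zero]

namespace FlipData

lemma Q_zero : F.Q 0 = 0 := by
  have := F.Q_add 0 0
  simpa using this

lemma B_self (x : E) : F.B x x = 0 := by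
  have := F.Q_add x x
  rw [add_self2, Q_zero, z2_add_self, zero_add] at this
  exact this.symm

def Step (M : Set ι) (s t : E) : Prop := ∃ i ∈ M, F.B s (F.e i) = 1 ∧ t = s + F.e i

def Reach (M : Set ι) : E → E → Prop := Relation.ReflTransGen (F.Step M)

def NF (M : Set ι) (s : E) : Prop := ∃ i ∈ M, F.B s (F.e i) = 1

def P (M : Set ι) : Prop := ∀ s t, t + s ∈ Submodule.span (ZMod 2) (F.e '' M) → F.Q s = F.Q t →
  F.NF M s → F.NF M t → F.Reach M s t

lemma Step.symm {M : Set ι} {s t : E} (h : F.Step M s t) : F.Step M t s := by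
  obtain ⟨i, hi, h1, rfl⟩ := h
  refine ⟨i, hi, ?_, ?_⟩
  · rw [map_add, LinearMap.add_apply, B_self, h1, add_zero]
  · rw [add_assoc, add_self2, add_zero]

lemma Reach.symm {M : Set ι} {s t : E} (h : F.Reach M s t) : F.Reach M t s := by
  induction h with
  | refl => exact Relation.ReflTransGen.refl
  | tail _ h ih => exact Relation.ReflTransGen.head (Step.symm F h) ih

lemma Reach.mono {M N : Set ι} (hMN : M ⊆ N) {s t : E} (h : F.Reach M s t) : F.Reach N s t := by
  induction h with
  | refl => exact Relation.ReflTransGen.refl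
  | tail _ h ih =>
    obtain ⟨i, hi, h⟩ := h
    exact Relation.ReflTransGen.tail ih ⟨i, hMN hi, h⟩

lemma Reach.Q_eq {M : Set ι} (hM : M ⊆ F.Mt) {s t : E} (h : F.Reach M s t) : F.Q s = F.Q t := by
  induction h with
  | refl => rfl
  | tail _ h ih =>
    obtain ⟨i, hi, h1, rfl⟩ := h
    rw [F.Q_add, F.Q_e i (hM hi), h1, ih, add_assoc, z2_add_self, add_zero]

lemma Reach.NF {M : Set ι} {s t : E} (h : F.Reach M s t) (hs : F.NF M s) : F.NF M t := by
  induction h with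
  | refl => exact hs
  | tail _ h ih =>
    obtain ⟨i, hi, h1, -⟩ := Step.symm F h
    exact ⟨i, hi, h1⟩

lemma Reach.eq_of_not_NF {M : Set ι} {s t : E} (h : F.Reach M s t) (hs : ¬ F.NF M s) : s = t := by
  induction h with
  | refl => rfl
  | tail _ h ih =>
    obtain ⟨i, hi, h1, -⟩ := h
    subst ih
    exact absurd ⟨i, hi, h1⟩ hs

/-- a copy of `E6` inside the graph -/
structure Has6 (g : Fin 6 → ι) : Prop where
  Mt : ∀ a, g a ∈ F.Mt
  adj : ∀ a b : Fin 6, F.B (F.e (g a)) (F.e (g b)) = nb6 (Pi.single a 1) b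

variable {F} {g : Fin 6 → ι}

variable (F g) in
def comb (c : Fin 6 → ZMod 2) : E := ∑ a, c a • F.e (g a)

lemma comb_add (c w : Fin 6 → ZMod 2) : F.comb g (c + w) = F.comb g c + F.comb g w := by
  simp [comb, add_smul, Finset.sum_add_distrib]

lemma comb_single (a : Fin 6) : F.comb g (fun i => if i = a then 1 else 0) = F.e (g a) := by
  simp [comb]

lemma B_comb (x : E) (c : Fin 6 → ZMod 2) :
    F.B x (F.comb g c) = dot6 c (fun a => F.B x (F.e (g a))) := by
  simp [comb, dot6, Fin.sum_univ_six]

lemma B_comb_e (h : F.Has6 g) (c : Fin 6 → ZMod 2) (b : Fin 6) :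
    F.B (F.comb g c) (F.e (g b)) = nb6 c b := by
  rw [F.symm, B_comb]
  simp only [dot6, F.symm (F.e (g b)), h.adj]
  fin_cases b <;> simp [nb6, Pi.single_apply] <;> ring

lemma Q_smul (c : ZMod 2) (x : E) : F.Q (c • x) = c * F.Q x := by
  rcases z2_cases c with rfl | rfl
  · simp [Q_zero]
  · simp

lemma Q_comb (h : F.Has6 g) (c : Fin 6 → ZMod 2) : F.Q (F.comb g c) = q6 c := by
  simp only [comb, Fin.sum_univ_six, F.Q_add, Q_smul, F.Q_e _ (h.Mt _), map_add, map_smul,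
    LinearMap.add_apply, LinearMap.smul_apply, h.adj, q6]
  simp [nb6, Pi.single_apply]
  ring

lemma comb_mem {M : Set ι} (hg : ∀ a, g a ∈ M) (c : Fin 6 → ZMod 2) :
    F.comb g c ∈ Submodule.span (ZMod 2) (F.e '' M) :=
  Submodule.sum_mem _ fun a _ => Submodule.smul_mem _ _ (Submodule.subset_span ⟨_, hg a, rfl⟩)

/-- Every vector is congruent, modulo the span of the `E6`, to one orthogonal to the `E6`. -/
lemma exists_rep (h : F.Has6 g) (s : E) : ∃ c, ∀ a, F.B s (F.e (g a)) = nb6 c a := by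
  obtain ⟨c, hc⟩ := inv6 (fun a => F.B s (F.e (g a)))
  exact ⟨c, fun a => by rw [hc]⟩

lemma reach_root (h : F.Has6 g) {M : Set ι} (hg : ∀ a, g a ∈ M) (r : E)
    (hr : ∀ a, F.B r (F.e (g a)) = 0) (n : ℕ) :
    ∀ c : Fin 6 → ZMod 2, rk6 c = n → c ≠ 0 →
      F.Reach M (r + F.comb g c) (r + F.comb g (root6 (q6 c))) := by
  induction n using Nat.strong_induction_on with
  | _ n ih =>
    intro c hn hc
    by_cases h' : c = root6 (q6 c)
    · rw [← h']; exact Relation.ReflTransGen.refl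
    · obtain ⟨a, h1, h2, h3, h4⟩ := descent6 c hc h'
      have := ih _ (hn ▸ h2) _ rfl h3
      rw [h4] at this
      refine Relation.ReflTransGen.head ⟨g a, hg a, ?_, ?_⟩ this
      · rw [map_add, LinearMap.add_apply, hr, zero_add, B_comb_e h, h1]
      · rw [show (fun i => c i + if i = a then 1 else 0) =
          c + (fun i => if i = a then 1 else 0) from rfl, comb_add, comb_single, add_assoc]

lemma nb6_add (c w : Fin 6 → ZMod 2) : nb6 (c + w) = nb6 c + nb6 w := by
  ext a; fin_cases a <;> simp [nb6] <;> ring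

lemma nb6_inj {c w : Fin 6 → ZMod 2} (h : nb6 c = nb6 w) : c = w := by
  have h0 := congrFun h 0
  have h1 := congrFun h 1
  have h2 := congrFun h 2
  have h3 := congrFun h 3
  have h4 := congrFun h 4
  have h5 := congrFun h 5
  simp [nb6] at h0 h1 h2 h3 h4 h5
  ext a; fin_cases a <;> simp_all

lemma mem_span6 {x : E} (hx : x ∈ Submodule.span (ZMod 2) (F.e '' Set.range g)) :
    ∃ c, x = F.comb g c := by
  rw [← Set.range_comp, Submodule.mem_span_range_iff_exists_fun] at hx
  obtain ⟨c, hc⟩ := hx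
  exact ⟨c, hc.symm⟩

lemma P_base (h : F.Has6 g) : F.P (Set.range g) := by
  intro s t hst hQ hs ht
  obtain ⟨w, hw⟩ := mem_span6 hst
  obtain ⟨c, hc⟩ := exists_rep h s
  have hg : ∀ a, g a ∈ Set.range g := fun a => ⟨a, rfl⟩
  set r := s + F.comb g c with hr_def
  have hr : ∀ a, F.B r (F.e (g a)) = 0 := fun a => by
    rw [hr_def, map_add, LinearMap.add_apply, hc, B_comb_e h, z2_add_self]
  have hs' : s = r + F.comb g c := by rw [hr_def, add_assoc, add_self2, add_zero]
  have ht' : t = r + F.comb g (w + c) := by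
    rw [comb_add, ← hw, add_comm (t + s), ← add_assoc, ← hs', add_comm t, ← add_assoc, add_self2,
      zero_add]
  have hrc : ∀ c, F.B r (F.comb g c) = 0 := fun c => by
    rw [B_comb]; simp [hr, dot6]
  have hne : ∀ c, F.NF (Set.range g) (r + F.comb g c) → c ≠ 0 := by
    rintro c ⟨_, ⟨a, rfl⟩, h1⟩ rfl
    rw [map_add, LinearMap.add_apply, hr, zero_add, B_comb_e h] at h1
    fin_cases a <;> simp [nb6] at h1
  clear_value r
  have hq : q6 c = q6 (w + c) := by
    rw [hs', ht', F.Q_add, F.Q_add, hrc, hrc, Q_comb h, Q_comb h] at hQ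
    simpa using hQ
  rw [hs'] at hs ⊢
  rw [ht'] at ht ⊢
  have h1 := reach_root h hg r hr _ c rfl (hne _ hs)
  have h2 := reach_root h hg r hr _ (w + c) rfl (hne _ ht)
  rw [← hq] at h2
  exact h1.trans (Reach.symm F h2)

/-- existence of a good vector -/
lemma exists_good (h : F.Has6 g) {M : Set ι} (hM : ∀ a, g a ∈ M) (s e0 l0 : E) (q : ZMod 2) :
    ∃ y ∈ Submodule.span (ZMod 2) (F.e '' M), F.B y e0 = 0 ∧ F.Q (s + l0 + y) = q ∧
      F.NF M (s + l0 + y) ∧ F.NF M (s + l0 + y + e0) := by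
  obtain ⟨al, hal⟩ := exists_rep h (s + l0)
  obtain ⟨ep, hep⟩ := exists_rep h e0
  have hd : ∀ y, F.B (F.comb g y) e0 = dot6 y (nb6 ep) := fun y => by
    rw [F.symm, B_comb]
    congr 1
    ext a
    exact hep a
  have hdadd : ∀ y z w, dot6 (y + z) w = dot6 y w + dot6 z w := fun y z w => by
    simp [dot6]; ring
  obtain ⟨z, h1, h2, h3, h4⟩ := ex6 ep (dot6 al (nb6 ep)) (q + F.Q (s + l0 + F.comb g al))
    (by rintro rfl; simp [dot6, nb6])
  have key : ∀ a, F.B (s + l0 + F.comb g (z + al)) (F.e (g a)) = nb6 z a := fun a => by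
    rw [map_add, LinearMap.add_apply, hal, B_comb_e h, nb6_add, Pi.add_apply, add_left_comm,
      z2_add_self, add_zero]
  have hz : ∀ c : Fin 6 → ZMod 2, c ≠ 0 → ∃ a, nb6 c a = 1 := by
    intro c hc
    by_contra hcon
    push Not at hcon
    refine hc (nb6_inj ?_)
    ext a
    rw [z2_ne_one (hcon a)]
    fin_cases a <;> simp [nb6]
  have hal2 : ∀ y, F.B (s + l0 + F.comb g al) (F.comb g y) = 0 := fun y => by
    rw [B_comb]
    have : (fun a => F.B (s + l0 + F.comb g al) (F.e (g a))) = 0 := by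
      ext a
      rw [map_add, LinearMap.add_apply, hal, B_comb_e h, z2_add_self]; rfl
    rw [this]; simp [dot6]
  refine ⟨F.comb g (z + al), comb_mem hM _, ?_, ?_, ?_, ?_⟩
  · rw [hd, hdadd, h1, z2_add_self]
  · rw [add_comm z, comb_add, ← add_assoc, F.Q_add, hal2, add_zero, Q_comb h, h2, add_left_comm,
      z2_add_self, add_zero]
  · obtain ⟨a, ha⟩ := hz z h3
    exact ⟨g a, hM a, by rw [key, ha]⟩
  · obtain ⟨a, ha⟩ := hz (z + ep) (fun h => h4 (by
      rw [← sub_eq_add2, sub_eq_zero] at h; exact h))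
    refine ⟨g a, hM a, ?_⟩
    rw [map_add, LinearMap.add_apply, key, hep, ← Pi.add_apply, ← nb6_add, ha]

lemma P_step (h : F.Has6 g) {M : Set ι} (hM : ∀ a, g a ∈ M) (hmut : M ⊆ F.Mt)
    (hP : F.P M) (i0 : ι) (hi0 : i0 ∈ F.Mt) (hadj : ∃ i ∈ M, F.B (F.e i0) (F.e i) = 1) :
    F.P (insert i0 M) := by
  have hsub : M ⊆ insert i0 M := Set.subset_insert _ _
  have hmut' : insert i0 M ⊆ F.Mt := Set.insert_subset hi0 hmut
  obtain ⟨i1, hi1, hi1'⟩ := hadj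
  -- first: make it non-fixed for `M`
  have stepA : ∀ s, F.NF (insert i0 M) s → ∃ s', F.Reach (insert i0 M) s s' ∧ F.NF M s' := by
    rintro s ⟨i, hi, h1⟩
    by_cases hs : F.NF M s
    · exact ⟨s, Relation.ReflTransGen.refl, hs⟩
    · rcases hi with rfl | hi
      · refine ⟨s + F.e i, Relation.ReflTransGen.single ⟨i, Or.inl rfl, h1, rfl⟩, i1, hi1, ?_⟩
        rw [map_add, LinearMap.add_apply, hi1']
        have : F.B s (F.e i1) = 0 := z2_ne_one fun h => hs ⟨i1, hi1, h⟩
        rw [this, zero_add]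
      · exact absurd ⟨i, hi, h1⟩ hs
  have hspan_reach : ∀ {N : Set ι} {s t}, F.Reach N s t →
      t + s ∈ Submodule.span (ZMod 2) (F.e '' N) := by
    intro N s t hst
    induction hst with
    | refl => rw [add_self2]; exact Submodule.zero_mem _
    | tail _ hh ih =>
      obtain ⟨i, hi, -, rfl⟩ := hh
      rw [add_right_comm]
      exact Submodule.add_mem _ ih (Submodule.subset_span ⟨i, hi, rfl⟩)
  intro s t hst hQ hs ht
  obtain ⟨s', hss', hs'⟩ := stepA s hs
  obtain ⟨t', htt', ht'⟩ := stepA t ht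
  have hQ' : F.Q s' = F.Q t' := by
    rw [← Reach.Q_eq F hmut' hss', ← Reach.Q_eq F hmut' htt', hQ]
  have hst' : t' + s' ∈ Submodule.span (ZMod 2) (F.e '' insert i0 M) := by
    have := Submodule.add_mem _ (Submodule.add_mem _ (hspan_reach hss') (hspan_reach htt')) hst
    have e : s' + s + (t' + t) + (t + s) = t' + s' := by
      calc _ = t' + s' + (s + s) + (t + t) := by abel
        _ = _ := by rw [add_self2, add_self2, add_zero, add_zero]
    rwa [e] at this
  suffices hh : F.Reach (insert i0 M) s' t' from
    (hss'.trans hh).trans (Reach.symm F htt')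
  rw [Set.image_insert_eq, Submodule.mem_span_insert] at hst'
  obtain ⟨c, l, hl, hcl⟩ := hst'
  rcases z2_cases c with rfl | rfl
  · rw [zero_smul, zero_add] at hcl
    exact Reach.mono F hsub (hP s' t' (hcl ▸ hl) hQ' hs' ht')
  · rw [one_smul] at hcl
    -- choose `l0`
    obtain ⟨l0, hl0, hl0'⟩ : ∃ l0 ∈ Submodule.span (ZMod 2) (F.e '' M),
        F.B (s' + l0) (F.e i0) = 1 := by
      rcases z2_cases (F.B s' (F.e i0)) with h0 | h0
      · refine ⟨F.e i1, Submodule.subset_span ⟨i1, hi1, rfl⟩, ?_⟩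
        rw [map_add, LinearMap.add_apply, h0, F.symm, hi1', zero_add]
      · exact ⟨0, Submodule.zero_mem _, by rwa [add_zero]⟩
    obtain ⟨y, hy, hy1, hy2, hy3, hy4⟩ := exists_good h hM s' (F.e i0) l0 (F.Q s')
    have r1 : F.Reach M s' (s' + l0 + y) := by
      refine hP _ _ ?_ hy2.symm hs' hy3
      have : s' + l0 + y + s' = l0 + y := by
        calc _ = (s' + s') + (l0 + y) := by abel
          _ = _ := by rw [add_self2, zero_add]
      rw [this]
      exact Submodule.add_mem _ hl0 hy
    have st : F.Step (insert i0 M) (s' + l0 + y) (s' + l0 + y + F.e i0) :=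
      ⟨i0, Or.inl rfl, by rw [map_add, LinearMap.add_apply, hl0', hy1, add_zero], rfl⟩
    have r2 : F.Reach M (s' + l0 + y + F.e i0) t' := by
      refine hP _ _ ?_ ?_ hy4 ht'
      · have : t' + (s' + l0 + y + F.e i0) = l + (l0 + y) := by
          calc _ = (t' + s') + (l0 + y + F.e i0) := by abel
            _ = (F.e i0 + F.e i0) + (l + (l0 + y)) := by rw [hcl]; abel
            _ = _ := by rw [add_self2, zero_add]
        rw [this]
        exact Submodule.add_mem _ hl (Submodule.add_mem _ hl0 hy)
      · rw [← hQ', ← hy2]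
        exact (Reach.Q_eq F hmut' (Relation.ReflTransGen.single st)).symm
    exact ((Reach.mono F hsub r1).trans (Relation.ReflTransGen.single st)).trans
      (Reach.mono F hsub r2)

end FlipData
end FlipGame


namespace FlipGame

abbrev EE := ℕ × ℕ → ZMod 2

/-- sum over the six neighbours in the triangular grid -/
def nbsum (s : EE) (p : ℕ × ℕ) : ZMod 2 :=
  s (p.1 + 1, p.2) + s (p.1, p.2 - 1) + s (p.1 - 1, p.2 + 1) + s (p.1, p.2 + 1) + s (p.1 - 1, p.2)
    + s (p.1 + 1, p.2 - 1)

def gQ (d : ℕ) (s : EE) : ZMod 2 :=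
  ∑ k ∈ Finset.range (d + 1), ∑ j ∈ Finset.range (d + 1),
    (s (k, j) + s (k, j) * s (k + 1, j) + s (k, j) * s (k, j + 1) + s (k + 1, j) * s (k, j + 1))

def gB (d : ℕ) : EE →ₗ[ZMod 2] EE →ₗ[ZMod 2] ZMod 2 :=
  LinearMap.mk₂ (ZMod 2) (fun s t => ∑ k ∈ Finset.range (d + 1), ∑ j ∈ Finset.range (d + 1),
    (s (k, j) * t (k + 1, j) + t (k, j) * s (k + 1, j) + s (k, j) * t (k, j + 1)
      + t (k, j) * s (k, j + 1) + s (k + 1, j) * t (k, j + 1) + t (k + 1, j) * s (k, j + 1)))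
  (by intro a b c; simp only [← Finset.sum_add_distrib, Pi.add_apply]
      refine Finset.sum_congr rfl fun _ _ => Finset.sum_congr rfl fun _ _ => by ring)
  (by intro a b c; simp only [Finset.mul_sum, Pi.smul_apply, smul_eq_mul]
      refine Finset.sum_congr rfl fun _ _ => Finset.sum_congr rfl fun _ _ => by ring)
  (by intro a b c; simp only [← Finset.sum_add_distrib, Pi.add_apply]
      refine Finset.sum_congr rfl fun _ _ => Finset.sum_congr rfl fun _ _ => by ring)
  (by intro a b c; simp only [Finset.mul_sum, Pi.smul_apply, smul_eq_mul]
      refine Finset.sum_congr rfl fun _ _ => Finset.sum_congr rfl fun _ _ => by ring)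

lemma gB_apply (d : ℕ) (s t : EE) : gB d s t =
  ∑ k ∈ Finset.range (d + 1), ∑ j ∈ Finset.range (d + 1),
    (s (k, j) * t (k + 1, j) + t (k, j) * s (k + 1, j) + s (k, j) * t (k, j + 1)
      + t (k, j) * s (k, j + 1) + s (k + 1, j) * t (k, j + 1) + t (k + 1, j) * s (k, j + 1)) := rfl

lemma gB_single (d : ℕ) (s : EE) (p : ℕ × ℕ) (h1 : 1 ≤ p.1) (h2 : 1 ≤ p.2) (h3 : p.1 ≤ d)
    (h4 : p.2 ≤ d) : gB d s (Pi.single p 1) = nbsum s p := by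
  obtain ⟨a, b⟩ := p
  obtain ⟨a, rfl⟩ : ∃ a', a = a' + 1 := ⟨a - 1, by simp at h1; omega⟩
  obtain ⟨b, rfl⟩ : ∃ a', b = a' + 1 := ⟨b - 1, by simp at h2; omega⟩
  simp only at h3 h4
  rw [gB_apply]
  simp only [Finset.sum_add_distrib, Pi.single_apply, Prod.mk.injEq, ite_and, mul_ite, mul_one,
    mul_zero, ite_mul, one_mul, zero_mul, Nat.add_right_cancel_iff]
  have ha : a < d + 1 := by omega
  have hb : b < d + 1 := by omega
  simp [Finset.sum_ite_eq', nbsum, ha, hb, h3, h4, Nat.lt_succ_iff]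
  ring

/-- the mutable vertices -/
def mutS (d : ℕ) : Set (ℕ × ℕ) := {p | 1 ≤ p.1 ∧ 1 ≤ p.2 ∧ p.1 + p.2 < d}

lemma gQ_single (d : ℕ) (p : ℕ × ℕ) (h3 : p.1 ≤ d) (h4 : p.2 ≤ d) :
    gQ d (Pi.single p 1) = 1 := by
  obtain ⟨a, b⟩ := p
  simp only at h3 h4
  have : ∀ k j, (Pi.single (a, b) 1 : EE) (k, j) + (Pi.single (a, b) 1 : EE) (k, j) *
      (Pi.single (a, b) 1 : EE) (k + 1, j) + (Pi.single (a, b) 1 : EE) (k, j) *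
      (Pi.single (a, b) 1 : EE) (k, j + 1) + (Pi.single (a, b) 1 : EE) (k + 1, j) *
      (Pi.single (a, b) 1 : EE) (k, j + 1) = if k = a then (if j = b then 1 else 0) else 0 := by
    intro k j
    simp only [Pi.single_apply, Prod.mk.injEq]
    split_ifs <;> first | omega | simp
  simp only [gQ, this]
  simp [Finset.sum_ite_eq', h3, h4, Nat.lt_succ_iff]

def gF (d : ℕ) : FlipData EE (ℕ × ℕ) where
  B := gB d
  Q := gQ d
  e p := Pi.single p 1
  Mt := mutS d
  symm := by
    intro s t
    rw [gB_apply, gB_apply]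
    refine Finset.sum_congr rfl fun _ _ => Finset.sum_congr rfl fun _ _ => by ring
  Q_add := by
    intro s t
    rw [gB_apply, gQ, gQ, gQ]
    simp only [← Finset.sum_add_distrib, Pi.add_apply]
    refine Finset.sum_congr rfl fun _ _ => Finset.sum_congr rfl fun _ _ => by ring
  Q_e := by
    rintro p ⟨h1, h2, h3⟩
    exact gQ_single d p (by omega) (by omega)

lemma gF_B (d : ℕ) (s : EE) (p : ℕ × ℕ) (hp : p ∈ mutS d) :
    (gF d).B s ((gF d).e p) = nbsum s p := by
  obtain ⟨h1, h2, h3⟩ := hp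
  exact gB_single d s p h1 h2 (by omega) (by omega)

def g6 : Fin 6 → ℕ × ℕ := ![(2, 2), (3, 2), (1, 3), (1, 4), (2, 1), (1, 1)]

lemma has6 (d : ℕ) (hd : 6 ≤ d) : (gF d).Has6 g6 where
  Mt := by
    intro a
    fin_cases a <;> simp [g6, gF, mutS] <;> omega
  adj := by
    intro a b
    rw [gF_B]
    · change nbsum (Pi.single (g6 a) 1) (g6 b) = _
      revert a b
      decide +kernel
    · fin_cases b <;> simp [g6, mutS] <;> omega

lemma P_grid (d : ℕ) (hd : 6 ≤ d) : (gF d).P (mutS d) := by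
  have hfin : (mutS d).Finite := by
    refine Set.Finite.subset ((Finset.range d ×ˢ Finset.range d).finite_toSet) ?_
    rintro ⟨k, j⟩ ⟨h1, h2, h3⟩
    simp at h1 h2 h3 ⊢
    omega
  have h6 := has6 d hd
  have main : ∀ n, ∀ M : Set (ℕ × ℕ), Set.range g6 ⊆ M → M ⊆ mutS d → (mutS d \ M).ncard = n →
      (gF d).P M → (gF d).P (mutS d) := by
    intro n
    induction n with
    | zero =>
      intro M _ hM hn hP
      rw [Set.ncard_eq_zero (hfin.diff), Set.diff_eq_empty] at hn
      rwa [← Set.Subset.antisymm hM hn]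
    | succ n ih =>
      intro M hg hM hn hP
      by_cases hex : ∃ i0 ∈ mutS d, i0 ∉ M ∧ ∃ i ∈ M, (gF d).B ((gF d).e i0) ((gF d).e i) = 1
      · obtain ⟨i0, h0, h1, h2⟩ := hex
        refine ih (insert i0 M) (hg.trans (Set.subset_insert _ _)) (Set.insert_subset h0 hM) ?_
          (FlipData.P_step h6 (fun a => hg ⟨a, rfl⟩) hM hP i0 h0 h2)
        have : mutS d \ insert i0 M = (mutS d \ M) \ {i0} := by
          ext x; simp; tauto
        rw [this, Set.ncard_diff_singleton_of_mem (show i0 ∈ mutS d \ M from ⟨h0, h1⟩), hn]; rfl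
      · exfalso
        push Not at hex
        have h11 : ((1, 1) : ℕ × ℕ) ∈ M := hg ⟨5, rfl⟩
        have hrow : ∀ j, 1 ≤ j → 1 + j < d → ((1, j) : ℕ × ℕ) ∈ M := by
          intro j hj
          induction j, hj using Nat.le_induction with
          | base => intro _; exact h11
          | succ j hj ihj =>
            intro hlt
            by_contra hcon
            refine hex (1, j + 1) ⟨le_rfl, by simp, by simpa using hlt⟩ hcon (1, j)
              (ihj (by omega)) ?_
            rw [gF_B _ _ _ ⟨le_rfl, hj, by simp; omega⟩]
            change nbsum (Pi.single _ 1) _ = 1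
            simp [nbsum, Pi.single_apply]
        have hall : ∀ k j, 1 ≤ k → 1 ≤ j → k + j < d → ((k, j) : ℕ × ℕ) ∈ M := by
          intro k j hk hj
          induction k, hk using Nat.le_induction with
          | base => exact hrow j hj
          | succ k hk ihk =>
            intro hlt
            by_contra hcon
            refine hex (k + 1, j) ⟨by simp, hj, by simpa using hlt⟩ hcon (k, j)
              (ihk (by omega)) ?_
            rw [gF_B _ _ _ ⟨hk, hj, by simp; omega⟩]
            change nbsum (Pi.single _ 1) _ = 1
            simp [nbsum, Pi.single_apply]
            have : ¬ (k = k + 1) := by omega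
            have h2 : ¬ (j - 1 = j) := by omega
            have h3 : ¬ (k - 1 = k + 1) := by omega
            simp [h2, h3]
        have : mutS d \ M = ∅ := by
          ext ⟨k, j⟩
          constructor
          · rintro ⟨⟨h1, h2, h3⟩, h4⟩
            exact h4 (hall k j h1 h2 h3)
          · simp
        rw [this] at hn
        simp at hn
  exact main _ (Set.range g6) le_rfl (by rintro _ ⟨a, rfl⟩; exact h6.Mt a) rfl
    (FlipData.P_base h6)

/-- vertices of the grid, as a finset -/
def vert (d : ℕ) : Finset (ℕ × ℕ) :=
  (Finset.range d ×ˢ Finset.range d).filter fun p => 1 ≤ p.1 ∧ 1 ≤ p.2 ∧ p.1 + p.2 ≤ d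

lemma mem_vert {d : ℕ} {p : ℕ × ℕ} : p ∈ vert d ↔ 1 ≤ p.1 ∧ 1 ≤ p.2 ∧ p.1 + p.2 ≤ d := by
  simp [vert]; omega

lemma eq_sum_single (d : ℕ) (s : EE) (hs : ∀ p, p ∉ vert d → s p = 0) :
    s = ∑ p ∈ vert d, s p • (Pi.single p 1 : EE) := by
  ext q
  simp only [Finset.sum_apply, Pi.smul_apply, Pi.single_apply, smul_eq_mul, mul_ite, mul_one,
    mul_zero, Finset.sum_ite_eq]
  split_ifs with h
  · rfl
  · exact hs q h

lemma reach_grid (d : ℕ) (hd : 6 ≤ d) (s t : EE) (hst : ∀ p, p ∉ mutS d → s p = t p)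
    (hQ : gQ d s = gQ d t) (hs : (gF d).NF (mutS d) s) (ht : (gF d).NF (mutS d) t) :
    (gF d).Reach (mutS d) s t := by
  refine P_grid d hd s t ?_ hQ hs ht
  rw [eq_sum_single d (t + s)]
  · refine Submodule.sum_mem _ fun p hp => ?_
    by_cases h : p ∈ mutS d
    · exact Submodule.smul_mem _ _ (Submodule.subset_span ⟨p, h, rfl⟩)
    · rw [Pi.add_apply, hst p h, z2_add_self, zero_smul]
      exact Submodule.zero_mem _
  · intro p hp
    rw [Pi.add_apply, hst p, z2_add_self]
    rintro ⟨h1, h2, h3⟩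
    exact hp (mem_vert.2 ⟨h1, h2, h3.le⟩)

lemma exists_grid (d : ℕ) (hd : 6 ≤ d) (s : EE) (q : ZMod 2) :
    ∃ t : EE, (∀ p, p ∉ mutS d → t p = s p) ∧ gQ d t = q ∧ (gF d).NF (mutS d) t := by
  obtain ⟨y, hy, -, hy2, hy3, -⟩ := FlipData.exists_good (has6 d hd) (has6 d hd).Mt s 0 0 q
  refine ⟨s + 0 + y, ?_, hy2, hy3⟩
  intro p hp
  rw [add_zero, Pi.add_apply]
  suffices y p = 0 by rw [this, add_zero]
  clear hy2 hy3
  induction hy using Submodule.span_induction with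
  | mem x h =>
    obtain ⟨i, hi, rfl⟩ := h
    change (Pi.single i 1 : EE) p = 0
    rw [Pi.single_apply, if_neg]
    rintro rfl
    exact hp hi
  | zero => rfl
  | add x y _ _ h1 h2 => rw [Pi.add_apply, h1, h2, add_zero]
  | smul a x _ h => rw [Pi.smul_apply, h, smul_zero]

lemma reach_frozen {d : ℕ} {s t : EE} (h : (gF d).Reach (mutS d) s t) (p : ℕ × ℕ)
    (hp : p ∉ mutS d) : s p = t p := by
  induction h with
  | refl => rfl
  | tail _ h ih =>
    obtain ⟨i, hi, -, rfl⟩ := h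
    rw [Pi.add_apply, ← ih]
    change _ = _ + (Pi.single i 1 : EE) p
    rw [Pi.single_apply, if_neg, add_zero]
    rintro rfl
    exact hp hi

end FlipGame


namespace FlipGame

def kap (d : ℕ) : EE := fun p => if p.1 + p.2 ≤ d then (p.1 : ZMod 2) * p.2 else 0

def invE (d : ℕ) (s : EE) : EE := fun p => s p.swap + kap d p

lemma z2_two : (2 : ZMod 2) = 0 := by decide

lemma kap_supp (d : ℕ) (p : ℕ × ℕ) (hp : p ∉ vert d) : kap d p = 0 := by
  obtain ⟨k, j⟩ := p
  rw [mem_vert] at hp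
  simp only [kap]
  split_ifs with h
  · simp only at hp
    have : k = 0 ∨ j = 0 := by omega
    rcases this with rfl | rfl <;> simp
  · rfl

lemma gQ_swap (d : ℕ) (s : EE) : gQ d (fun p => s p.swap) = gQ d s := by
  rw [gQ, Finset.sum_comm, gQ]
  refine Finset.sum_congr rfl fun _ _ => Finset.sum_congr rfl fun _ _ => ?_
  simp only [Prod.swap_prod_mk]
  ring

lemma z2_succ_mul (a : ZMod 2) : a * (a + 1) = 0 := by revert a; decide

lemma nbsum_kap_mut (d : ℕ) (p : ℕ × ℕ) (hp : p ∈ mutS d) : nbsum (kap d) p = 0 := by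
  obtain ⟨k, j⟩ := p
  obtain ⟨h1, h2, h3⟩ := hp
  simp only at h1 h2 h3
  obtain ⟨k, rfl⟩ : ∃ a', k = a' + 1 := ⟨k - 1, by omega⟩
  obtain ⟨j, rfl⟩ : ∃ a', j = a' + 1 := ⟨j - 1, by omega⟩
  simp only [nbsum, kap, Nat.add_sub_cancel]
  rw [if_pos (by omega), if_pos (by omega), if_pos (by omega), if_pos (by omega), if_pos (by omega),
    if_pos (by omega)]
  push_cast
  generalize (k : ZMod 2) = a
  generalize (j : ZMod 2) = b
  revert a b; decide

lemma nbsum_kap_fro (d : ℕ) (hodd : d % 2 = 1) (k j : ℕ) (h1 : 1 ≤ k) (h2 : 1 ≤ j)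
    (h3 : k + j = d) : nbsum (kap d) (k, j) = 1 := by
  have hd : (d : ZMod 2) = 1 := by
    rw [← Nat.cast_one, ZMod.natCast_eq_natCast_iff]; exact hodd
  obtain ⟨k, rfl⟩ : ∃ a', k = a' + 1 := ⟨k - 1, by omega⟩
  obtain ⟨j, rfl⟩ : ∃ a', j = a' + 1 := ⟨j - 1, by omega⟩
  rw [← h3] at hd
  simp only [nbsum, kap, Nat.add_sub_cancel]
  rw [if_neg (by omega), if_pos (by omega), if_pos (by omega), if_neg (by omega), if_pos (by omega),
    if_pos (by omega)]
  push_cast at hd ⊢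
  revert hd
  generalize (k : ZMod 2) = a
  generalize (j : ZMod 2) = b
  revert a b; decide

lemma gB_kap (d : ℕ) (hodd : d % 2 = 1) (s : EE) (hs : ∀ p, p ∉ vert d → s p = 0)
    (hsym : ∀ k j, k + j = d → s (k, j) = s (j, k)) : gB d (kap d) s = 0 := by
  rw [eq_sum_single d s hs, map_sum]
  simp only [map_smul, smul_eq_mul]
  refine Finset.sum_involution (fun p _ => if p.1 + p.2 = d then p.swap else p) ?_ ?_ ?_ ?_
  · rintro ⟨k, j⟩ hp
    have hp' := mem_vert.1 hp
    simp only at hp' ⊢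
    split_ifs with h
    · rw [gB_single _ _ _ hp'.1 hp'.2.1 (by simp; omega) (by simp; omega),
        gB_single _ _ _ (by simp; omega) (by simp; omega) (by simp; omega) (by simp; omega)]
      rw [Prod.swap_prod_mk, nbsum_kap_fro d hodd _ _ hp'.1 hp'.2.1 h,
        nbsum_kap_fro d hodd _ _ hp'.2.1 hp'.1 (by omega), hsym k j h, z2_add_self]
    · exact z2_add_self _
  · rintro ⟨k, j⟩ hp hne
    have hp' := mem_vert.1 hp
    simp only at hp' ⊢
    split_ifs with h
    · simp only [Prod.swap_prod_mk, ne_eq, Prod.mk.injEq]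
      omega
    · exfalso
      apply hne
      rw [gB_single _ _ _ hp'.1 hp'.2.1 (by simp; omega) (by simp; omega), nbsum_kap_mut, mul_zero]
      exact ⟨hp'.1, hp'.2.1, by simp; omega⟩
  · rintro ⟨k, j⟩ hp
    have hp' := mem_vert.1 hp
    simp only at hp' ⊢
    split_ifs with h
    · rw [mem_vert]; simp; omega
    · exact hp
  · rintro ⟨k, j⟩ hp
    simp only
    split_ifs with h h'
    · simp
    · simp at h'; omega
    · rfl

lemma sum_poly (d : ℤ) (n : ℕ) : 12 * ∑ k ∈ Finset.range n, (k : ℤ) * ((d - k) * (d - k + 1)) =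
    6 * (d ^ 2 + d) * n * (n - 1) - 2 * (2 * d + 1) * n * (n - 1) * (2 * n - 1)
      + 3 * n ^ 2 * (n - 1) ^ 2 := by
  induction n with
  | zero => simp
  | succ n ih => rw [Finset.sum_range_succ, mul_add, ih]; push_cast; ring

lemma sum_inner (d k : ℕ) (hk : k ≤ d) :
    2 * ∑ j ∈ Finset.range (d + 1), (if k + j ≤ d then (j : ℤ) else 0) =
      ((d : ℤ) - k) * (d - k + 1) := by
  rw [← Finset.sum_filter]
  have : (Finset.range (d + 1)).filter (fun j => k + j ≤ d) = Finset.range (d - k + 1) := by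
    ext j; simp; omega
  rw [this]
  have h := Finset.sum_range_id_mul_two (d - k + 1)
  zify at h
  rw [mul_comm, h]
  simp
  rw [Nat.cast_sub hk]; ring

lemma gQ_kap (d : ℕ) (h8 : d % 8 = 1 ∨ d % 8 = 7) : gQ d (kap d) = 0 := by
  have h1 : gQ d (kap d) = ((∑ k ∈ Finset.range (d + 1), (k : ℤ) * ∑ j ∈ Finset.range (d + 1),
      (if k + j ≤ d then (j : ℤ) else 0) : ℤ) : ZMod 2) := by
    rw [gQ]
    push_cast
    refine Finset.sum_congr rfl fun k _ => ?_
    rw [Finset.mul_sum]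
    refine Finset.sum_congr rfl fun j _ => ?_
    simp only [kap]
    push_cast
    generalize (k : ZMod 2) = a
    generalize (j : ZMod 2) = b
    split_ifs <;> revert a b <;> decide
  rw [h1, ZMod.intCast_eq_zero_iff_even]
  set G := ∑ k ∈ Finset.range (d + 1), (k : ℤ) * ∑ j ∈ Finset.range (d + 1),
      (if k + j ≤ d then (j : ℤ) else 0) with hG
  have h2 : 2 * G = ∑ k ∈ Finset.range (d + 1), (k : ℤ) * (((d : ℤ) - k) * (d - k + 1)) := by
    rw [hG, Finset.mul_sum]
    refine Finset.sum_congr rfl fun k hk => ?_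
    rw [← sum_inner d k (by simp at hk; omega)]; ring
  have h3 := sum_poly d (d + 1)
  rw [← h2] at h3
  push_cast at h3
  have h4 : 24 * G = (d + 2) * (d + 1) * d * (d - 1) := by linear_combination h3
  rcases h8 with h | h
  · obtain ⟨m, hm⟩ : ∃ m : ℕ, d = 8 * m + 1 := ⟨d / 8, by omega⟩
    rw [hm] at h4; push_cast at h4
    generalize (m : ℤ) = m at h4
    have h5 : 24 * G = 16 * (((8 * m + 3) * (4 * m + 1)) * ((8 * m + 1) * m)) := by
      linear_combination h4
    generalize (((8 * m + 3) * (4 * m + 1)) * ((8 * m + 1) * m)) = z at h5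
    rw [Int.even_iff]; omega
  · obtain ⟨m, hm⟩ : ∃ m : ℕ, d = 8 * m + 7 := ⟨d / 8, by omega⟩
    rw [hm] at h4; push_cast at h4
    generalize (m : ℤ) = m at h4
    have h5 : 24 * G = 16 * (((8 * m + 9) * (m + 1)) * ((8 * m + 7) * (4 * m + 3))) := by
      linear_combination h4
    generalize (((8 * m + 9) * (m + 1)) * ((8 * m + 7) * (4 * m + 3))) = z at h5
    rw [Int.even_iff]; omega

lemma gQ_inv (d : ℕ) (hodd : d % 2 = 1) (h8 : d % 8 = 1 ∨ d % 8 = 7) (s : EE)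
    (hs : ∀ p, p ∉ vert d → s p = 0)
    (hsym : ∀ k j, k + j = d → s (k, j) = s (j, k)) : gQ d (invE d s) = gQ d s := by
  have : invE d s = kap d + (fun p => s p.swap) := by
    ext p; simp only [invE, Pi.add_apply, add_comm]
  have h2 : gQ d (kap d + fun p => s p.swap) = gQ d (kap d) + gQ d (fun p => s p.swap)
      + gB d (kap d) (fun p => s p.swap) := (gF d).Q_add (kap d) (fun p => s p.swap)
  rw [this, h2, gQ_kap d h8, gQ_swap, gB_kap d hodd, zero_add, add_zero]
  · rintro ⟨k, j⟩ hp
    refine hs _ fun h => hp ?_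
    rw [mem_vert] at h ⊢
    simp at h ⊢; omega
  · intro k j h
    exact (hsym k j h).symm

lemma NF_inv (d : ℕ) (s : EE) (h : (gF d).NF (mutS d) s) : (gF d).NF (mutS d) (invE d s) := by
  obtain ⟨⟨k, j⟩, hi, h⟩ := h
  rw [gF_B _ _ _ hi] at h
  have hi' : ((j, k) : ℕ × ℕ) ∈ mutS d := ⟨hi.2.1, hi.1, by simpa [add_comm] using hi.2.2⟩
  refine ⟨(j, k), hi', ?_⟩
  rw [gF_B _ _ _ hi']
  have h0 := nbsum_kap_mut d _ hi'
  simp only [nbsum, invE, Prod.swap_prod_mk] at h h0 ⊢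
  linear_combination h + h0

end FlipGame


namespace FlipGame
open Matrix

noncomputable def D (a : ℕ → ℕ → ℝ) (k j : ℕ) : ℝ :=
  Matrix.det (Matrix.of fun r c : Fin k => a r (j + c))

lemma D_zero (a : ℕ → ℕ → ℝ) (j : ℕ) : D a 0 j = 1 := by
  simp [D]

lemma D_col_zero (a : ℕ → ℕ → ℝ) (h0 : ∀ r c, c < r → a r c = 0) (k : ℕ)
    (h1 : ∀ r, r < k → a r r = 1) : D a k 0 = 1 := by
  rw [D, Matrix.det_of_upperTriangular]
  · refine Finset.prod_eq_one fun i _ => ?_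
    simp [h1 i i.2]
  · intro r c h
    simp only [of_apply, zero_add]
    exact h0 _ _ h

lemma D_congr {a b : ℕ → ℕ → ℝ} {k j : ℕ} (h : ∀ r c, r < k → j ≤ c → c < j + k → a r c = b r c) :
    D a k j = D b k j := by
  rw [D, D]
  congr 1
  ext r c
  exact h _ _ r.2 (by omega) (by omega)

lemma D_last (a : ℕ → ℕ → ℝ) (n j : ℕ) : D a (n + 1) j =
    (∑ c : Fin n, (-1 : ℝ) ^ (n + (c : ℕ)) * a n (j + c) *
      det (Matrix.of fun r c' : Fin n => a r (j + ((Fin.castSucc c).succAbove c'))))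
      + a n (j + n) * D a n j := by
  rw [D, Matrix.det_succ_row _ (Fin.last n), Fin.sum_univ_castSucc]
  congr 1
  · refine Finset.sum_congr rfl fun c _ => ?_
    simp only [of_apply, Fin.val_last, Fin.val_castSucc]
    congr 2
    ext r c'
    simp
  · simp only [of_apply, Fin.val_last]
    rw [← two_mul, pow_mul, neg_one_sq, one_pow, one_mul, D]
    congr 2
    ext r c'
    simp

lemma D_update {a b : ℕ → ℕ → ℝ} {n j : ℕ}
    (h : ∀ r c, r ≤ n → j ≤ c → c ≤ j + n → (r ≠ n ∨ c ≠ j + n) → a r c = b r c) :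
    D b (n + 1) j = D a (n + 1) j + (b n (j + n) - a n (j + n)) * D a n j := by
  have h1 : D b n j = D a n j := by
    refine D_congr fun r c hr h1 h2 => (h r c (by omega) h1 (by omega) (by omega)).symm
  rw [D_last, D_last a, h1]
  have h2 : ∀ c : Fin n, (-1 : ℝ) ^ (n + (c : ℕ)) * b n (j + c) *
      det (Matrix.of fun r c' : Fin n => b r (j + ((Fin.castSucc c).succAbove c'))) =
      (-1 : ℝ) ^ (n + (c : ℕ)) * a n (j + c) *
      det (Matrix.of fun r c' : Fin n => a r (j + ((Fin.castSucc c).succAbove c'))) := by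
    intro c
    have e1 : a n (j + c) = b n (j + c) := h _ _ le_rfl (by omega) (by omega) (by omega)
    rw [e1]
    congr 2
    ext r c'
    exact (h _ _ (by omega) (by omega) (by omega) (by omega)).symm
  rw [Finset.sum_congr rfl fun c _ => h2 c]
  ring

lemma exchange (a : ℕ → ℕ → ℝ) (n i : ℕ) (h0 : D a (n + 1) (i + 1) = 0) :
    D a (n + 2) (i + 1) * D a (n + 1) i * D a n (i + 2) =
      - (D a (n + 1) (i + 2) * D a n (i + 1) * D a (n + 2) i) := by
  set M : Matrix (Fin (n + 1)) (Fin (n + 1)) ℝ := Matrix.of fun r c => a r (i + 1 + c) with hM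
  set cc : Fin (n + 1) → ℝ := fun t => adjugate M t (Fin.last n) with hcc
  have hdet : M.det = 0 := h0
  have hker : ∀ r : Fin (n + 1), ∑ t, cc t * a r (i + 1 + t) = 0 := by
    intro r
    have := congrFun (congrFun (Matrix.mul_adjugate M) r) (Fin.last n)
    rw [hdet, zero_smul, Matrix.mul_apply] at this
    refine Eq.trans ?_ this
    refine Finset.sum_congr rfl fun t _ => ?_
    simp [hM, hcc, mul_comm]
  have hlast : cc (Fin.last n) = D a n (i + 1) := by
    simp only [hcc]
    rw [adjugate_fin_succ_eq_det_submatrix, ← two_mul, pow_mul, neg_one_sq, one_pow, one_mul, D]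
    congr 1
    ext r c
    simp [hM]
  have hfirst : cc 0 = (-1) ^ n * D a n (i + 2) := by
    simp only [hcc]
    rw [adjugate_fin_succ_eq_det_submatrix, D]
    simp only [Fin.val_last, Fin.val_zero, add_zero]
    congr 2
    ext r c
    simp [hM]
    congr 1
    ring
  set γ : ℝ := ∑ t, cc t * a (n + 1) (i + 1 + t) with hγ
  have key : ∀ r : Fin (n + 2), ∑ t, cc t * a r (i + 1 + t) = if r = Fin.last (n + 1) then γ else 0 := by
    intro r
    split_ifs with h
    · rw [h]; rfl
    · have hr : (r : ℕ) < n + 1 := by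
        have := r.2
        have h' : (r : ℕ) ≠ n + 1 := fun h2 => h (Fin.ext h2)
        omega
      exact hker ⟨r, hr⟩
  have R1 : D a n (i + 1) * D a (n + 2) i = γ * D a (n + 1) i := by
    set M1 : Matrix (Fin (n + 2)) (Fin (n + 2)) ℝ := Matrix.of fun r c => a r (i + c) with hM1
    have e1 := det_updateCol_sum M1 (Fin.last (n + 1)) (Fin.cons 0 cc)
    have e2 : (fun k : Fin (n + 2) => ∑ t, (Fin.cons (0 : ℝ) cc : Fin (n + 2) → ℝ) t • M1 k t) =
        fun k => if k = Fin.last (n + 1) then γ else 0 := by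
      ext k
      rw [Fin.sum_univ_succ]
      simp only [Fin.cons_zero, Fin.cons_succ, smul_eq_mul, zero_mul, zero_add, ← key k]
      refine Finset.sum_congr rfl fun t _ => ?_
      simp only [hM1, of_apply, Fin.val_succ]
      congr 2; ring
    rw [e2] at e1
    rw [det_succ_column _ (Fin.last (n + 1)), Fin.sum_univ_castSucc] at e1
    rw [Finset.sum_eq_zero] at e1
    · rw [← Fin.succ_last, Fin.cons_succ, hlast] at e1
      have e6 : D a (n + 2) i = M1.det := rfl
      rw [e6, ← smul_eq_mul, ← e1, zero_add, D]
      simp only [updateCol_self, if_true, Fin.val_succ, Fin.val_last]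
      rw [← two_mul, pow_mul, neg_one_sq, one_pow, one_mul]
      congr 2
      ext r c
      rw [submatrix_apply, updateCol_ne]
      · simp [hM1]
      · exact Fin.succAbove_ne _ _
    · intro t _
      rw [updateCol_self, if_neg (Fin.castSucc_lt_last t).ne, mul_zero, zero_mul]
  have R2 : D a n (i + 2) * D a (n + 2) (i + 1) = - (γ * D a (n + 1) (i + 2)) := by
    set M1 : Matrix (Fin (n + 2)) (Fin (n + 2)) ℝ := Matrix.of fun r c => a r (i + 1 + c) with hM1
    have e1 := det_updateCol_sum M1 0 (Fin.snoc cc 0)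
    have e2 : (fun k : Fin (n + 2) => ∑ t, (Fin.snoc cc (0 : ℝ) : Fin (n + 2) → ℝ) t • M1 k t) =
        fun k => if k = Fin.last (n + 1) then γ else 0 := by
      ext k
      rw [Fin.sum_univ_castSucc]
      simp only [Fin.snoc_last, Fin.snoc_castSucc, smul_eq_mul, zero_mul, add_zero, ← key k]
      refine Finset.sum_congr rfl fun t _ => ?_
      simp only [hM1, of_apply, Fin.val_castSucc]
    rw [e2] at e1
    rw [det_succ_column _ 0, Fin.sum_univ_castSucc] at e1
    rw [Finset.sum_eq_zero] at e1
    · have e3 : (Fin.snoc cc (0 : ℝ) : Fin (n + 2) → ℝ) 0 = cc 0 := by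
        rw [← Fin.castSucc_zero, Fin.snoc_castSucc]
      rw [e3, hfirst] at e1
      have e4 : ((-1 : ℝ) ^ n) * ((-1) ^ n) = 1 := by
        rw [← pow_add, ← two_mul, pow_mul, neg_one_sq, one_pow]
      have e5 : D a (n + 1) (i + 2) =
          ((M1.updateCol 0 fun k => if k = Fin.last (n + 1) then γ else 0).submatrix
            (Fin.last (n + 1)).succAbove (Fin.succAbove 0)).det := by
        rw [D]
        congr 1
        ext r c
        rw [submatrix_apply, updateCol_ne]
        · simp [hM1]
          congr 1; ring
        · exact Fin.succAbove_ne _ _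
      rw [← e5] at e1
      simp only [updateCol_self, if_true, Fin.val_zero, Fin.val_last, zero_add, smul_eq_mul] at e1
      have e6 : D a (n + 2) (i + 1) = M1.det := rfl
      rw [e6]
      linear_combination (-1 : ℝ) ^ n * (-e1) - (γ * D a (n + 1) (i + 2) + D a n (i + 2) * M1.det) * e4
    · intro t _
      rw [updateCol_self, if_neg (Fin.castSucc_lt_last t).ne, mul_zero, zero_mul]
  linear_combination D a (n + 1) i * R2 + D a (n + 1) (i + 2) * R1

end FlipGame


namespace FlipGame
open Matrix

lemma rot_pow (n j : ℕ) (x : Fin (n + 1)) : (((finRotate (n + 1)) ^ j) x : ℕ) = (x + j) % (n + 1) := by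
  induction j with
  | zero => simp [Nat.mod_eq_of_lt x.2]
  | succ j ih =>
    rw [pow_succ', Equiv.Perm.mul_apply, finRotate_succ_apply, Fin.val_add, ih]
    simp only [Fin.val_one', Nat.add_mod_mod, Nat.mod_add_mod, add_assoc]

lemma jacobi (a b : ℕ → ℕ → ℝ) (k j : ℕ)
    (hab : ∀ r s, r < k + j → s < k + j →
      ∑ t ∈ Finset.range (k + j), a r t * b t s = if r = s then 1 else 0)
    (hdet : D a (k + j) 0 = 1) : D b k j = (-1) ^ (k * j) * D a j k := by
  rcases Nat.eq_zero_or_pos (k + j) with h0 | hpos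
  · obtain ⟨rfl, rfl⟩ : k = 0 ∧ j = 0 := by omega
    simp [D_zero]
  obtain ⟨n, hn⟩ : ∃ n, k + j = n + 1 := ⟨k + j - 1, by omega⟩
  -- the row map
  let ρ : Fin k ⊕ Fin j → ℕ := Sum.elim (fun i => j + i) (fun i => i)
  let κ : Fin k ⊕ Fin j → ℕ := Sum.elim (fun i => i) (fun i => k + i)
  let A : Matrix (Fin k ⊕ Fin j) (Fin k ⊕ Fin j) ℝ := Matrix.of fun r c => a (ρ r) (κ c)
  let N : Matrix (Fin k ⊕ Fin j) (Fin k ⊕ Fin j) ℝ :=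
    fromBlocks (Matrix.of fun r c : Fin k => b r (j + c)) 0
      (Matrix.of fun (r : Fin j) (c : Fin k) => b (k + r) (j + c)) 1
  have hsum : ∀ f : ℕ → ℝ, ∑ x : Fin k ⊕ Fin j, f (κ x) = ∑ t ∈ Finset.range (k + j), f t := by
    intro f
    rw [Fintype.sum_sum_type, Finset.sum_range, Fin.sum_univ_add]
    rfl
  have hAN : A * N = fromBlocks 1 (Matrix.of fun (r : Fin k) (c : Fin j) => a (j + r) (k + c)) 0
      (Matrix.of fun r c : Fin j => a r (k + c)) := by
    ext r c
    rcases c with c | c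
    · have e1 : (A * N) r (Sum.inl c) = ∑ t ∈ Finset.range (k + j), a (ρ r) t * b t (j + c) := by
        rw [← hsum, Matrix.mul_apply]
        refine Finset.sum_congr rfl fun x _ => ?_
        rcases x with x | x <;> rfl
      rw [e1, hab]
      · rcases r with r | r
        · simp [ρ, Matrix.one_apply, Fin.ext_iff]
        · have h1 : ((r : ℕ) : ℕ) ≠ j + c := by omega
          simp [ρ, h1]
      · rcases r with r | r <;> simp [ρ] <;> omega
      · omega
    · have e1 : (A * N) r (Sum.inr c) = a (ρ r) (k + c) := by
        rw [Matrix.mul_apply, Fintype.sum_sum_type, Finset.sum_eq_zero, zero_add,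
          Finset.sum_eq_single c]
        · simp [N, A, κ]
        · intro x _ hx
          simp [N, Matrix.one_apply_ne hx]
        · simp
        · intro x _
          simp [N]
      rw [e1]
      rcases r with r | r <;> rfl
  have hdetN : N.det = D b k j := by
    rw [det_fromBlocks_zero₁₂, det_one, mul_one]; rfl
  have hd2 : A.det * D b k j = D a j k := by
    rw [← hdetN, ← det_mul, hAN, det_fromBlocks_zero₂₁, det_one, one_mul]; rfl
  -- sign
  have hA : A.det = (-1) ^ (k * j) := by
    let e : Fin k ⊕ Fin j ≃ Fin (n + 1) := finSumFinEquiv.trans (finCongr hn)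
    have e1 : A = ((Matrix.of fun r c : Fin (n + 1) => a r (0 + c)).submatrix
        ((finRotate (n + 1)) ^ j) id).submatrix e e := by
      ext r c
      simp only [A, of_apply, submatrix_apply, zero_add, id]
      congr 1
      · rw [rot_pow]
        rcases r with r | r
        · simp [ρ, e]
          rw [Nat.mod_eq_of_lt (by omega), add_comm]
        · simp [ρ, e]
          have : k + (r : ℕ) + j = r + (n + 1) := by omega
          rw [this, Nat.add_mod_right, Nat.mod_eq_of_lt (by omega)]
      · rcases c with c | c <;> simp [κ, e]
    rw [e1, det_submatrix_equiv_self, det_permute]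
    have e2 : (Matrix.of fun r c : Fin (n + 1) => a r (0 + c)).det = 1 := by
      rw [← hdet, hn]; rfl
    rw [e2, mul_one, map_pow, sign_finRotate]
    push_cast
    rw [← pow_mul]
    have : n * j + 0 = k * j + 2 * (j * (j - 1) / 2) := by
      rw [Nat.mul_div_cancel' (Nat.even_mul_pred_self j).two_dvd]
      rcases j with _ | j
      · simp
      · have : n = k + j := by omega
        rw [this]; simp; ring
    rw [add_zero] at this
    rw [this, pow_add, pow_mul, pow_mul (-1 : ℝ) 2, neg_one_sq, one_pow, mul_one]
  rw [← hd2, hA, ← mul_assoc, ← pow_add, ← two_mul, pow_mul, neg_one_sq, one_pow, one_mul]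

end FlipGame


namespace FlipGame
open Matrix Topology

abbrev VV (d : ℕ) := {p : ℕ × ℕ // p ∈ vert d}
abbrev XX (d : ℕ) := VV d → ℝ

noncomputable def arr {d : ℕ} (x : XX d) (r c : ℕ) : ℝ :=
  if r = c then 1 else if h : (r + 1, c - r) ∈ vert d then x ⟨(r + 1, c - r), h⟩ else 0

noncomputable def Del {d : ℕ} (x : XX d) (p : ℕ × ℕ) : ℝ := D (arr x) p.1 p.2

noncomputable def EV {d : ℕ} (a : VV d) : XX d := Pi.single a 1

/-- pivot -/
def pv (p : ℕ × ℕ) : ℕ × ℕ := (p.1 - 1, p.2)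

def lt2 (b a : ℕ × ℕ) : Prop := b.1 < a.1 ∨ (b.1 = a.1 ∧ b.2 < a.2)

def rk (d : ℕ) (p : ℕ × ℕ) : ℕ := p.1 * (d + 1) + p.2

lemma rk_lt_of_lt2 {d : ℕ} {a b : ℕ × ℕ} (hb : b.2 ≤ d) (h : lt2 b a) : rk d b < rk d a := by
  unfold rk
  rcases h with h | ⟨h1, h2⟩
  · have : (b.1 + 1) * (d + 1) ≤ a.1 * (d + 1) := Nat.mul_le_mul_right _ h
    nlinarith
  · rw [h1]; omega

lemma lt2_trichotomy (a b : ℕ × ℕ) : lt2 a b ∨ a = b ∨ lt2 b a := by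
  unfold lt2
  by_cases h : a = b
  · tauto
  · have : ¬ (a.1 = b.1 ∧ a.2 = b.2) := fun h' => h (Prod.ext h'.1 h'.2)
    omega

lemma lt2_of_rk_lt {d : ℕ} {a b : ℕ × ℕ} (ha : a.2 ≤ d) (h : rk d b < rk d a) : lt2 b a := by
  rcases lt2_trichotomy b a with h1 | h1 | h1
  · exact h1
  · rw [h1] at h; omega
  · have := rk_lt_of_lt2 ha h1; omega

lemma eq_of_rk_eq {d : ℕ} {a b : ℕ × ℕ} (ha : a.2 ≤ d) (hb : b.2 ≤ d) (h : rk d b = rk d a) :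
    b = a := by
  rcases lt2_trichotomy b a with h1 | h1 | h1
  · have := rk_lt_of_lt2 hb h1; omega
  · exact h1
  · have := rk_lt_of_lt2 ha h1; omega

variable {d : ℕ}

lemma V_bd (a : VV d) : 1 ≤ a.1.1 ∧ 1 ≤ a.1.2 ∧ a.1.1 + a.1.2 ≤ d := mem_vert.1 a.2

lemma arr_low (x : XX d) (r c : ℕ) (h : c < r) : arr x r c = 0 := by
  unfold arr
  rw [if_neg (by omega), dif_neg]
  rw [mem_vert]; simp; omega

lemma arr_diag (x : XX d) (r : ℕ) : arr x r r = 1 := by simp [arr]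

lemma Del_row_zero (x : XX d) (j : ℕ) : Del x (0, j) = 1 := D_zero _ _

lemma Del_col_zero (x : XX d) (k : ℕ) : Del x (k, 0) = 1 :=
  D_col_zero _ (arr_low x) _ (fun r _ => arr_diag x r)

lemma arr_add (x : XX d) (a : VV d) (t : ℝ) (r c : ℕ) :
    arr (x + t • EV a) r c = arr x r c + if a.1 = (r + 1, c - r) then t else 0 := by
  unfold arr
  by_cases h : r = c
  · subst h
    rw [if_pos rfl, if_pos rfl, if_neg, add_zero]
    intro h
    have := V_bd a
    rw [h] at this
    simp at this
  · rw [if_neg h, if_neg h]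
    by_cases h2 : (r + 1, c - r) ∈ vert d
    · rw [dif_pos h2, dif_pos h2]
      simp only [Pi.add_apply, Pi.smul_apply, EV, Pi.single_apply, smul_eq_mul, mul_ite, mul_one,
        mul_zero]
      congr 1
      simp only [Subtype.ext_iff, eq_comm]
    · rw [dif_neg h2, dif_neg h2, if_neg, add_zero]
      intro h3
      exact h2 (h3 ▸ a.2)

lemma Del_add_lt (x : XX d) (a : VV d) (t : ℝ) (b : ℕ × ℕ) (h : lt2 b a.1) :
    Del (x + t • EV a) b = Del x b := by
  refine D_congr fun r c h1 h2 h3 => ?_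
  rw [arr_add, if_neg, add_zero]
  intro h4
  unfold lt2 at h
  rw [h4] at h
  simp at h
  have := V_bd a
  rw [h4] at this
  simp at this
  omega

lemma pv_lt (a : VV d) : lt2 (pv a.1) a.1 := by
  have := V_bd a
  left; simp [pv]; omega

lemma Del_add_self (x : XX d) (a : VV d) (t : ℝ) :
    Del (x + t • EV a) a.1 = Del x a.1 + t * Del x (pv a.1) := by
  obtain ⟨⟨k, j⟩, ha⟩ := a
  have := mem_vert.1 ha
  simp only at this
  obtain ⟨n, rfl⟩ : ∃ n, k = n + 1 := ⟨k - 1, by omega⟩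
  have e := D_update (a := arr x) (b := arr (x + t • EV ⟨(n + 1, j), ha⟩)) (n := n) (j := j) ?_
  · rw [arr_add, if_pos] at e
    · simp only [Del, pv, e]; simp
    · simp
  · intro r c h1 h2 h3 h4
    rw [arr_add, if_neg, add_zero]
    simp; omega

lemma exch (x : XX d) (k j : ℕ) (hk : 1 ≤ k) (hj : 1 ≤ j) (h : Del x (k, j) = 0) :
    Del x (k + 1, j) * Del x (k, j - 1) * Del x (k - 1, j + 1) =
      - (Del x (k, j + 1) * Del x (k - 1, j) * Del x (k + 1, j - 1)) := by
  obtain ⟨n, rfl⟩ : ∃ n, k = n + 1 := ⟨k - 1, by omega⟩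
  obtain ⟨i, rfl⟩ : ∃ n, j = n + 1 := ⟨j - 1, by omega⟩
  exact exchange _ _ _ h

lemma differentiable_arr (r c : ℕ) : Differentiable ℝ (fun x : XX d => arr x r c) := by
  unfold arr
  split_ifs
  · fun_prop
  · fun_prop
  · fun_prop

lemma differentiable_Del (p : ℕ × ℕ) : Differentiable ℝ (fun x : XX d => Del x p) := by
  unfold Del D
  simp only [Matrix.det_apply, of_apply]
  have := fun r c => differentiable_arr (d := d) r c
  fun_prop

lemma continuous_Del (p : ℕ × ℕ) : Continuous (fun x : XX d => Del x p) :=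
  (differentiable_Del p).continuous

/-- sign bit -/
noncomputable def sb (r : ℝ) : ZMod 2 := if r < 0 then 1 else 0

lemma sb_one : sb 1 = 0 := by norm_num [sb]

lemma sb_mul {r s : ℝ} (hr : r ≠ 0) (hs : s ≠ 0) : sb (r * s) = sb r + sb s := by
  unfold sb
  rcases lt_or_gt_of_ne hr with h1 | h1 <;> rcases lt_or_gt_of_ne hs with h2 | h2
  · rw [if_neg (mul_pos_of_neg_of_neg h1 h2).le.not_gt, if_pos h1, if_pos h2]; decide
  · rw [if_pos (mul_neg_of_neg_of_pos h1 h2), if_pos h1, if_neg h2.le.not_gt]; decide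
  · rw [if_pos (mul_neg_of_pos_of_neg h1 h2), if_neg h1.le.not_gt, if_pos h2]; decide
  · rw [if_neg (mul_pos h1 h2).le.not_gt, if_neg h1.le.not_gt, if_neg h2.le.not_gt]; decide

lemma sb_neg {r : ℝ} (hr : r ≠ 0) : sb (-r) = sb r + 1 := by
  have : sb (-1) = 1 := by simp [sb]
  rw [neg_eq_neg_one_mul, sb_mul (by norm_num) hr, this, add_comm]

lemma sb_eventually {α : Type*} [TopologicalSpace α] {f : α → ℝ} {x : α} (hf : ContinuousAt f x)
    (h : f x ≠ 0) : ∀ᶠ y in 𝓝 x, f y ≠ 0 ∧ sb (f y) = sb (f x) := by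
  rcases lt_or_gt_of_ne h with h1 | h1
  · filter_upwards [hf.eventually (gt_mem_nhds h1)] with y hy
    exact ⟨hy.ne, by rw [sb, sb, if_pos hy, if_pos h1]⟩
  · filter_upwards [hf.eventually (lt_mem_nhds h1)] with y hy
    exact ⟨hy.ne', by rw [sb, sb, if_neg hy.le.not_gt, if_neg h1.le.not_gt]⟩

noncomputable def sig (x : XX d) : EE := fun p => if p ∈ vert d then sb (Del x p) else 0

lemma sig_supp (x : XX d) (p : ℕ × ℕ) (hp : p ∉ vert d) : sig x p = 0 := by simp [sig, hp]

lemma sig_vert (x : XX d) (p : ℕ × ℕ) (hp : p ∈ vert d) : sig x p = sb (Del x p) := by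
  simp [sig, hp]

lemma sig_eq (x : XX d) (k j : ℕ) (h : k + j ≤ d) : sig x (k, j) = sb (Del x (k, j)) := by
  unfold sig
  split_ifs with h1
  · rfl
  · rw [mem_vert] at h1
    simp only at h1
    have : k = 0 ∨ j = 0 := by omega
    rcases this with rfl | rfl
    · rw [Del_row_zero, sb_one]
    · rw [Del_col_zero, sb_one]

/-- frozen minors nonzero -/
def SS (d : ℕ) : Set (XX d) := {x | ∀ p ∈ vert d, p.1 + p.2 = d → Del x p ≠ 0}
def TT (d : ℕ) : Set (XX d) := {x | ∀ p ∈ vert d, Del x p ≠ 0}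

lemma TT_sub : TT d ⊆ SS d := fun x hx p hp _ => hx p hp

lemma isOpen_SS : IsOpen (SS d) := by
  have : SS d = ⋂ p ∈ vert d, {x | p.1 + p.2 = d → Del x p ≠ 0} := by
    ext x; simp [SS]
  rw [this]
  refine isOpen_biInter_finset fun p _ => ?_
  by_cases h : p.1 + p.2 = d
  · simp only [h, true_imp_iff]
    exact isOpen_ne_fun (continuous_Del p) continuous_const
  · simp [h]

lemma isOpen_TT : IsOpen (TT d) := by
  have : TT d = ⋂ p ∈ vert d, {x | Del x p ≠ 0} := by
    ext x; simp [TT]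
  rw [this]
  refine isOpen_biInter_finset fun p _ => ?_
  exact isOpen_ne_fun (continuous_Del p) continuous_const

/-- pivot is nonzero if all lower minors are -/
lemma pv_cases (a : VV d) : (pv a.1).1 = 0 ∨ (pv a.1) ∈ vert d := by
  have := V_bd a
  by_cases h : a.1.1 = 1
  · left; simp [pv, h]
  · right; rw [mem_vert]; simp [pv]; omega

lemma Del_pv_zero (x : XX d) (a : VV d) (h : (pv a.1).1 = 0) : Del x (pv a.1) = 1 := by
  have : pv a.1 = (0, a.1.2) := Prod.ext h rfl
  rw [this, Del_row_zero]

lemma nbsum_sig (x : XX d) (a : ℕ × ℕ) (ha : a ∈ mutS d) (h0 : Del x a = 0)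
    (h : ∀ p ∈ vert d, p ≠ a → Del x p ≠ 0) : nbsum (sig x) a = 1 := by
  obtain ⟨k, j⟩ := a
  obtain ⟨hk, hj, hkj⟩ := ha
  simp only at hk hj hkj
  have hne : ∀ k' j', k' + j' ≤ d → (k' ≠ k ∨ j' ≠ j) → Del x (k', j') ≠ 0 := by
    intro k' j' h1 h2
    by_cases h3 : k' = 0
    · rw [h3, Del_row_zero]; norm_num
    by_cases h4 : j' = 0
    · rw [h4, Del_col_zero]; norm_num
    refine h _ (mem_vert.2 ⟨by simp; omega, by simp; omega, h1⟩) ?_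
    simp; omega
  have e := exch x k j hk hj h0
  have n1 := hne (k + 1) j (by omega) (by omega)
  have n2 := hne k (j - 1) (by omega) (by omega)
  have n3 := hne (k - 1) (j + 1) (by omega) (by omega)
  have n4 := hne k (j + 1) (by omega) (by omega)
  have n5 := hne (k - 1) j (by omega) (by omega)
  have n6 := hne (k + 1) (j - 1) (by omega) (by omega)
  have e2 := congrArg sb e
  rw [sb_neg (mul_ne_zero (mul_ne_zero n4 n5) n6), sb_mul (mul_ne_zero n1 n2) n3, sb_mul n1 n2,
    sb_mul (mul_ne_zero n4 n5) n6, sb_mul n4 n5] at e2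
  simp only [nbsum]
  rw [sig_eq x (k + 1) j (by omega), sig_eq x k (j - 1) (by omega),
    sig_eq x (k - 1) (j + 1) (by omega), sig_eq x k (j + 1) (by omega),
    sig_eq x (k - 1) j (by omega), sig_eq x (k + 1) (j - 1) (by omega)]
  linear_combination e2 + (sb (Del x (k, j + 1)) + sb (Del x (k - 1, j)) + sb (Del x (k + 1, j - 1))) * z2_two

end FlipGame


namespace FlipGame
open Matrix Topology
variable {d : ℕ}

lemma rk_bd (a : VV d) : rk d a.1 < (d + 1) * (d + 1) + d + 1 := by
  have := V_bd a
  have h : a.1.1 * (d + 1) ≤ (d + 1) * (d + 1) := Nat.mul_le_mul_right _ (by omega)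
  unfold rk
  omega

def YY (d : ℕ) : Set (XX d) := {y | ∀ p, y p ≠ 0}

lemma lt2_of_rk {a b : VV d} (h : rk d b.1 < rk d a.1) : lt2 b.1 a.1 :=
  lt2_of_rk_lt (by have := V_bd a; omega) h

lemma V_eq_of_rk {a b : VV d} (h : rk d b.1 = rk d a.1) : b = a :=
  Subtype.ext (eq_of_rk_eq (by have := V_bd a; omega) (by have := V_bd b; omega) h)

lemma rk_pv_lt (a : VV d) : rk d (pv a.1) < rk d a.1 :=
  rk_lt_of_lt2 (by have := V_bd a; simp [pv]; omega) (pv_lt a)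

lemma pv_ne (x : XX d) (a : VV d) (h : ∀ p : VV d, rk d p.1 < rk d a.1 → Del x p.1 ≠ 0) :
    Del x (pv a.1) ≠ 0 := by
  rcases pv_cases a with h1 | h1
  · rw [Del_pv_zero x a h1]; norm_num
  · exact h ⟨_, h1⟩ (rk_pv_lt a)

lemma exists_section (m : ℕ) : ∃ g : XX d → XX d, ContinuousOn g (YY d) ∧
    ∀ y ∈ YY d, ∀ p : VV d, rk d p.1 < m → Del (g y) p.1 = y p := by
  induction m with
  | zero => exact ⟨id, continuousOn_id, by intros; omega⟩
  | succ m ih =>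
    obtain ⟨g, hg, hg2⟩ := ih
    by_cases hp : ∃ p : VV d, rk d p.1 = m
    · obtain ⟨p, hp⟩ := hp
      have hpv : ∀ y ∈ YY d, Del (g y) (pv p.1) ≠ 0 := by
        intro y hy
        refine pv_ne _ _ fun q hq => ?_
        rw [hg2 y hy q (by omega)]
        exact hy q
      refine ⟨fun y => g y + ((y p - Del (g y) p.1) / Del (g y) (pv p.1)) • EV p, ?_, ?_⟩
      · have h1 := fun q => (continuous_Del (d := d) q).comp_continuousOn hg
        refine hg.add (ContinuousOn.smul (ContinuousOn.div (ContinuousOn.sub ?_ (h1 _)) (h1 _) hpv)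
          continuousOn_const)
        fun_prop
      · intro y hy q hq
        simp only
        rcases Nat.lt_succ_iff_lt_or_eq.1 hq with h | h
        · rw [Del_add_lt _ _ _ _ (lt2_of_rk (by omega)), hg2 y hy q h]
        · obtain rfl : q = p := V_eq_of_rk (by omega)
          rw [Del_add_self, div_mul_cancel₀ _ (hpv y hy)]
          ring
    · refine ⟨g, hg, fun y hy p hpm => hg2 y hy p ?_⟩
      have : rk d p.1 ≠ m := fun h => hp ⟨p, h⟩
      omega

lemma Del_inj (x x' : XX d) (hx : x ∈ TT d) (h : ∀ p : VV d, Del x p.1 = Del x' p.1) :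
    x = x' := by
  have main : ∀ m, ∀ a : VV d, rk d a.1 = m → x a = x' a := by
    intro m
    induction m using Nat.strong_induction_on with
    | _ m ih =>
      intro a ham
      have hpv := pv_ne x a fun p _ => hx p.1 p.2
      have ha := h a
      obtain ⟨⟨k, j⟩, hkj⟩ := a
      have hb := mem_vert.1 hkj
      simp only at hb
      obtain ⟨n, rfl⟩ : ∃ n, k = n + 1 := ⟨k - 1, by omega⟩
      have e := D_update (a := arr x) (b := arr x') (n := n) (j := j) ?_
      · have e1 : ∀ z : XX d, arr z n (j + n) = z ⟨(n + 1, j), hkj⟩ := by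
          intro z
          unfold arr
          rw [if_neg (by omega)]
          have : (n + 1, j + n - n) = (n + 1, j) := by simp
          simp only [this]
          rw [dif_pos hkj]
        rw [e1, e1] at e
        have ha' : D (arr x) (n + 1) j = D (arr x') (n + 1) j := ha
        have hpv' : D (arr x) n j ≠ 0 := hpv
        rw [← ha'] at e
        have : (x' ⟨(n + 1, j), hkj⟩ - x ⟨(n + 1, j), hkj⟩) * D (arr x) n j = 0 := by linarith
        rcases mul_eq_zero.1 this with h | h
        · linarith
        · exact absurd h hpv'
      · intro r c h1 h2 h3 h4
        unfold arr
        split_ifs with h5 h6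
        · rfl
        · refine ih _ ?_ _ rfl
          rw [← ham]
          refine rk_lt_of_lt2 ?_ ?_
          · have := mem_vert.1 h6
            simp at this ⊢; omega
          · unfold lt2; simp; omega
        · rfl
  exact funext fun a => main _ a rfl

/-- the orthant with given sign pattern -/
def OO (d : ℕ) (s : EE) : Set (XX d) := {x | x ∈ TT d ∧ sig x = s}

lemma sb_set (b : ZMod 2) : ∃ I : Set ℝ, Convex ℝ I ∧ I.Nonempty ∧ ∀ r, r ∈ I ↔ (r ≠ 0 ∧ sb r = b) := by
  rcases z2_cases b with rfl | rfl
  · refine ⟨Set.Ioi 0, convex_Ioi _, ⟨1, by simp⟩, fun r => ?_⟩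
    simp only [sb, Set.mem_Ioi]
    constructor
    · intro h; exact ⟨h.ne', if_neg h.le.not_gt⟩
    · rintro ⟨h1, h2⟩
      by_contra h3
      rw [if_pos (lt_of_le_of_ne (not_lt.1 h3) h1)] at h2
      exact absurd h2 (by decide)
  · refine ⟨Set.Iio 0, convex_Iio _, ⟨-1, by simp⟩, fun r => ?_⟩
    simp only [sb, Set.mem_Iio]
    constructor
    · intro h; exact ⟨h.ne, if_pos h⟩
    · rintro ⟨h1, h2⟩
      by_contra h3
      rw [if_neg h3] at h2
      exact absurd h2 (by decide)

lemma OO_prop (s : EE) (hs : ∀ p, p ∉ vert d → s p = 0) :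
    (OO d s).Nonempty ∧ IsPreconnected (OO d s) := by
  obtain ⟨g, hg, hg2⟩ := exists_section (d := d) ((d + 1) * (d + 1) + d + 1)
  have hg3 : ∀ y ∈ YY d, ∀ p : VV d, Del (g y) p.1 = y p := fun y hy p => hg2 y hy p (rk_bd p)
  choose I hI1 hI2 hI3 using sb_set
  set C : Set (XX d) := Set.univ.pi fun p => I (s p.1) with hC
  have hCY : C ⊆ YY d := fun y hy p => ((hI3 _ _).1 (hy p trivial)).1
  have hOO : OO d s = g '' C := by
    ext x
    constructor
    · rintro ⟨hx, hxs⟩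
      have hmem : (fun p : VV d => Del x p.1) ∈ C := by
        intro p _
        refine (hI3 _ _).2 ⟨hx p.1 p.2, ?_⟩
        rw [← hxs, sig_vert x p.1 p.2]
      refine ⟨_, hmem, ?_⟩
      refine (Del_inj _ _ hx fun p => ?_).symm
      rw [hg3 _ (hCY hmem)]
    · rintro ⟨y, hy, rfl⟩
      refine ⟨fun p hp => ?_, ?_⟩
      · rw [hg3 y (hCY hy) ⟨p, hp⟩]
        exact hCY hy _
      · ext p
        by_cases hp : p ∈ vert d
        · rw [sig_vert _ _ hp, hg3 y (hCY hy) ⟨p, hp⟩]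
          exact ((hI3 _ _).1 (hy ⟨p, hp⟩ trivial)).2
        · rw [sig_supp _ _ hp, hs p hp]
  rw [hOO]
  refine ⟨Set.Nonempty.image _ (Set.univ_pi_nonempty_iff.2 fun p => hI2 _), ?_⟩
  refine IsPreconnected.image ?_ _ (hg.mono hCY)
  exact (convex_pi fun p _ => hI1 _).isPreconnected

lemma TT_dense (U : Set (XX d)) (hU : IsOpen U) (hne : U.Nonempty) : (U ∩ TT d).Nonempty := by
  have main : ∀ m, ∃ x ∈ U, ∀ p : VV d, rk d p.1 < m → Del x p.1 ≠ 0 := by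
    intro m
    induction m with
    | zero => exact ⟨hne.some, hne.some_mem, by intros; omega⟩
    | succ m ih =>
      obtain ⟨x, hxU, hx⟩ := ih
      by_cases hp : ∃ p : VV d, rk d p.1 = m ∧ Del x p.1 = 0
      · obtain ⟨p, hp, h0⟩ := hp
        have hpv := pv_ne x p fun q hq => hx q (by omega)
        have hev : ∀ᶠ t : ℝ in 𝓝 0, x + t • EV p ∈ U := by
          have hc : ContinuousAt (fun t : ℝ => x + t • EV p) 0 := by fun_prop
          refine hc.eventually (hU.mem_nhds ?_)
          simpa using hxU
        obtain ⟨t, ht0, htU⟩ : ∃ t : ℝ, t ≠ 0 ∧ x + t • EV p ∈ U := by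
          have h2 : ∀ᶠ t : ℝ in 𝓝[≠] 0, x + t • EV p ∈ U := hev.filter_mono nhdsWithin_le_nhds
          obtain ⟨t, ht⟩ := (h2.and self_mem_nhdsWithin).exists
          exact ⟨t, ht.2, ht.1⟩
        refine ⟨_, htU, fun q hq => ?_⟩
        rcases Nat.lt_succ_iff_lt_or_eq.1 hq with h | h
        · rw [Del_add_lt _ _ _ _ (lt2_of_rk (by omega))]
          exact hx q h
        · obtain rfl : q = p := V_eq_of_rk (by omega)
          rw [Del_add_self, h0, zero_add]
          exact mul_ne_zero ht0 hpv
      · refine ⟨x, hxU, fun p hpm => ?_⟩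
        rcases Nat.lt_succ_iff_lt_or_eq.1 hpm with h | h
        · exact hx p h
        · exact fun h0 => hp ⟨p, h, h0⟩
  obtain ⟨x, hxU, hx⟩ := main ((d + 1) * (d + 1) + d + 1)
  exact ⟨x, hxU, fun p hp => hx ⟨p, hp⟩ (rk_bd _)⟩

end FlipGame


namespace FlipGame
open Matrix Topology
variable {d : ℕ}

lemma flip_point (s : EE) (hs : ∀ p, p ∉ vert d → s p = 0) (a : ℕ × ℕ) (ha : a ∈ mutS d)
    (hnb : nbsum s a = 1) : ∃ x : XX d, Del x a = 0 ∧
      ∀ p ∈ vert d, p ≠ a → Del x p ≠ 0 ∧ sb (Del x p) = s p := by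
  have main : ∀ m, ∃ x : XX d, ∀ p : VV d, rk d p.1 < m → (p.1 = a → Del x p.1 = 0) ∧
      (p.1 ≠ a → Del x p.1 ≠ 0 ∧ sb (Del x p.1) = s p.1) := by
    intro m
    induction m with
    | zero => exact ⟨0, by intros; omega⟩
    | succ m ih =>
      obtain ⟨x, hx⟩ := ih
      by_cases hp : ∃ p : VV d, rk d p.1 = m
      · obtain ⟨p, hp⟩ := hp
        by_cases hpa : p.1 = (a.1 + 1, a.2)
        · refine ⟨x, fun q hq => ?_⟩
          rcases Nat.lt_succ_iff_lt_or_eq.1 hq with h | h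
          · exact hx q h
          · obtain rfl : q = p := V_eq_of_rk (by omega)
            refine ⟨fun h1 => ?_, fun _ => ?_⟩
            · rw [hpa] at h1
              have := congrArg Prod.fst h1
              simp at this
            · obtain ⟨k, j⟩ := a
              obtain ⟨hk, hj, hkj⟩ := ha
              simp only at hk hj hkj
              have good : ∀ k' j', k' + j' ≤ d → lt2 (k', j') q.1 → (k' ≠ k ∨ j' ≠ j) →
                  Del x (k', j') ≠ 0 ∧ sb (Del x (k', j')) = s (k', j') := by
                intro k' j' h1 h2 h3
                by_cases hv : (k', j') ∈ vert d
                · refine (hx ⟨_, hv⟩ ?_).2 ?_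
                  · rw [← hp]; exact rk_lt_of_lt2 (by simp; omega) h2
                  · simp; omega
                · rw [hs _ hv]
                  rw [mem_vert] at hv
                  simp only at hv
                  have : k' = 0 ∨ j' = 0 := by omega
                  rcases this with rfl | rfl
                  · rw [Del_row_zero, sb_one]; simp
                  · rw [Del_col_zero, sb_one]; simp
              have hak : Del x (k, j) = 0 := by
                refine (hx ⟨(k, j), mem_vert.2 ⟨hk, hj, by simp; omega⟩⟩ ?_).1 rfl
                rw [← hp]
                refine rk_lt_of_lt2 (by simp; omega) ?_
                rw [hpa]; left; simp
              have e := exch x k j hk hj hak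
              simp only at hpa
              have n2 := good k (j - 1) (by omega) (by rw [hpa]; left; simp) (by omega)
              have n3 := good (k - 1) (j + 1) (by omega) (by rw [hpa]; left; simp <;> omega) (by omega)
              have n4 := good k (j + 1) (by omega) (by rw [hpa]; left; simp) (by omega)
              have n5 := good (k - 1) j (by omega) (by rw [hpa]; left; simp <;> omega) (by omega)
              have n6 := good (k + 1) (j - 1) (by omega)
                (by rw [hpa]; right; simp; omega) (by omega)
              have hR := mul_ne_zero (mul_ne_zero n4.1 n5.1) n6.1
              have n1 : Del x (k + 1, j) ≠ 0 := by
                intro h0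
                rw [h0, zero_mul, zero_mul] at e
                exact hR (neg_eq_zero.1 e.symm)
              rw [hpa]
              refine ⟨n1, ?_⟩
              have e2 := congrArg sb e
              rw [sb_neg hR, sb_mul (mul_ne_zero n1 n2.1) n3.1, sb_mul n1 n2.1,
                sb_mul (mul_ne_zero n4.1 n5.1) n6.1, sb_mul n4.1 n5.1, n2.2, n3.2, n4.2, n5.2,
                n6.2] at e2
              simp only [nbsum] at hnb
              linear_combination e2 - hnb + (s (k, j + 1) + s (k - 1, j) + s (k + 1, j - 1)) * z2_two
        · have hpv : Del x (pv p.1) ≠ 0 := by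
            rcases pv_cases p with h1 | h1
            · rw [Del_pv_zero x p h1]; norm_num
            · refine ((hx ⟨_, h1⟩ ?_).2 ?_).1
              · rw [← hp]; exact rk_pv_lt p
              · intro h2
                apply hpa
                simp only at h2
                rw [← h2]
                have := V_bd p
                refine Prod.ext ?_ rfl
                simp [pv]; omega
          obtain ⟨v, hv1, hv2⟩ : ∃ v : ℝ, (p.1 = a → v = 0) ∧ (p.1 ≠ a → v ≠ 0 ∧ sb v = s p.1) := by
            by_cases h : p.1 = a
            · exact ⟨0, fun _ => rfl, fun h' => absurd h h'⟩
            · obtain ⟨I, -, ⟨r, hr⟩, hI⟩ := sb_set (s p.1)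
              exact ⟨r, fun h' => absurd h' h, fun _ => (hI r).1 hr⟩
          refine ⟨x + ((v - Del x p.1) / Del x (pv p.1)) • EV p, fun q hq => ?_⟩
          rcases Nat.lt_succ_iff_lt_or_eq.1 hq with h | h
          · rw [Del_add_lt _ _ _ _ (lt2_of_rk (by omega))]
            exact hx q h
          · obtain rfl : q = p := V_eq_of_rk (by omega)
            have : Del x q.1 + (v - Del x q.1) = v := by ring
            rw [Del_add_self, div_mul_cancel₀ _ hpv, this]
            exact ⟨hv1, hv2⟩
      · refine ⟨x, fun p hpm => hx p ?_⟩
        have : rk d p.1 ≠ m := fun h => hp ⟨p, h⟩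
        omega
  obtain ⟨x, hx⟩ := main ((d + 1) * (d + 1) + d + 1)
  have hav : a ∈ vert d := mem_vert.2 ⟨ha.1, ha.2.1, ha.2.2.le⟩
  exact ⟨x, (hx ⟨a, hav⟩ (rk_bd _)).1 rfl, fun p hp hpa => (hx ⟨p, hp⟩ (rk_bd _)).2 hpa⟩

lemma mem_comp_trans {α : Type*} [TopologicalSpace α] {S K : Set α} {x y z : α}
    (hxy : y ∈ connectedComponentIn S x) (hK : IsPreconnected K) (hKS : K ⊆ S) (hy : y ∈ K)
    (hz : z ∈ K) : z ∈ connectedComponentIn S x := by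
  rw [connectedComponentIn_eq hxy]
  exact hK.subset_connectedComponentIn hy hKS hz

lemma OO_sub (s : EE) : OO d s ⊆ SS d := fun _ hx => TT_sub hx.1

/-- the flip path -/
lemma flip_path (s : EE) (hs : ∀ p, p ∉ vert d → s p = 0) (a : ℕ × ℕ) (ha : a ∈ mutS d)
    (hnb : nbsum s a = 1) : ∃ K ⊆ SS d, IsPreconnected K ∧ (K ∩ OO d s).Nonempty ∧
      (K ∩ OO d (s + Pi.single a 1)).Nonempty := by
  obtain ⟨x, hx0, hx⟩ := flip_point s hs a ha hnb
  have hav : a ∈ vert d := mem_vert.2 ⟨ha.1, ha.2.1, ha.2.2.le⟩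
  set A : VV d := ⟨a, hav⟩ with hA
  have hpv : Del x (pv a) ≠ 0 := by
    rcases pv_cases A with h1 | h1
    · have := Del_pv_zero x A h1
      rw [show pv a = pv A.1 from rfl, this]; norm_num
    · refine (hx _ h1 ?_).1
      intro h
      have := rk_pv_lt A
      rw [show pv A.1 = pv a from rfl] at this h
      rw [h] at this
      exact lt_irrefl _ this
  have hev : ∀ᶠ t : ℝ in 𝓝 0, ∀ p ∈ vert d, p ≠ a → Del (x + t • EV A) p ≠ 0 ∧
      sb (Del (x + t • EV A) p) = s p := by
    rw [Finset.eventually_all]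
    intro p hp
    by_cases hpa : p = a
    · exact Filter.Eventually.of_forall fun _ h => absurd hpa h
    · have hc : ContinuousAt (fun t : ℝ => Del (x + t • EV A) p) 0 := by
        refine ((continuous_Del p).comp ?_).continuousAt
        fun_prop
      have h0 : Del (x + (0 : ℝ) • EV A) p = Del x p := by simp
      filter_upwards [sb_eventually hc (by rw [h0]; exact (hx p hp hpa).1)] with t ht _
      refine ⟨ht.1, ht.2.trans ?_⟩
      simp only [h0]
      exact (hx p hp hpa).2
  obtain ⟨ε, hε, hball⟩ := Metric.eventually_nhds_iff.1 hev
  have hb2 : ∀ t : ℝ, |t| < ε → ∀ p ∈ vert d, p ≠ a → Del (x + t • EV A) p ≠ 0 ∧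
      sb (Del (x + t • EV A) p) = s p := fun t ht => hball (by simpa [Real.dist_eq] using ht)
  have hself : ∀ t : ℝ, Del (x + t • EV A) a = t * Del x (pv a) := by
    intro t
    have := Del_add_self x A t
    rw [show A.1 = a from rfl] at this
    rw [this, hx0, zero_add]
  have hfind : ∀ b : ZMod 2, ∃ t : ℝ, |t| < ε ∧ t ≠ 0 ∧ sb (t * Del x (pv a)) = b := by
    intro b
    have hs1 : sb (ε / 2) = 0 := by rw [sb, if_neg (by linarith)]
    have hne : ε / 2 ≠ 0 := by linarith
    rcases eq_or_ne b (sb (Del x (pv a))) with h | h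
    · refine ⟨ε / 2, by rw [abs_of_pos (by linarith)]; linarith, hne, ?_⟩
      rw [sb_mul hne hpv, hs1, zero_add, h]
    · refine ⟨-(ε / 2), by rw [abs_neg, abs_of_pos (by linarith)]; linarith, neg_ne_zero.2 hne, ?_⟩
      rw [sb_mul (neg_ne_zero.2 hne) hpv, sb_neg hne, hs1, zero_add]
      revert h
      generalize sb (Del x (pv a)) = c
      revert b c; decide
  have hOO : ∀ t : ℝ, |t| < ε → t ≠ 0 → ∀ s' : EE, (∀ p, p ≠ a → s' p = s p) →
      sb (t * Del x (pv a)) = s' a → x + t • EV A ∈ OO d s' := by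
    intro t ht ht0 s' h1 h2
    refine ⟨fun p hp => ?_, ?_⟩
    · by_cases hpa : p = a
      · rw [hpa, hself]; exact mul_ne_zero ht0 hpv
      · exact (hb2 t ht p hp hpa).1
    · ext p
      by_cases hp : p ∈ vert d
      · rw [sig_vert _ _ hp]
        by_cases hpa : p = a
        · rw [hpa, hself, h2]
        · rw [(hb2 t ht p hp hpa).2, h1 p hpa]
      · rw [sig_supp _ _ hp, h1 p (fun h => hp (h ▸ hav)), hs p hp]
  refine ⟨(fun t : ℝ => x + t • EV A) '' Set.Ioo (-ε) ε, ?_, ?_, ?_, ?_⟩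
  · rintro _ ⟨t, ht, rfl⟩ p hp hpd
    refine (hb2 t (abs_lt.2 ht) p hp ?_).1
    rintro rfl
    exact absurd ha.2.2 (by omega)
  · refine IsPreconnected.image isPreconnected_Ioo _ ?_
    fun_prop
  · obtain ⟨t, ht, ht0, hb⟩ := hfind (s a)
    exact ⟨_, ⟨t, abs_lt.1 ht, rfl⟩, hOO t ht ht0 s (fun _ _ => rfl) hb⟩
  · obtain ⟨t, ht, ht0, hb⟩ := hfind ((s + Pi.single a 1 : EE) a)
    refine ⟨_, ⟨t, abs_lt.1 ht, rfl⟩, hOO t ht ht0 _ (fun p hp => ?_) hb⟩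
    simp [hp]

lemma comp_of_reach (x : XX d) (hx : x ∈ TT d) (t : EE) (h : (gF d).Reach (mutS d) (sig x) t) :
    (∀ p, p ∉ vert d → t p = 0) ∧ ∀ y ∈ OO d t, y ∈ connectedComponentIn (SS d) x := by
  induction h with
  | refl =>
    refine ⟨sig_supp x, fun y hy => ?_⟩
    exact (OO_prop _ (sig_supp x)).2.subset_connectedComponentIn ⟨hx, rfl⟩ (OO_sub _) hy
  | @tail s t _ hst ih =>
    obtain ⟨ih1, ih2⟩ := ih
    obtain ⟨a, ha, hnb, rfl⟩ := hst
    rw [gF_B _ _ _ ha] at hnb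
    have hav : a ∈ vert d := mem_vert.2 ⟨ha.1, ha.2.1, ha.2.2.le⟩
    have hsupp : ∀ p, p ∉ vert d → (s + (gF d).e a) p = 0 := by
      intro p hp
      rw [Pi.add_apply, ih1 p hp, zero_add]
      change (Pi.single a 1 : EE) p = 0
      rw [Pi.single_apply, if_neg]
      rintro rfl
      exact hp hav
    refine ⟨hsupp, fun y hy => ?_⟩
    obtain ⟨K, hKS, hK, ⟨u, huK, hu⟩, ⟨v, hvK, hv⟩⟩ := flip_path s ih1 a ha hnb
    have h1 := mem_comp_trans (ih2 u hu) hK hKS huK hvK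
    exact mem_comp_trans h1 (OO_prop _ hsupp).2 (OO_sub _) hv hy

end FlipGame


namespace FlipGame
open Matrix Topology
variable {d : ℕ}

lemma z2_ne {a b : ZMod 2} (h : ¬ a = b) : b = a + 1 := by revert a b; decide

lemma LC {K : Set (XX d)} (hK : IsPreconnected K) (R : XX d → XX d → Prop)
    (hsymm : ∀ x y, R x y → R y x) (htrans : ∀ x y z, R x y → R y z → R x z)
    (hrefl : ∀ x, R x x)
    (hloc : ∀ p ∈ K, ∃ W ∈ 𝓝 p, ∀ x ∈ W, x ∈ TT d → ∀ y ∈ W, y ∈ TT d → R x y)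
    (x y : XX d) (hx : x ∈ K) (hxT : x ∈ TT d) (hy : y ∈ K) (hyT : y ∈ TT d) : R x y := by
  set u : Set (XX d) := {p | ∀ᶠ q in 𝓝 p, q ∈ TT d → R x q} with hu
  set v : Set (XX d) := {p | ∀ᶠ q in 𝓝 p, q ∈ TT d → ¬ R x q} with hv
  have huo : IsOpen u := isOpen_setOf_eventually_nhds
  have hvo : IsOpen v := isOpen_setOf_eventually_nhds
  have hcov : K ⊆ u ∪ v := by
    intro p hp
    obtain ⟨W, hW, hWR⟩ := hloc p hp
    by_cases h : ∃ q ∈ W, q ∈ TT d ∧ R x q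
    · obtain ⟨q, hq1, hq2, hq3⟩ := h
      left
      filter_upwards [hW] with r hr hrT
      exact htrans _ _ _ hq3 (hWR q hq1 hq2 r hr hrT)
    · right
      filter_upwards [hW] with r hr hrT hR
      exact h ⟨r, hr, hrT, hR⟩
  have hdisj : K ∩ (u ∩ v) = ∅ := by
    ext p
    simp only [Set.mem_inter_iff, Set.mem_empty_iff_false, iff_false, not_and]
    intro _ h1 h2
    obtain ⟨U, hU, hUo, hpU⟩ := eventually_nhds_iff.1 (Filter.Eventually.and h1 h2)
    obtain ⟨q, hqU, hqT⟩ := TT_dense U hUo ⟨p, hpU⟩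
    exact (hU q hqU).2 hqT ((hU q hqU).1 hqT)
  rcases isPreconnected_iff_subset_of_disjoint.1 hK u v huo hvo hcov hdisj with h | h
  · exact (h hy).self_of_nhds hyT
  · exact absurd (hrefl x) ((h hx).self_of_nhds hxT)

def RR (x y : XX d) : Prop := (gF d).Reach (mutS d) (sig x) (sig y)

/-- at most one minor vanishes -/
def AMO (q : XX d) : Prop := ∀ a b : VV d, Del q a.1 = 0 → Del q b.1 = 0 → a = b

lemma loc_amo (q : XX d) (hq : q ∈ SS d) (h : AMO q) :
    ∃ W ∈ 𝓝 q, ∀ x ∈ W, x ∈ TT d → ∀ y ∈ W, y ∈ TT d → RR x y := by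
  have hev : ∀ᶠ x in 𝓝 q, ∀ p ∈ vert d, Del q p ≠ 0 → sb (Del x p) = sb (Del q p) := by
    rw [Finset.eventually_all]
    intro p hp
    by_cases hp0 : Del q p = 0
    · exact Filter.Eventually.of_forall fun _ h => absurd hp0 h
    · filter_upwards [sb_eventually (continuous_Del p).continuousAt hp0] with x hx _
      exact hx.2
  refine ⟨_, hev, fun x hx hxT y hy hyT => ?_⟩
  by_cases hex : ∃ a : VV d, Del q a.1 = 0
  · obtain ⟨a, ha⟩ := hex
    have hne : ∀ p ∈ vert d, p ≠ a.1 → Del q p ≠ 0 := by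
      intro p hp hpa h0
      exact hpa (congrArg Subtype.val (h ⟨p, hp⟩ a h0 ha))
    have hmut : a.1 ∈ mutS d := by
      have := V_bd a
      refine ⟨this.1, this.2.1, lt_of_le_of_ne this.2.2 ?_⟩
      intro h2
      exact hq a.1 a.2 h2 ha
    have hsx : ∀ z : XX d, z ∈ {x | ∀ p ∈ vert d, Del q p ≠ 0 → sb (Del x p) = sb (Del q p)} →
        ∀ p, p ≠ a.1 → sig z p = sig q p := by
      intro z hz p hpa
      by_cases hp : p ∈ vert d
      · rw [sig_vert _ _ hp, sig_vert _ _ hp, hz p hp (hne p hp hpa)]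
      · rw [sig_supp _ _ hp, sig_supp _ _ hp]
    by_cases heq : sig x a.1 = sig y a.1
    · have : sig x = sig y := by
        ext p
        by_cases hpa : p = a.1
        · rw [hpa, heq]
        · rw [hsx x hx p hpa, hsx y hy p hpa]
      rw [RR, this]
      exact Relation.ReflTransGen.refl
    · refine Relation.ReflTransGen.single ⟨a.1, hmut, ?_, ?_⟩
      · rw [gF_B _ _ _ hmut]
        have hb := V_bd a
        rw [← nbsum_sig q a.1 hmut ha hne]
        have hn : ∀ k j : ℕ, (k ≠ a.1.1 ∨ j ≠ a.1.2) → sig x (k, j) = sig q (k, j) := by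
          intro k j hkj
          refine hsx x hx _ fun h => ?_
          rw [← h] at hkj
          simp at hkj
        unfold nbsum
        rw [hn _ _ (by omega), hn _ _ (by omega), hn _ _ (by omega), hn _ _ (by omega),
          hn _ _ (by omega), hn _ _ (by omega)]
      · change sig y = sig x + Pi.single a.1 1
        ext p
        rw [Pi.add_apply, Pi.single_apply]
        split_ifs with hpa
        · rw [hpa]
          exact z2_ne heq
        · rw [add_zero, hsx x hx p hpa, hsx y hy p hpa]
  · have : sig x = sig y := by
      ext p
      by_cases hp : p ∈ vert d
      · have h0 : Del q p ≠ 0 := fun h0 => hex ⟨⟨p, hp⟩, h0⟩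
        rw [sig_vert _ _ hp, sig_vert _ _ hp, hx p hp h0, hy p hp h0]
      · rw [sig_supp _ _ hp, sig_supp _ _ hp]
    rw [RR, this]
    exact Relation.ReflTransGen.refl

def ZZ (a b : VV d) : Set (XX d) :=
  {q | Del q a.1 = 0 ∧ Del q b.1 = 0 ∧ Del q (pv a.1) ≠ 0 ∧ Del q (pv b.1) ≠ 0}

lemma two_vanish (q : XX d) (h : ¬ AMO q) : ∃ a b : VV d, rk d a.1 < rk d b.1 ∧ q ∈ ZZ a b := by
  classical
  unfold AMO at h
  push Not at h
  obtain ⟨a0, b0, ha0, hb0, hab0⟩ := h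
  obtain ⟨a, ha, hamin⟩ := Finset.exists_min_image (Finset.univ.filter fun p : VV d => Del q p.1 = 0)
    (fun p => rk d p.1) ⟨a0, by simpa using ha0⟩
  have ha : Del q a.1 = 0 := by simpa using ha
  obtain ⟨b, hb', hbmin⟩ := Finset.exists_min_image
    (Finset.univ.filter fun p : VV d => Del q p.1 = 0 ∧ p ≠ a) (fun p => rk d p.1) (by
      by_cases h : a0 = a
      · exact ⟨b0, by simp; exact ⟨hb0, fun h' => hab0 (h.trans h'.symm)⟩⟩
      · exact ⟨a0, by simp; exact ⟨ha0, h⟩⟩)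
  obtain ⟨hb, hba⟩ : Del q b.1 = 0 ∧ b ≠ a := by simpa using hb'
  have hlt : rk d a.1 < rk d b.1 := by
    refine lt_of_le_of_ne (hamin b (by simpa using hb)) fun h => hba (V_eq_of_rk h.symm)
  have hA : ∀ p : VV d, rk d p.1 < rk d a.1 → Del q p.1 ≠ 0 := by
    intro p hp h0
    have := hamin p (by simpa using h0)
    omega
  have hB : ∀ p : VV d, rk d p.1 < rk d b.1 → p ≠ a → Del q p.1 ≠ 0 := by
    intro p hp hpa h0
    have := hbmin p (by simp; exact ⟨h0, hpa⟩)
    omega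
  refine ⟨a, b, hlt, ha, hb, pv_ne q a hA, ?_⟩
  rcases pv_cases b with h1 | h1
  · rw [Del_pv_zero q b h1]; norm_num
  by_cases hpa : pv b.1 = a.1
  · exfalso
    have hbb := V_bd b
    obtain ⟨⟨k, j⟩, hkj⟩ := a
    have haa := mem_vert.1 hkj
    simp only at haa hpa ha
    have hb1 : b.1 = (k + 1, j) := by
      simp only [pv, Prod.mk.injEq] at hpa
      exact Prod.ext (by simp; omega) hpa.2
    have e := exch q k j haa.1 haa.2.1 ha
    rw [← hb1, hb, zero_mul, zero_mul] at e
    have good : ∀ k' j', k' + j' ≤ d → lt2 (k', j') b.1 → (k' ≠ k ∨ j' ≠ j) →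
        Del q (k', j') ≠ 0 := by
      intro k' j' g1 g2 g3
      by_cases hv : (k', j') ∈ vert d
      · refine hB ⟨_, hv⟩ (rk_lt_of_lt2 (by simp; omega) g2) ?_
        simp only [ne_eq, Subtype.mk.injEq, Prod.mk.injEq]; omega
      · rw [mem_vert] at hv
        simp only at hv
        have : k' = 0 ∨ j' = 0 := by omega
        rcases this with rfl | rfl
        · rw [Del_row_zero]; simp
        · rw [Del_col_zero]; simp
    rw [hb1] at hbb
    simp only at hbb
    have n4 := good k (j + 1) (by omega) (by rw [hb1]; left; simp) (by omega)
    have n5 := good (k - 1) j (by omega) (by rw [hb1]; left; simp <;> omega) (by omega)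
    have n6 := good (k + 1) (j - 1) (by omega) (by rw [hb1]; right; simp; omega) (by omega)
    exact mul_ne_zero (mul_ne_zero n4 n5) n6 (neg_eq_zero.1 e.symm)
  · exact hB ⟨_, h1⟩ (rk_pv_lt b) fun h => hpa (congrArg Subtype.val h)

open MeasureTheory

noncomputable def rho (a : VV d) (u : XX d) : XX d := u - (Del u a.1 / Del u (pv a.1)) • EV a

noncomputable def Psi (x : XX d) (a b : VV d) (w : XX d) : XX d :=
  x + w a • (rho b (rho a w) - x)

lemma rho_diff (a : VV d) (u : XX d) (h : Del u (pv a.1) ≠ 0) : DifferentiableAt ℝ (rho a) u := by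
  unfold rho
  have h1 := differentiable_Del (d := d) a.1 u
  have h2 := differentiable_Del (d := d) (pv a.1) u
  have h3 : DifferentiableAt ℝ (fun u : XX d => Del u a.1 / Del u (pv a.1)) u :=
    by simp only [div_eq_mul_inv]; exact h1.mul (h2.inv h)
  exact differentiableAt_id.sub (h3.smul_const _)

lemma rho_add (a : VV d) (u : XX d) (t : ℝ) (h : Del u (pv a.1) ≠ 0) :
    rho a (u + t • EV a) = rho a u := by
  unfold rho
  rw [Del_add_self, Del_add_lt _ _ _ _ (pv_lt a), add_div, mul_div_cancel_right₀ _ h, add_smul]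
  abel

lemma rho_add_lt (a b : VV d) (hab : rk d a.1 < rk d b.1) (u : XX d) (t : ℝ) :
    rho a (u + t • EV b) = rho a u + t • EV b := by
  unfold rho
  have h1 : lt2 a.1 b.1 := lt2_of_rk hab
  have h2 : lt2 (pv a.1) b.1 :=
    lt2_of_rk_lt (by have := V_bd b; omega) ((rk_pv_lt a).trans hab)
  rw [Del_add_lt _ _ _ _ h1, Del_add_lt _ _ _ _ h2]
  abel

lemma null_bad (x : XX d) (hx : x ∈ TT d) (a b : VV d) (hab : rk d a.1 < rk d b.1) :
    volume {z : XX d | ∃ t : ℝ, x + t • (z - x) ∈ ZZ a b} = 0 := by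
  set O : Set (XX d) := {w | Del w (pv a.1) ≠ 0 ∧ Del (rho a w) (pv b.1) ≠ 0} with hO
  have hab' : a ≠ b := by rintro rfl; omega
  have hnull : volume (Psi x a b '' O) = 0 := by
    refine addHaar_image_eq_zero_of_det_fderivWithin_eq_zero (f' := fun w => fderiv ℝ (Psi x a b) w)
      volume ?_ ?_
    · intro w hw
      refine (DifferentiableAt.hasFDerivAt ?_).hasFDerivWithinAt
      unfold Psi
      have h1 : DifferentiableAt ℝ (fun w => rho b (rho a w)) w :=
        (rho_diff b _ hw.2).comp w (rho_diff a _ hw.1)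
      have h2 : DifferentiableAt ℝ (fun w : XX d => w a) w := by fun_prop
      exact (differentiableAt_const _).add (h2.smul (h1.sub (differentiableAt_const _)))
    · intro w hw
      have hd : DifferentiableAt ℝ (Psi x a b) w := by
        unfold Psi
        have h1 : DifferentiableAt ℝ (fun w => rho b (rho a w)) w :=
          (rho_diff b _ hw.2).comp w (rho_diff a _ hw.1)
        have h2 : DifferentiableAt ℝ (fun w : XX d => w a) w := by fun_prop
        exact (differentiableAt_const _).add (h2.smul (h1.sub (differentiableAt_const _)))
      have hl : HasDerivAt (fun t : ℝ => Psi x a b (w + t • EV b)) (fderiv ℝ (Psi x a b) w (EV b)) 0 :=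
        hd.hasFDerivAt.hasLineDerivAt (EV b)
      have hc : (fun t : ℝ => Psi x a b (w + t • EV b)) = fun _ => Psi x a b w := by
        ext1 t
        unfold Psi
        rw [rho_add_lt a b hab, rho_add b _ t hw.2]
        congr 2
        simp [EV, Pi.single_apply, hab']
      rw [hc] at hl
      have h0 := hl.unique (hasDerivAt_const _ _)
      change LinearMap.det _ = 0
      rw [LinearMap.det_eq_zero_iff_ker_ne_bot]
      intro hbot
      have hmem : EV b ∈ LinearMap.ker ((fderiv ℝ (Psi x a b) w : XX d →L[ℝ] XX d) : XX d →ₗ[ℝ] XX d) := by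
        rw [LinearMap.mem_ker]; exact h0
      rw [hbot, Submodule.mem_bot] at hmem
      have := congrFun hmem b
      simp [EV] at this
  refine measure_mono_null ?_ hnull
  rintro z ⟨t, h1, h2, h3, h4⟩
  set q := x + t • (z - x) with hq
  have ht : t ≠ 0 := by
    rintro rfl
    rw [zero_smul, add_zero] at hq
    rw [hq] at h1
    exact hx a.1 a.2 h1
  have hr : rho a (q + (t⁻¹ - q a) • EV a) = q := by
    rw [rho_add a _ _ h3]
    unfold rho
    rw [h1, zero_div, zero_smul, sub_zero]
  refine ⟨q + (t⁻¹ - q a) • EV a, ⟨?_, ?_⟩, ?_⟩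
  · rw [Del_add_lt _ _ _ _ (pv_lt a)]; exact h3
  · rw [hr]; exact h4
  · unfold Psi
    rw [hr]
    have e1 : rho b q = q := by
      unfold rho
      rw [h2, zero_div, zero_smul, sub_zero]
    have e2 : (q + (t⁻¹ - q a) • EV a) a = t⁻¹ := by simp [EV]
    rw [e1, e2, hq, add_sub_cancel_left, smul_smul, inv_mul_cancel₀ ht, one_smul, add_sub_cancel]

lemma seg_RR (x z : XX d) (hx : x ∈ TT d) (hz : z ∈ TT d) (hS : segment ℝ x z ⊆ SS d)
    (hbad : ∀ a b : VV d, rk d a.1 < rk d b.1 → z ∉ {z : XX d | ∃ t : ℝ, x + t • (z - x) ∈ ZZ a b}) :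
    RR x z := by
  refine LC (convex_segment x z).isPreconnected RR (fun _ _ h => FlipData.Reach.symm _ h)
    (fun _ _ _ h1 h2 => Relation.ReflTransGen.trans h1 h2)
    (fun _ => Relation.ReflTransGen.refl) ?_ x z (left_mem_segment _ _ _) hx
    (right_mem_segment _ _ _) hz
  intro q hq
  refine loc_amo q (hS hq) ?_
  by_contra hn
  obtain ⟨a, b, hab, hZ⟩ := two_vanish q hn
  rw [segment_eq_image'] at hq
  obtain ⟨t, -, rfl⟩ := hq
  exact hbad a b hab ⟨t, hZ⟩

lemma loc_SS (p : XX d) (hp : p ∈ SS d) :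
    ∃ W ∈ 𝓝 p, ∀ x ∈ W, x ∈ TT d → ∀ y ∈ W, y ∈ TT d → RR x y := by
  obtain ⟨ε, hε, hball⟩ := Metric.isOpen_iff.1 isOpen_SS p hp
  refine ⟨_, Metric.ball_mem_nhds p hε, fun x hx hxT y hy hyT => ?_⟩
  set N : XX d → Set (XX d) := fun x => ⋃ a : VV d, ⋃ b : VV d, ⋃ _ : rk d a.1 < rk d b.1,
    {z : XX d | ∃ t : ℝ, x + t • (z - x) ∈ ZZ a b} with hN
  have hN0 : ∀ x ∈ TT d, volume (N x) = 0 := by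
    intro x hx
    refine measure_iUnion_null fun a => measure_iUnion_null fun b => measure_iUnion_null fun h => ?_
    exact null_bad x hx a b h
  have hpos : 0 < volume (Metric.ball p ε ∩ TT d) :=
    (Metric.isOpen_ball.inter isOpen_TT).measure_pos volume
      (TT_dense _ Metric.isOpen_ball ⟨p, Metric.mem_ball_self hε⟩)
  obtain ⟨z, ⟨hzb, hzT⟩, hzN⟩ : ∃ z ∈ Metric.ball p ε ∩ TT d, z ∉ N x ∪ N y := by
    by_contra hcon
    push Not at hcon
    have := measure_mono_null (μ := volume) (show Metric.ball p ε ∩ TT d ⊆ N x ∪ N y from hcon)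
      (measure_union_null (hN0 x hxT) (hN0 y hyT))
    rw [this] at hpos
    exact lt_irrefl _ hpos
  have hz : ∀ x ∈ Metric.ball p ε, x ∈ TT d → z ∉ N x → RR x z := by
    intro x hx hxT hzN
    refine seg_RR x z hxT hzT (((convex_ball p ε).segment_subset hx hzb).trans hball) ?_
    intro a b hab hmem
    exact hzN (Set.mem_iUnion.2 ⟨a, Set.mem_iUnion.2 ⟨b, Set.mem_iUnion.2 ⟨hab, hmem⟩⟩⟩)
  rw [Set.mem_union, not_or] at hzN
  exact Relation.ReflTransGen.trans (hz x hx hxT hzN.1)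
    (FlipData.Reach.symm _ (hz y hy hyT hzN.2))

theorem same_comp_iff (x y : XX d) (hx : x ∈ TT d) (hy : y ∈ TT d) :
    y ∈ connectedComponentIn (SS d) x ↔ RR x y := by
  constructor
  · intro h
    refine LC isPreconnected_connectedComponentIn RR (fun _ _ h => FlipData.Reach.symm _ h)
      (fun _ _ _ h1 h2 => Relation.ReflTransGen.trans h1 h2)
      (fun _ => Relation.ReflTransGen.refl) ?_ x y (mem_connectedComponentIn (TT_sub hx)) hx h hy
    intro q hq
    exact loc_SS q (connectedComponentIn_subset _ _ hq)
  · intro h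
    exact (comp_of_reach x hx _ h).2 y ⟨hy, rfl⟩

end FlipGame


namespace FlipGame
open Matrix Topology
variable {d : ℕ}

lemma comp_image {α β : Type*} [TopologicalSpace α] [TopologicalSpace β] {S : Set α} {T : Set β}
    (f : α → β) (g : β → α) (hf : ContinuousOn f S) (hg : ContinuousOn g T)
    (hfS : ∀ x ∈ S, f x ∈ T) (hgT : ∀ y ∈ T, g y ∈ S)
    (hgf : ∀ x ∈ S, g (f x) = x) (hfg : ∀ y ∈ T, f (g y) = y) (x : α) (hx : x ∈ S) :
    f '' connectedComponentIn S x = connectedComponentIn T (f x) := by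
  have hs := connectedComponentIn_subset S x
  have ht := connectedComponentIn_subset T (f x)
  apply Set.Subset.antisymm
  · refine IsPreconnected.subset_connectedComponentIn
      (isPreconnected_connectedComponentIn.image f (hf.mono hs))
      ⟨x, mem_connectedComponentIn hx, rfl⟩ ?_
    rintro _ ⟨y, hy, rfl⟩
    exact hfS y (hs hy)
  · intro y hy
    refine ⟨g y, ?_, hfg y (ht hy)⟩
    have : g '' connectedComponentIn T (f x) ⊆ connectedComponentIn S x := by
      refine IsPreconnected.subset_connectedComponentIn
        (isPreconnected_connectedComponentIn.image g (hg.mono ht))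
        ⟨f x, mem_connectedComponentIn (hfS x hx), hgf x hx⟩ ?_
      rintro _ ⟨y, hy, rfl⟩
      exact hgT y (ht hy)
    exact this ⟨y, hy, rfl⟩

noncomputable def mat (x : XX d) : Matrix (Fin d) (Fin d) ℝ := Matrix.of fun i j => arr x i j

def coord (u : Matrix (Fin d) (Fin d) ℝ) : XX d := fun p =>
  u ⟨p.1.1 - 1, by have := V_bd p; omega⟩ ⟨p.1.1 - 1 + p.1.2, by have := V_bd p; omega⟩

lemma mat_uni (x : XX d) : IsUniUpper d (mat x) :=
  ⟨fun i j h => arr_low x _ _ h, fun i => arr_diag x _⟩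

lemma coord_mat (x : XX d) : coord (mat x) = x := by
  ext ⟨⟨k, j⟩, hp⟩
  have h := mem_vert.1 hp
  simp only at h
  obtain ⟨n, rfl⟩ : ∃ n, k = n + 1 := ⟨k - 1, by omega⟩
  simp only [coord, mat, of_apply, arr]
  rw [if_neg (by omega)]
  have : ((n + 1 - 1 + 1, n + 1 - 1 + j - (n + 1 - 1)) : ℕ × ℕ) = (n + 1, j) := by
    ext <;> simp
  rw [dif_pos (by rw [this]; exact hp)]
  congr 1
  exact Subtype.ext this

lemma mat_coord (u : Matrix (Fin d) (Fin d) ℝ) (hu : IsUniUpper d u) : mat (coord u) = u := by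
  ext i j
  rcases lt_trichotomy (i : ℕ) j with h | h | h
  · simp only [mat, of_apply, arr]
    rw [if_neg (by omega), dif_pos (by rw [mem_vert]; simp; omega)]
    simp only [coord]
    congr 1
    exact Fin.ext (by simp; omega)
  · obtain rfl := Fin.ext h
    rw [hu.2]; exact arr_diag _ _
  · rw [hu.1 _ _ h]; exact arr_low _ _ _ h

lemma continuous_mat : Continuous (mat : XX d → _) := by
  refine continuous_matrix fun i j => ?_
  exact (differentiable_arr _ _).continuous

lemma continuous_coord : Continuous (coord : Matrix (Fin d) (Fin d) ℝ → XX d) := by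
  refine continuous_pi fun p => ?_
  unfold coord
  fun_prop

lemma corner_mat (x : XX d) (k : ℕ) (hk : k ≤ d) : cornerMinor d k (mat x) = Del x (k, d - k) := by
  unfold cornerMinor Del D
  congr 1
  ext i j
  have := i.2
  have := j.2
  simp only [of_apply, mat]
  rw [dif_pos ⟨by omega, by omega⟩]

lemma mat_mem (x : XX d) : mat x ∈ Sset d ↔ x ∈ SS d := by
  constructor
  · rintro ⟨-, h⟩ ⟨k, j⟩ hp hd
    have := mem_vert.1 hp
    simp only at this hd
    have h2 := h k (by omega) (by omega)
    rw [corner_mat x k (by omega)] at h2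
    rwa [show j = d - k by omega]
  · intro h
    refine ⟨mat_uni x, fun k h1 h2 => ?_⟩
    rw [corner_mat x k (by omega)]
    exact h _ (mem_vert.2 ⟨h1, by simp; omega, by simp; omega⟩) (by simp; omega)

lemma mat_inj : Function.Injective (mat : XX d → _) := fun x y h => by
  rw [← coord_mat x, h, coord_mat]

lemma comp_mat (x : XX d) (hx : x ∈ SS d) :
    mat '' connectedComponentIn (SS d) x = connectedComponentIn (Sset d) (mat x) :=
  comp_image mat coord continuous_mat.continuousOn continuous_coord.continuousOn
    (fun x hx => (mat_mem x).2 hx)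
    (fun y hy => by rw [← mat_mem, mat_coord y hy.1]; exact hy)
    (fun x _ => coord_mat x) (fun y hy => mat_coord y hy.1) x hx

lemma uni_det (u : Matrix (Fin d) (Fin d) ℝ) (hu : IsUniUpper d u) : u.det = 1 := by
  rw [Matrix.det_of_upperTriangular (M := u) (fun i j h => hu.1 i j h)]
  simp [hu.2]

lemma uni_inv (u : Matrix (Fin d) (Fin d) ℝ) (hu : IsUniUpper d u) : IsUniUpper d u⁻¹ := by
  have hU : IsUnit u.det := by rw [uni_det u hu]; exact isUnit_one
  have hT : BlockTriangular u id := fun i j h => hu.1 i j h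
  haveI := Matrix.invertibleOfIsUnitDet u hU
  have h1 : BlockTriangular u⁻¹ id := blockTriangular_inv_of_blockTriangular hT
  refine ⟨fun i j h => h1 h, fun i => ?_⟩
  have := congrFun (congrFun (Matrix.mul_nonsing_inv u hU) i) i
  rw [Matrix.mul_apply, Finset.sum_eq_single i] at this
  · simpa [hu.2] using this
  · intro b _ hb
    rcases lt_or_gt_of_ne hb with h | h
    · rw [hu.1 i b h, zero_mul]
    · rw [show u⁻¹ b i = 0 from h1 h, mul_zero]
  · simp

noncomputable def iot (x : XX d) : XX d := coord (mat x)⁻¹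

lemma mat_iot (x : XX d) : mat (iot x) = (mat x)⁻¹ := mat_coord _ (uni_inv _ (mat_uni x))

lemma Del_iot (x : XX d) (k j : ℕ) (h : k + j ≤ d) :
    Del (iot x) (k, j) = (-1) ^ (k * j) * Del x (j, k) := by
  refine jacobi (arr x) (arr (iot x)) k j ?_ (Del_col_zero x _)
  intro r s hr hs
  have hU : IsUnit (mat x).det := by rw [uni_det _ (mat_uni x)]; exact isUnit_one
  have e := congrFun (congrFun (Matrix.mul_nonsing_inv (mat x) hU) ⟨r, by omega⟩) ⟨s, by omega⟩
  rw [← mat_iot, Matrix.mul_apply] at e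
  simp only [mat, of_apply] at e
  rw [Fin.sum_univ_eq_sum_range (fun t => arr x r t * arr (iot x) t s)] at e
  rw [Matrix.one_apply] at e
  simp only [Fin.mk.injEq] at e
  rw [← e]
  refine Finset.sum_subset (Finset.range_mono h) ?_
  intro t _ ht
  rw [Finset.mem_range] at ht
  rw [arr_low (iot x) t s (by omega), mul_zero]

lemma Del_iot_ne (x : XX d) (k j : ℕ) (h : k + j ≤ d) : Del (iot x) (k, j) ≠ 0 ↔ Del x (j, k) ≠ 0 := by
  rw [Del_iot x k j h]
  simp

lemma iot_SS (x : XX d) (hx : x ∈ SS d) : iot x ∈ SS d := by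
  rintro ⟨k, j⟩ hp hd
  have := mem_vert.1 hp
  simp only at this hd
  rw [Del_iot_ne x k j (by omega)]
  exact hx _ (mem_vert.2 ⟨by simp; omega, by simp; omega, by simp; omega⟩) (by simp; omega)

lemma iot_TT (x : XX d) (hx : x ∈ TT d) : iot x ∈ TT d := by
  rintro ⟨k, j⟩ hp
  have := mem_vert.1 hp
  simp only at this
  rw [Del_iot_ne x k j (by omega)]
  exact hx _ (mem_vert.2 ⟨by simp; omega, by simp; omega, by simp; omega⟩)

lemma sb_pow (n : ℕ) : sb ((-1) ^ n) = (n : ZMod 2) := by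
  induction n with
  | zero => simp [sb_one]
  | succ n ih =>
    rw [pow_succ, mul_neg_one, sb_neg (by simp), ih]
    push_cast; rfl

lemma sig_iot (x : XX d) (hx : x ∈ TT d) : sig (iot x) = invE d (sig x) := by
  funext p
  by_cases hp : p ∈ vert d
  · obtain ⟨k, j⟩ := p
    have := mem_vert.1 hp
    simp only at this
    have hp' : ((j, k) : ℕ × ℕ) ∈ vert d := mem_vert.2 ⟨by simp; omega, by simp; omega, by simp; omega⟩
    simp only [invE, kap, Prod.swap]
    rw [sig_vert _ _ hp, sig_vert _ _ hp', if_pos this.2.2, Del_iot x k j this.2.2,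
      sb_mul (by simp) (hx _ hp'), sb_pow]
    push_cast; ring
  · rw [sig_supp _ _ hp]
    unfold invE
    rw [kap_supp d p hp, sig_supp, add_zero]
    rw [mem_vert] at hp ⊢
    simp; omega

lemma inv_mem (u : Matrix (Fin d) (Fin d) ℝ) (hu : u ∈ Sset d) : u⁻¹ ∈ Sset d := by
  have hc := mat_coord u hu.1
  rw [← hc] at hu
  rw [← hc, ← mat_iot, mat_mem]
  exact iot_SS _ ((mat_mem _).1 hu)

lemma inv_inv_mem (u : Matrix (Fin d) (Fin d) ℝ) (hu : u ∈ Sset d) : u⁻¹⁻¹ = u :=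
  Matrix.nonsing_inv_nonsing_inv u (by rw [uni_det u hu.1]; exact isUnit_one)

lemma inv_cont : ContinuousOn (fun v : Matrix (Fin d) (Fin d) ℝ => v⁻¹) (Sset d) := by
  have h : ContinuousOn (fun v : Matrix (Fin d) (Fin d) ℝ => v.adjugate) (Sset d) :=
    (Continuous.matrix_adjugate continuous_id).continuousOn
  refine h.congr fun v hv => ?_
  simp [Matrix.inv_def, uni_det v hv.1]

lemma comp_inv (u : Matrix (Fin d) (Fin d) ℝ) (hu : u ∈ Sset d) :
    (fun v : Matrix (Fin d) (Fin d) ℝ => v⁻¹) '' connectedComponentIn (Sset d) u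
      = connectedComponentIn (Sset d) u⁻¹ :=
  comp_image _ _ inv_cont inv_cont inv_mem inv_mem inv_inv_mem inv_inv_mem u hu

/-- two chart points in TT give the same component iff related -/
lemma comp_eq_iff (x y : XX d) (hx : x ∈ TT d) (hy : y ∈ TT d) :
    connectedComponentIn (Sset d) (mat x) = connectedComponentIn (Sset d) (mat y) ↔ RR x y := by
  rw [← comp_mat x (TT_sub hx), ← comp_mat y (TT_sub hy), mat_inj.image_injective.eq_iff,
    ← same_comp_iff x y hx hy]
  constructor
  · intro h
    rw [h]; exact mem_connectedComponentIn (TT_sub hy)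
  · intro h
    exact connectedComponentIn_eq h

lemma comp_inv_iff (x : XX d) (hx : x ∈ TT d) :
    (fun v : Matrix (Fin d) (Fin d) ℝ => v⁻¹) '' connectedComponentIn (Sset d) (mat x)
      = connectedComponentIn (Sset d) (mat x) ↔ RR x (iot x) := by
  rw [comp_inv _ ((mat_mem x).2 (TT_sub hx)), ← mat_iot, eq_comm, comp_eq_iff x _ hx (iot_TT x hx)]

lemma comp_rep (u : Matrix (Fin d) (Fin d) ℝ) (hu : u ∈ Sset d) : ∃ x ∈ TT d,
    connectedComponentIn (Sset d) u = connectedComponentIn (Sset d) (mat x) := by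
  have hc := mat_coord u hu.1
  have hs : coord u ∈ SS d := by rw [← mat_mem, hc]; exact hu
  obtain ⟨x, hx, hxT⟩ := TT_dense (connectedComponentIn (SS d) (coord u))
    isOpen_SS.connectedComponentIn ⟨_, mem_connectedComponentIn hs⟩
  refine ⟨x, hxT, ?_⟩
  rw [← comp_mat x (TT_sub hxT), ← connectedComponentIn_eq hx, comp_mat _ hs, hc]

end FlipGame


namespace FlipGame
open Matrix Topology
variable {d : ℕ}

lemma kap_frozen (hodd : d % 2 = 1) (k j : ℕ) (h : k + j = d) : kap d (k, j) = 0 := by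
  simp only [kap]
  rw [if_pos h.le, ← Nat.cast_mul, ZMod.natCast_eq_zero_iff]
  rcases Nat.mod_two_eq_zero_or_one k with h1 | h1
  · exact Dvd.dvd.mul_right (Nat.dvd_of_mod_eq_zero h1) _
  · exact Dvd.dvd.mul_left (Nat.dvd_of_mod_eq_zero (by omega)) _

lemma frozen_cases (p : ℕ × ℕ) (hp : p ∉ mutS d) : p ∉ vert d ∨ (p ∈ vert d ∧ p.1 + p.2 = d) := by
  by_cases h : p ∈ vert d
  · right
    refine ⟨h, ?_⟩
    have := mem_vert.1 h
    simp only [mutS, Set.mem_setOf_eq] at hp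
    omega
  · exact Or.inl h

lemma inv_crit (hd : 7 ≤ d) (hodd : d % 2 = 1) (h8 : d % 8 = 1 ∨ d % 8 = 7) (x : XX d)
    (hx : x ∈ TT d) : RR x (iot x) ↔ (gF d).NF (mutS d) (sig x) ∧
      ∀ k j, k + j = d → sig x (k, j) = sig x (j, k) := by
  unfold RR
  rw [sig_iot x hx]
  constructor
  · intro h
    constructor
    · by_contra hn
      have e := congrFun (FlipData.Reach.eq_of_not_NF _ h hn) (1, 1)
      simp only [invE, Prod.swap, kap] at e
      rw [if_pos (by omega)] at e
      simp at e
    · intro k j hkj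
      have e := reach_frozen h (k, j) (by simp [mutS]; omega)
      simp only [invE, Prod.swap] at e
      rw [kap_frozen hodd k j hkj, add_zero] at e
      exact e
  · rintro ⟨h1, h2⟩
    refine reach_grid d (by omega) _ _ ?_ (gQ_inv d hodd h8 _ (sig_supp x) h2).symm h1 (NF_inv d _ h1)
    rintro ⟨k, j⟩ hp
    rcases frozen_cases _ hp with h | ⟨h, h'⟩
    · rw [sig_supp x _ h]
      simp only [invE]
      rw [kap_supp d _ h, sig_supp, add_zero]
      rw [mem_vert] at h ⊢
      simp at h ⊢; omega
    · simp only [invE, Prod.swap]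
      rw [kap_frozen hodd k j h', add_zero, h2 k j h']

/-- frozen pattern from half data -/
def pat (d : ℕ) (f : Fin ((d - 1) / 2) → ZMod 2) : EE := fun p =>
  if h : p ∈ vert d ∧ p.1 + p.2 = d ∧ min p.1 p.2 - 1 < (d - 1) / 2 then f ⟨min p.1 p.2 - 1, h.2.2⟩ else 0

lemma exists_rep (hd : 7 ≤ d) (f : Fin ((d - 1) / 2) → ZMod 2) (q : ZMod 2) :
    ∃ x : XX d, x ∈ TT d ∧ (gF d).NF (mutS d) (sig x) ∧ gQ d (sig x) = q ∧
      ∀ p, p ∉ mutS d → sig x p = pat d f p := by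
  obtain ⟨t, h1, h2, h3⟩ := exists_grid d (by omega) (pat d f) q
  obtain ⟨⟨x, hx, rfl⟩, -⟩ := OO_prop (d := d) t (fun p hp => by
    rw [h1]
    · unfold pat; rw [dif_neg]; tauto
    · intro h; apply hp; rw [mem_vert]; exact ⟨h.1, h.2.1, h.2.2.le⟩)
  exact ⟨x, hx, h3, h2, h1⟩

lemma pat_val (f : Fin ((d - 1) / 2) → ZMod 2) (i : Fin ((d - 1) / 2)) :
    pat d f (i + 1, d - (i + 1)) = f i := by
  have hi := i.2
  have hm : min ((i : ℕ) + 1) (d - (i + 1)) = i + 1 := by omega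
  simp only [pat]
  rw [dif_pos ⟨mem_vert.2 ⟨by simp, by simp; omega, by simp; omega⟩, by omega, by omega⟩]
  congr 1
  exact Fin.ext (by simp [hm])

lemma pat_symm (f : Fin ((d - 1) / 2) → ZMod 2) (k j : ℕ) : pat d f (k, j) = pat d f (j, k) := by
  simp only [pat, min_comm k j, mem_vert, add_comm k j, and_left_comm]

theorem main_count (hd : 7 ≤ d) (hodd : d % 2 = 1) (h8 : d % 8 = 1 ∨ d % 8 = 7) :
    Set.ncard {C : Set (Matrix (Fin d) (Fin d) ℝ) |
        (∃ u ∈ Sset d, C = connectedComponentIn (Sset d) u) ∧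
        (fun v : Matrix (Fin d) (Fin d) ℝ => v⁻¹) '' C = C}
      = 2 ^ ((d + 1) / 2) := by
  choose X hT hN hQ hF using fun fq : (Fin ((d - 1) / 2) → ZMod 2) × ZMod 2 =>
    exists_rep hd fq.1 fq.2
  have hset : {C : Set (Matrix (Fin d) (Fin d) ℝ) |
        (∃ u ∈ Sset d, C = connectedComponentIn (Sset d) u) ∧
        (fun v : Matrix (Fin d) (Fin d) ℝ => v⁻¹) '' C = C}
      = (fun fq => connectedComponentIn (Sset d) (mat (X fq))) '' Set.univ := by
    ext C
    constructor
    · rintro ⟨⟨u, hu, rfl⟩, hC⟩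
      obtain ⟨x, hx, e⟩ := comp_rep u hu
      rw [e] at hC ⊢
      rw [comp_inv_iff x hx, inv_crit hd hodd h8 x hx] at hC
      obtain ⟨h1, h2⟩ := hC
      refine ⟨(fun i => sig x (i + 1, d - (i + 1)), gQ d (sig x)), trivial, ?_⟩
      set fq : (Fin ((d - 1) / 2) → ZMod 2) × ZMod 2 :=
        (fun i => sig x (i + 1, d - (i + 1)), gQ d (sig x)) with hfq
      refine (comp_eq_iff _ _ (hT fq) hx).2 ?_
      refine reach_grid d (by omega) _ _ ?_ (hQ fq) (hN fq) h1
      rintro ⟨k, j⟩ hp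
      rcases frozen_cases _ hp with h | ⟨h, h'⟩
      · rw [sig_supp _ _ h, sig_supp _ _ h]
      · rw [hF fq _ hp]
        have hv := mem_vert.1 h
        simp only at hv h'
        rcases lt_or_ge k j with hkj | hkj
        · have := pat_val fq.1 ⟨k - 1, by omega⟩
          simp only [hfq] at this
          rw [show k - 1 + 1 = k by omega, show d - k = j by omega] at this
          exact this
        · have := pat_val fq.1 ⟨j - 1, by omega⟩
          simp only [hfq] at this
          rw [show j - 1 + 1 = j by omega, show d - j = k by omega] at this
          rw [pat_symm, h2 k j h']
          exact this
    · rintro ⟨fq, -, rfl⟩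
      refine ⟨⟨_, (mat_mem _).2 (TT_sub (hT fq)), rfl⟩, ?_⟩
      rw [comp_inv_iff _ (hT fq), inv_crit hd hodd h8 _ (hT fq)]
      refine ⟨hN fq, fun k j hkj => ?_⟩
      rw [hF fq _ (by simp [mutS]; omega), hF fq _ (by simp [mutS]; omega), pat_symm]
  have hinj : Function.Injective (fun fq => connectedComponentIn (Sset d) (mat (X fq))) := by
    intro a b hab
    have hR : RR (X a) (X b) := (comp_eq_iff _ _ (hT a) (hT b)).1 hab
    refine Prod.ext ?_ ?_
    · funext i
      have hi := i.2
      have hp : ((i : ℕ) + 1, d - ((i : ℕ) + 1)) ∉ mutS d := by simp [mutS]; omega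
      have e := reach_frozen hR _ hp
      rw [hF a _ hp, hF b _ hp, pat_val, pat_val] at e
      exact e
    · have e : gQ d (sig (X a)) = gQ d (sig (X b)) :=
        FlipData.Reach.Q_eq (gF d) (M := mutS d) (fun _ h => h) hR
      rw [hQ a, hQ b] at e
      exact e
  rw [hset, Set.ncard_image_of_injective _ hinj, Set.ncard_univ, Nat.card_eq_fintype_card,
    Fintype.card_prod, Fintype.card_fun, ZMod.card, Fintype.card_fin, ← pow_succ]
  congr 1
  omega

end FlipGame

theorem count_inversion_invariant_components (d : ℕ) (hd : 7 ≤ d) (hodd : d % 2 = 1)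
    (h8 : d % 8 = 1 ∨ d % 8 = 7) :
    Set.ncard {C : Set (Matrix (Fin d) (Fin d) ℝ) |
        (∃ u ∈ Sset d, C = connectedComponentIn (Sset d) u) ∧
        (fun v : Matrix (Fin d) (Fin d) ℝ => v⁻¹) '' C = C}
      = 2 ^ ((d + 1) / 2) := by
  exact FlipGame.main_count hd hodd h8
end

section
/- Let d ≥ 2, let e_1, …, e_d be the standard basis of ℝ^d, and let u be a d×d real upper-triangular matrix with all diagonal entries equal to 1. Then for each 1 ≤ k ≤ d−1, the equality span(u·e_{d−k+1}, …, u·e_d) + span(e_{k+1}, …, e_d) = ℝ^d holds if and only if det u^{(k)} ≠ 0, where u^{(k)} is the upper-right k×k block of u (rows 1,…,k and columns d−k+1,…,d). In other words, the flag u·σ₊ fails to be antipodal to the standard descending flag σ₊ at level k exactly when the minor det u^{(k)} vanishes. -/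
/-- `span(e_{m+1}, …, e_d)` (one-based), i.e. the span of the standard basis vectors
with zero-based index at least `m`. -/
def highSpan (d m : ℕ) : Submodule ℝ (Fin d → ℝ) :=
  Submodule.span ℝ {v | ∃ i : Fin d, m ≤ (i : ℕ) ∧ v = Pi.single i 1}

/-- `span(u·e_{d−k+1}, …, u·e_d)` (one-based indexing of columns). -/
def colSpanHigh (d : ℕ) (u : Matrix (Fin d) (Fin d) ℝ) (k : ℕ) :
    Submodule ℝ (Fin d → ℝ) :=
  Submodule.span ℝ {v | ∃ i : Fin d, d - k ≤ (i : ℕ) ∧ v = u.mulVec (Pi.single i 1)}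

lemma highSpan_eq_ker (d k : ℕ) (h : k ≤ d) :
    highSpan d k = LinearMap.ker (LinearMap.funLeft ℝ ℝ (Fin.castLE h)) := by
  apply le_antisymm
  · unfold highSpan
    rw [Submodule.span_le]
    rintro v ⟨i, hi, rfl⟩
    rw [SetLike.mem_coe, LinearMap.mem_ker]
    ext j
    rw [LinearMap.funLeft_apply, Pi.single_apply, if_neg]
    · rfl
    · intro hj
      have := congrArg Fin.val hj
      have := j.2
      simp at *
      omega
  · intro v hv
    rw [LinearMap.mem_ker] at hv
    rw [pi_eq_sum_univ' v]
    refine Submodule.sum_mem _ fun i _ => ?_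
    by_cases hi : k ≤ (i : ℕ)
    · refine Submodule.smul_mem _ _ (Submodule.subset_span ⟨i, hi, ?_⟩)
      ext j
      simp [Pi.single_apply, eq_comm]
    · have := congrFun hv ⟨i, by omega⟩
      rw [LinearMap.funLeft_apply] at this
      have h2 : v i = 0 := this
      rw [h2, zero_smul]
      exact Submodule.zero_mem _

theorem antipodality_iff_corner_minor_nonzero (d : ℕ) (hd : 2 ≤ d)
    (u : Matrix (Fin d) (Fin d) ℝ) (hu : IsUniUpper d u)
    (k : ℕ) (hk1 : 1 ≤ k) (hk : k ≤ d - 1) :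
    colSpanHigh d u k ⊔ highSpan d k = ⊤ ↔ cornerMinor d k u ≠ 0 := by
  have h : k ≤ d := by omega
  have hs : Function.Surjective (LinearMap.funLeft ℝ ℝ (Fin.castLE h)) :=
    LinearMap.funLeft_surjective_of_injective _ _ _ (Fin.castLE_injective h)
  rw [highSpan_eq_ker d k h, ← LinearMap.map_eq_top_iff (LinearMap.range_eq_top.2 hs)]
  unfold cornerMinor
  rw [← isUnit_iff_ne_zero, ← Matrix.isUnit_iff_isUnit_det,
    ← Matrix.mulVec_surjective_iff_isUnit]
  rw [← Matrix.coe_mulVecLin, ← LinearMap.range_eq_top, Matrix.range_mulVecLin]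
  unfold colSpanHigh
  rw [Submodule.map_span]
  have key : ∀ (j : Fin k) (hj : d - k + (j : ℕ) < d), LinearMap.funLeft ℝ ℝ (Fin.castLE h)
      (u.mulVec (Pi.single ⟨d - k + j, hj⟩ 1)) = (Matrix.of fun i j : Fin k =>
    if h : (i : ℕ) < d ∧ d - k + (j : ℕ) < d then u ⟨i, h.1⟩ ⟨d - k + j, h.2⟩ else 0).col j := by
    intro j hj
    ext i
    have hi : (i : ℕ) < d := by omega
    simp [LinearMap.funLeft_apply, Matrix.col_apply, hi, hj]
    rfl
  refine iff_of_eq (congrArg (fun s => Submodule.span ℝ s = ⊤) ?_)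
  ext w
  constructor
  · rintro ⟨v, ⟨i, hi, rfl⟩, rfl⟩
    have hlt := i.2
    refine ⟨⟨i - (d - k), by omega⟩, ?_⟩
    rw [← key _ (by simp; omega)]
    congr
    simp; omega
  · rintro ⟨j, rfl⟩
    have hj : d - k + (j : ℕ) < d := by omega
    exact ⟨_, ⟨⟨d - k + j, hj⟩, by simp, rfl⟩, key j hj⟩
end
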